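/- arXiv:1806.04901 — 5 statements merged into one kernel-verified Lean document; each statement's English description precedes it below -/
import Mathlib

section
/- Let N ≥ 2 and let Ω ⊂ ℝ^N be a bounded domain with 0 ∈ Ω; set R = sup_{x ∈ Ω} H⁰(x). Then H_N(Ω) := inf over nonzero u ∈ C_c^∞(Ω) of [ ∫_Ω |(x/H⁰(x)) · ∇u(x)|^N dx / ∫_Ω |u(x)|^N / ( H⁰(x)^N (log(R/H⁰(x)))^N ) dx ] equals ((N−1)/N)^N, and the infimum is not attained: for every nonzero u ∈ C_c^∞(Ω) the quotient is strictly greater than ((N−1)/N)^N. -/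
/-!
Write `p = H⁰`, `a = (N - 1) / N` and `R = sup_Ω p`. About `p` only continuity, positive
homogeneity and comparability with the Euclidean norm matter (`IsGauge`). The function
`x · ∇u / p` is, up to a constant factor on each ray, the derivative of `u` along that ray, so
everything reduces to one dimension by polar coordinates.

*Strict inequality.* Put `A = |x · ∇u| / p` and `B = a |u| / (p log (R / p))`. By convexity of
`s ↦ s ^ N` the remainder `D = A ^ N + (N - 1) B ^ N - N A B ^ (N - 1)` is nonnegative
(`young_remainder`). Along each ray `N B ^ N - N A B ^ (N - 1)`, weighted by `r ^ (N - 1)`, is at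
most a multiple of the derivative of `|u| ^ N / log (R / p) ^ (N - 1)`, whose integral is
nonpositive because `u` vanishes near `p = R` (`hardy_ray`). Integrating over the sphere gives
`∫ (B ^ N + D) ≤ ∫ A ^ N`. Equality would force `D = 0`, hence `A = 0` or `A = B` at every point;
then `A ≤ B`, and Grönwall along rays, started where `u` vanishes, yields `u = 0` (`ray_eq_zero`,
`hardy_strict`).

*Sharpness.* The functions `u x = F (C - log ‖x‖)` have a numerator that is a constant `K` times
`∫ |F'| ^ N`, while for `C = log (R / m)` with `m ‖x‖ ≤ p x` the denominator is at least `K` times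
`∫ |F| ^ N / s ^ N` (`exists_almost_optimal`). The one-dimensional Hardy constant `a ^ N` is
approached by `F s = s ^ a χ (log s / L)` as `L → ∞` (`exists_almost_optimal_line`), and `F` may be
supported so far out that `u` is supported in `Ω`.
-/

open MeasureTheory Set Filter
open scoped RealInnerProductSpace Topology ENNReal NNReal

noncomputable section

/-- `ℝ^N` as a Euclidean space. -/
abbrev Euc (N : ℕ) := EuclideanSpace ℝ (Fin N)

/-- `H : ℝ^N → ℝ` is a Finsler norm: nonnegative, convex, `C²` away from the origin,
even and positively one-homogeneous, comparable to the Euclidean norm, and with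
positive definite Hessian of `H²` away from the origin. -/
structure IsFinslerNorm {N : ℕ} (H : Euc N → ℝ) : Prop where
  nonneg : ∀ ξ, 0 ≤ H ξ
  convexOn : ConvexOn ℝ Set.univ H
  smooth : ContDiffOn ℝ 2 H {(0 : Euc N)}ᶜ
  homog : ∀ (t : ℝ) (ξ : Euc N), H (t • ξ) = |t| * H ξ
  bounds : ∃ a b : ℝ, 0 < a ∧ a ≤ b ∧ ∀ ξ : Euc N, a * ‖ξ‖ ≤ H ξ ∧ H ξ ≤ b * ‖ξ‖
  hessPosDef : ∀ ξ : Euc N, ξ ≠ 0 → ∀ v : Euc N, v ≠ 0 →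
    0 < iteratedFDeriv ℝ 2 (fun x => (H x) ^ 2) ξ ![v, v]

/-- The polar function `H⁰(x) = sup_{ξ ≠ 0} (ξ·x)/H(ξ)` of a Finsler norm. -/
def polarNorm {N : ℕ} (H : Euc N → ℝ) (x : Euc N) : ℝ :=
  sSup {r : ℝ | ∃ ξ : Euc N, ξ ≠ 0 ∧ r = ⟪ξ, x⟫ / H ξ}

/-- `u ∈ C_c^∞(Ω)`: a smooth function with compact support contained in `Ω`. -/
def IsTestFun {N : ℕ} (Ω : Set (Euc N)) (u : Euc N → ℝ) : Prop :=
  ContDiff ℝ (⊤ : ℕ∞) u ∧ HasCompactSupport u ∧ tsupport u ⊆ Ω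


/-! ### The polar function -/

/-- The only properties of the polar function `H⁰` that the proof uses: continuity, positive
homogeneity of degree one, and two-sided comparison with the Euclidean norm. -/
structure IsGauge {N : ℕ} (p : Euc N → ℝ) (m M : ℝ) : Prop where
  m_pos : 0 < m
  M_pos : 0 < M
  cont : Continuous p
  homog : ∀ (t : ℝ) (x : Euc N), 0 < t → p (t • x) = t * p x
  lower : ∀ x, m * ‖x‖ ≤ p x
  upper : ∀ x, p x ≤ M * ‖x‖

lemma IsGauge.pos {N : ℕ} {p : Euc N → ℝ} {m M : ℝ} (h : IsGauge p m M) {x : Euc N}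
    (hx : x ≠ 0) : 0 < p x :=
  lt_of_lt_of_le (mul_pos h.m_pos (norm_pos_iff.2 hx)) (h.lower x)

lemma IsGauge.zero {N : ℕ} {p : Euc N → ℝ} {m M : ℝ} (h : IsGauge p m M) : p 0 = 0 := by
  have h1 := h.lower 0
  have h2 := h.upper 0
  simp only [norm_zero, mul_zero] at h1 h2
  exact le_antisymm h2 h1

lemma IsGauge.nonneg {N : ℕ} {p : Euc N → ℝ} {m M : ℝ} (h : IsGauge p m M) (x : Euc N) :
    0 ≤ p x :=
  le_trans (mul_nonneg h.m_pos.le (norm_nonneg x)) (h.lower x)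

lemma isGauge_polarNorm {N : ℕ} (hN : 2 ≤ N) {H : Euc N → ℝ} (hH : IsFinslerNorm H) :
    ∃ m M, IsGauge (polarNorm H) m M := by
  obtain ⟨a, b, ha, hab, hb⟩ := hH.bounds
  have hb0 : 0 < b := ha.trans_le hab
  have hpos : ∀ ξ : Euc N, ξ ≠ 0 → 0 < H ξ := fun ξ hξ =>
    lt_of_lt_of_le (mul_pos ha (norm_pos_iff.2 hξ)) (hb ξ).1
  have hle : ∀ (x ξ : Euc N), ξ ≠ 0 → ⟪ξ, x⟫ / H ξ ≤ a⁻¹ * ‖x‖ := by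
    intro x ξ hξ
    rw [div_le_iff₀ (hpos ξ hξ)]
    have h1 := real_inner_le_norm ξ x
    have h2 := (hb ξ).1
    calc ⟪ξ, x⟫ ≤ ‖ξ‖ * ‖x‖ := h1
      _ = a⁻¹ * ‖x‖ * (a * ‖ξ‖) := by field_simp
      _ ≤ _ := by gcongr
  have hbdd : ∀ x : Euc N, BddAbove {r : ℝ | ∃ ξ : Euc N, ξ ≠ 0 ∧ r = ⟪ξ, x⟫ / H ξ} := by
    intro x
    refine ⟨a⁻¹ * ‖x‖, ?_⟩
    rintro _ ⟨ξ, hξ, rfl⟩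
    exact hle x ξ hξ
  obtain ⟨e, he⟩ : ∃ e : Euc N, e ≠ 0 := by
    have : Nonempty (Fin N) := ⟨⟨0, by omega⟩⟩
    exact exists_ne 0
  have hne : ∀ x : Euc N, {r : ℝ | ∃ ξ : Euc N, ξ ≠ 0 ∧ r = ⟪ξ, x⟫ / H ξ}.Nonempty :=
    fun x => ⟨_, e, he, rfl⟩
  have hup : ∀ x, polarNorm H x ≤ a⁻¹ * ‖x‖ := by
    intro x
    refine csSup_le (hne x) ?_
    rintro _ ⟨ξ, hξ, rfl⟩
    exact hle x ξ hξ
  have hmem : ∀ (x ξ : Euc N), ξ ≠ 0 → ⟪ξ, x⟫ / H ξ ≤ polarNorm H x := fun x ξ hξ =>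
    le_csSup (hbdd x) ⟨ξ, hξ, rfl⟩
  have hadd : ∀ x y, polarNorm H (x + y) ≤ polarNorm H x + polarNorm H y := by
    intro x y
    refine csSup_le (hne _) ?_
    rintro _ ⟨ξ, hξ, rfl⟩
    rw [inner_add_right, add_div]
    exact add_le_add (hmem x ξ hξ) (hmem y ξ hξ)
  have hlow : ∀ x, b⁻¹ * ‖x‖ ≤ polarNorm H x := by
    intro x
    by_cases hx : x = 0
    · subst hx
      have := hmem 0 e he
      simpa using this
    · refine le_trans ?_ (hmem x x hx)
      rw [le_div_iff₀ (hpos x hx), real_inner_self_eq_norm_sq]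
      calc b⁻¹ * ‖x‖ * H x ≤ b⁻¹ * ‖x‖ * (b * ‖x‖) := by
            gcongr
            exact (hb x).2
        _ = _ := by field_simp
  have hhom : ∀ (t : ℝ) (x : Euc N), 0 < t → polarNorm H (t • x) ≤ t * polarNorm H x := by
    intro t x ht
    refine csSup_le (hne _) ?_
    rintro _ ⟨ξ, hξ, rfl⟩
    rw [real_inner_smul_right, mul_div_assoc]
    exact mul_le_mul_of_nonneg_left (hmem x ξ hξ) ht.le
  refine ⟨b⁻¹, a⁻¹, inv_pos.2 hb0, inv_pos.2 ha, ?_, ?_, hlow, hup⟩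
  · have hsub : ∀ x y, polarNorm H x - polarNorm H y ≤ a⁻¹ * ‖x - y‖ := by
      intro x y
      have h1 := hadd (x - y) y
      rw [sub_add_cancel] at h1
      linarith [hup (x - y)]
    refine (LipschitzWith.of_dist_le_mul (K := a⁻¹.toNNReal) ?_).continuous
    intro x y
    rw [Real.dist_eq, dist_eq_norm, abs_le, Real.coe_toNNReal _ (inv_pos.2 ha).le]
    refine ⟨?_, hsub x y⟩
    have := hsub y x
    rw [norm_sub_rev] at this
    linarith
  · intro t x ht
    refine le_antisymm (hhom t x ht) ?_
    have := hhom t⁻¹ (t • x) (inv_pos.2 ht)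
    rw [smul_smul, inv_mul_cancel₀ ht.ne', one_smul] at this
    calc t * polarNorm H x ≤ t * (t⁻¹ * polarNorm H (t • x)) := by gcongr
      _ = _ := by field_simp

/-! ### Polar coordinates -/

lemma lintegral_polar {N : ℕ} (hN : 2 ≤ N) {f : Euc N → ℝ≥0∞} (hf : Measurable f) :
    ∫⁻ x, f x = ∫⁻ ω : Metric.sphere (0 : Euc N) 1,
      (∫⁻ r in Ioi (0 : ℝ), ENNReal.ofReal (r ^ (N - 1)) * f (r • (ω : Euc N)))
        ∂(volume : Measure (Euc N)).toSphere := by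
  have : Nonempty (Fin N) := ⟨⟨0, by omega⟩⟩
  have hmp := (volume : Measure (Euc N)).measurePreserving_homeomorphUnitSphereProd
  have h1 : ∫⁻ x, f x = ∫⁻ x : ({0}ᶜ : Set (Euc N)), f x
      ∂((volume : Measure (Euc N)).comap Subtype.val) := by
    rw [lintegral_subtype_comap (measurableSet_singleton _).compl f, restrict_compl_singleton]
  have hg : Measurable fun z : Metric.sphere (0 : Euc N) 1 × Ioi (0 : ℝ) =>
      f ((z.2 : ℝ) • (z.1 : Euc N)) := by
    refine hf.comp ?_
    exact (measurable_subtype_coe.comp measurable_snd).smul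
      (measurable_subtype_coe.comp measurable_fst)
  have h2 := hmp.lintegral_comp hg
  have h3 : ∀ x : ({0}ᶜ : Set (Euc N)),
      (((homeomorphUnitSphereProd (Euc N) x).2 : ℝ) •
        ((homeomorphUnitSphereProd (Euc N) x).1 : Euc N)) = x := by
    intro x
    have hx : ‖(x : Euc N)‖ ≠ 0 := norm_ne_zero_iff.2 x.2
    simp [homeomorphUnitSphereProd, smul_smul, hx]
  rw [h1]
  simp only [h3] at h2
  rw [h2, lintegral_prod _ hg.aemeasurable]
  refine lintegral_congr fun ω => ?_
  rw [finrank_euclideanSpace_fin]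
  have hfm : Measurable fun r : ℝ => f (r • (ω : Euc N)) :=
    hf.comp (measurable_id.smul_const _)
  rw [Measure.volumeIoiPow, lintegral_withDensity_eq_lintegral_mul]
  · rw [← lintegral_subtype_comap measurableSet_Ioi
      (fun r : ℝ => ENNReal.ofReal (r ^ (N - 1)) * f (r • (ω : Euc N)))]
    rfl
  · fun_prop
  · exact hfm.comp measurable_subtype_coe

/-- Polar coordinates for a function that is a power of the gauge times a radial function. -/
lemma integral_polar_gauge {N : ℕ} (hN : 2 ≤ N) {p : Euc N → ℝ} {m M : ℝ}
    (hp : IsGauge p m M) : ∃ K : ℝ, 0 ≤ K ∧ ∀ h : ℝ → ℝ,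
    ∫ x, (p x ^ N)⁻¹ * h ‖x‖ = K * ∫ r in Ioi (0 : ℝ), r⁻¹ * h r := by
  have : Nonempty (Fin N) := ⟨⟨0, by omega⟩⟩
  have hmp := (volume : Measure (Euc N)).measurePreserving_homeomorphUnitSphereProd
  refine ⟨∫ ω : Metric.sphere (0 : Euc N) 1, (p ω ^ N)⁻¹ ∂(volume : Measure (Euc N)).toSphere,
    integral_nonneg fun ω => inv_nonneg.2 (pow_nonneg (hp.nonneg _) _), fun h => ?_⟩
  have h1 : ∫ x, (p x ^ N)⁻¹ * h ‖x‖ = ∫ x : ({0}ᶜ : Set (Euc N)), (p x ^ N)⁻¹ * h ‖(x : Euc N)‖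
      ∂((volume : Measure (Euc N)).comap Subtype.val) := by
    rw [integral_subtype_comap (measurableSet_singleton _).compl
      (fun x : Euc N => (p x ^ N)⁻¹ * h ‖x‖), restrict_compl_singleton]
  have h2 := hmp.integral_comp (Homeomorph.measurableEmbedding _)
    (fun z : Metric.sphere (0 : Euc N) 1 × Ioi (0 : ℝ) =>
      (p z.1 ^ N)⁻¹ * (((z.2 : ℝ) ^ N)⁻¹ * h z.2))
  rw [h1, integral_prod_mul (fun ω : Metric.sphere (0 : Euc N) 1 => (p ω ^ N)⁻¹)
    (fun r : Ioi (0 : ℝ) => ((r : ℝ) ^ N)⁻¹ * h r)] at *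
  have h4 : ∀ x : ({0}ᶜ : Set (Euc N)), (p x ^ N)⁻¹ * h ‖(x : Euc N)‖ =
      (p (homeomorphUnitSphereProd (Euc N) x).1 ^ N)⁻¹ *
        ((((homeomorphUnitSphereProd (Euc N) x).2 : ℝ) ^ N)⁻¹ *
          h (homeomorphUnitSphereProd (Euc N) x).2) := by
    intro x
    have hx : 0 < ‖(x : Euc N)‖ := norm_pos_iff.2 x.2
    have := hp.homog (‖(x : Euc N)‖⁻¹) x (inv_pos.2 hx)
    simp only [homeomorphUnitSphereProd_apply_snd_coe, homeomorphUnitSphereProd_apply_fst_coe]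
    rw [this, mul_pow, inv_pow]
    field_simp
  rw [integral_congr_ae (Eventually.of_forall h4), h2]
  congr 1
  rw [finrank_euclideanSpace_fin, Measure.volumeIoiPow]
  rw [integral_withDensity_eq_integral_toReal_smul (by fun_prop) (by simp),
    ← integral_subtype_comap measurableSet_Ioi (fun r : ℝ => r⁻¹ * h r)]
  refine integral_congr_ae (Eventually.of_forall fun r => ?_)
  have hr : 0 < (r : ℝ) := r.2
  obtain ⟨k, rfl⟩ : ∃ k, N = k + 1 := ⟨N - 1, by omega⟩
  simp only [Nat.add_sub_cancel, smul_eq_mul]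
  rw [ENNReal.toReal_ofReal (by positivity), pow_succ]
  field_simp

/-! ### The remainder in Young's inequality -/

/-- The remainder of the tangent-line inequality for `s ↦ s ^ (n + 2)` is bounded below by a
quantity that vanishes only if `α = β` or (for `n ≠ 0`) `α = 0`. -/
lemma young_remainder (n : ℕ) {α β : ℝ} (hα : 0 ≤ α) (hβ : 0 ≤ β) :
    (α - β) ^ 2 * α ^ n ≤
      α ^ (n + 2) + ((n : ℝ) + 1) * β ^ (n + 2) - ((n : ℝ) + 2) * α * β ^ (n + 1) := by
  induction n with
  | zero =>
    simp only [pow_zero, Nat.cast_zero]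
    exact le_of_eq (by ring)
  | succ n ih =>
    have h1 := mul_le_mul_of_nonneg_left ih hα
    have h2 : 0 ≤ ((n : ℝ) + 2) * β ^ (n + 1) * (α - β) ^ 2 := by positivity
    push_cast
    calc (α - β) ^ 2 * α ^ (n + 1) = α * ((α - β) ^ 2 * α ^ n) := by ring
      _ ≤ _ := h1
      _ ≤ _ + ((n : ℝ) + 2) * β ^ (n + 1) * (α - β) ^ 2 := le_add_of_nonneg_right h2
      _ = _ := by ring

/-! ### The one-dimensional inequality along a ray -/

lemma hasDerivAt_abs_pow (n : ℕ) (x : ℝ) :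
    HasDerivAt (fun y : ℝ => |y| ^ (n + 2)) (((n : ℝ) + 2) * (|x| ^ n * x)) x := by
  have h := hasDerivAt_abs_rpow x (p := (n : ℝ) + 2) (by linarith [(Nat.cast_nonneg n : (0:ℝ) ≤ n)])
  have h1 : (fun y : ℝ => |y| ^ ((n : ℝ) + 2)) = fun y : ℝ => |y| ^ (n + 2) := by
    funext y
    rw [← Real.rpow_natCast]
    push_cast
    rfl
  rw [h1, add_sub_cancel_right, Real.rpow_natCast, mul_assoc] at h
  exact h

/-- The Hardy inequality on a ray, with its remainder, in the form
`∫ (β ^ N + D) ≤ ∫ |w'| ^ N` for the measure `r ^ (N - 1) dr`, where `N = n + 2`,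
`β = ((N - 1) / N) |w| / (r log (c / r))` and `D = |w'| ^ N + (N - 1) β ^ N - N |w'| β ^ (N - 1)`.
The difference of the two integrands is at most a multiple of the derivative of
`|w| ^ N / log (c / r) ^ (N - 1)`, whose integral over `[ε, r₁]` is nonpositive. -/
lemma hardy_ray (n : ℕ) {w w' : ℝ → ℝ} {c r₁ : ℝ} (hr₁ : 0 < r₁) (hc : r₁ < c)
    (hw : ∀ r, HasDerivAt w (w' r) r) (hw' : Continuous w') (hz : ∀ r, r₁ ≤ r → w r = 0) :
    ∫⁻ r in Ioi (0 : ℝ), ENNReal.ofReal (r ^ (n + 1) * (|w' r| ^ (n + 2)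
        + ((n : ℝ) + 2) * (((n : ℝ) + 1) / (n + 2) * |w r| / (r * Real.log (c / r))) ^ (n + 2)
        - ((n : ℝ) + 2) * |w' r| *
            (((n : ℝ) + 1) / (n + 2) * |w r| / (r * Real.log (c / r))) ^ (n + 1))) ≤
      ∫⁻ r in Ioi (0 : ℝ), ENNReal.ofReal (r ^ (n + 1) * |w' r| ^ (n + 2)) := by
  set a : ℝ := ((n : ℝ) + 1) / (n + 2) with ha
  have hn2 : (0 : ℝ) < (n : ℝ) + 2 := by positivity
  have ha0 : 0 < a := by positivity
  have hna : ((n : ℝ) + 2) * a = n + 1 := by rw [ha]; field_simp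
  set g₁ : ℝ → ℝ := fun r => r ^ (n + 1) * (|w' r| ^ (n + 2)
        + ((n : ℝ) + 2) * (a * |w r| / (r * Real.log (c / r))) ^ (n + 2)
        - ((n : ℝ) + 2) * |w' r| * (a * |w r| / (r * Real.log (c / r))) ^ (n + 1)) with hg₁
  set g₂ : ℝ → ℝ := fun r => r ^ (n + 1) * |w' r| ^ (n + 2) with hg₂
  have hc0 : 0 < c := hr₁.trans hc
  have hwc : Continuous w := continuous_iff_continuousAt.2 fun r => (hw r).continuousAt
  have hlog : ∀ r, 0 < r → r ≤ r₁ → 0 < Real.log (c / r) := fun r h0 h1 =>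
    Real.log_pos (by rw [one_lt_div h0]; linarith)
  have hg₁0 : ∀ r, 0 < r → r ≤ r₁ → 0 ≤ g₁ r := by
    intro r h0 h1
    have hl := hlog r h0 h1
    have hβ : 0 ≤ a * |w r| / (r * Real.log (c / r)) := by positivity
    have hy := young_remainder n (abs_nonneg (w' r)) hβ
    have h3 : 0 ≤ (|w' r| - a * |w r| / (r * Real.log (c / r))) ^ 2 * |w' r| ^ n := by positivity
    have h4 : 0 ≤ (a * |w r| / (r * Real.log (c / r))) ^ (n + 2) := by positivity
    refine mul_nonneg (by positivity) ?_
    linarith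
  have hcl : ∀ ε, 0 < ε → ContinuousOn (fun r => Real.log (c / r)) (Icc ε r₁) := by
    intro ε hε
    refine ContinuousOn.log (continuousOn_const.div continuousOn_id ?_) ?_
    · intro r hr
      exact (hε.trans_le hr.1).ne'
    · intro r hr
      exact (div_pos hc0 (hε.trans_le hr.1)).ne'
  have hcg₁ : ∀ ε, 0 < ε → ContinuousOn g₁ (Icc ε r₁) := by
    intro ε hε
    have hβ : ContinuousOn (fun r => a * |w r| / (r * Real.log (c / r))) (Icc ε r₁) := by
      refine ContinuousOn.div (by fun_prop) (continuousOn_id.mul (hcl ε hε)) ?_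
      intro r hr
      have h0 := hε.trans_le hr.1
      exact (mul_pos h0 (hlog r h0 hr.2)).ne'
    refine ContinuousOn.mul (by fun_prop) (ContinuousOn.sub (ContinuousOn.add (by fun_prop) ?_) ?_)
    · exact continuousOn_const.mul (hβ.pow _)
    · exact ContinuousOn.mul (by fun_prop) (hβ.pow _)
  have hcg₂ : Continuous g₂ := by fun_prop
  have key : ∀ ε, 0 < ε → ε ≤ r₁ → ∫ r in ε..r₁, g₁ r ≤ ∫ r in ε..r₁, g₂ r := by
    intro ε hε hε₁
    set f : ℝ → ℝ := fun r => |w r| ^ (n + 2) / Real.log (c / r) ^ (n + 1) with hf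
    set f' : ℝ → ℝ := fun r => ((n : ℝ) + 2) * (|w r| ^ n * w r) * w' r
        / Real.log (c / r) ^ (n + 1) +
      ((n : ℝ) + 1) * |w r| ^ (n + 2) / (Real.log (c / r) ^ (n + 2) * r) with hf'
    have hder : ∀ r ∈ uIcc ε r₁, HasDerivAt f (f' r) r := by
      intro r hr
      rw [uIcc_of_le hε₁] at hr
      have h0 := hε.trans_le hr.1
      have hl := hlog r h0 hr.2
      have d1 : HasDerivAt (fun s => |w s| ^ (n + 2)) (((n : ℝ) + 2) * (|w r| ^ n * w r) * w' r) r :=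
        (hasDerivAt_abs_pow n (w r)).comp r (hw r)
      have d2 : HasDerivAt (fun s => Real.log (c / s)) (-r⁻¹) r := by
        have d := ((hasDerivAt_const r c).div (hasDerivAt_id r) h0.ne').log
          (div_pos hc0 h0).ne'
        refine d.congr_deriv ?_
        simp only [id, Pi.div_apply]
        field_simp
        simp
      have d3 := d1.div (d2.pow (n + 1)) (pow_pos hl _).ne'
      refine d3.congr_deriv ?_
      simp only [hf', Pi.pow_apply, Nat.add_sub_cancel]
      push_cast
      field_simp
      ring
    have hcf' : ContinuousOn f' (Icc ε r₁) := by
      refine ContinuousOn.add (ContinuousOn.div (by fun_prop) ((hcl ε hε).pow _) ?_)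
        (ContinuousOn.div (by fun_prop) (((hcl ε hε).pow _).mul continuousOn_id) ?_)
      · intro r hr
        exact (pow_pos (hlog r (hε.trans_le hr.1) hr.2) _).ne'
      · intro r hr
        have h0 := hε.trans_le hr.1
        exact (mul_pos (pow_pos (hlog r h0 hr.2) _) h0).ne'
    have hif' : IntervalIntegrable f' volume ε r₁ := by
      refine ContinuousOn.intervalIntegrable ?_
      rwa [uIcc_of_le hε₁]
    have hig₁ : IntervalIntegrable g₁ volume ε r₁ := by
      refine ContinuousOn.intervalIntegrable ?_
      rw [uIcc_of_le hε₁]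
      exact hcg₁ ε hε
    have hig₂ : IntervalIntegrable g₂ volume ε r₁ := hcg₂.intervalIntegrable _ _
    have hFTC := intervalIntegral.integral_eq_sub_of_hasDerivAt hder hif'
    have hfr₁ : f r₁ = 0 := by simp [hf, hz r₁ le_rfl]
    have hfε : 0 ≤ f ε := by
      have := hlog ε hε hε₁
      positivity
    have hpt : ∀ r ∈ Icc ε r₁, g₁ r ≤ g₂ r + a ^ (n + 1) * f' r := by
      intro r hr
      have h0 := hε.trans_le hr.1
      have hl := hlog r h0 hr.2
      have hsign : 0 ≤ |w r| ^ n * (|w r| * |w' r| + w r * w' r) := by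
        refine mul_nonneg (by positivity) ?_
        have := neg_abs_le (w r * w' r)
        rw [abs_mul] at this
        linarith
      have e : g₂ r + a ^ (n + 1) * f' r - g₁ r =
          a ^ (n + 1) * (((n : ℝ) + 2) / Real.log (c / r) ^ (n + 1)) *
            (|w r| ^ n * (|w r| * |w' r| + w r * w' r)) := by
        simp only [hg₁, hg₂, hf']
        rw [← hna]
        generalize Real.log (c / r) = l at hl
        simp only [div_pow, mul_pow]
        field_simp
        ring
      have : 0 ≤ g₂ r + a ^ (n + 1) * f' r - g₁ r := by
        rw [e]
        positivity
      linarith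
    have hmono := intervalIntegral.integral_mono_on hε₁ hig₁
      (hig₂.add (hif'.const_mul (a ^ (n + 1)))) hpt
    rw [intervalIntegral.integral_add hig₂ (hif'.const_mul _),
      intervalIntegral.integral_const_mul, hFTC, hfr₁] at hmono
    have : 0 ≤ a ^ (n + 1) * f ε := by positivity
    linarith
  have keyl : ∀ ε, 0 < ε → ε ≤ r₁ → ∫⁻ r in Ioc ε r₁, ENNReal.ofReal (g₁ r) ≤
      ∫⁻ r in Ioi (0 : ℝ), ENNReal.ofReal (g₂ r) := by
    intro ε hε hε₁
    have hk := key ε hε hε₁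
    rw [intervalIntegral.integral_of_le hε₁, intervalIntegral.integral_of_le hε₁] at hk
    have i1 : IntegrableOn g₁ (Ioc ε r₁) :=
      ((hcg₁ ε hε).integrableOn_compact isCompact_Icc).mono_set Ioc_subset_Icc_self
    have i2 : IntegrableOn g₂ (Ioc ε r₁) :=
      (hcg₂.continuousOn.integrableOn_compact isCompact_Icc).mono_set Ioc_subset_Icc_self
    rw [← ofReal_integral_eq_lintegral_ofReal i1]
    · refine (ENNReal.ofReal_le_ofReal hk).trans ?_
      rw [ofReal_integral_eq_lintegral_ofReal i2]
      · exact lintegral_mono_set fun r hr => hε.trans hr.1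
      · refine (ae_restrict_iff' measurableSet_Ioc).2 (Eventually.of_forall fun r hr => ?_)
        have h0 := hε.trans hr.1
        simp only [hg₂, Pi.zero_apply]
        positivity
    · exact (ae_restrict_iff' measurableSet_Ioc).2
        (Eventually.of_forall fun r hr => hg₁0 r (hε.trans hr.1) hr.2)
  have hU : Ioc 0 r₁ = ⋃ k : ℕ, Ioc (r₁ / (k + 1)) r₁ := by
    ext r
    simp only [mem_Ioc, mem_iUnion]
    constructor
    · rintro ⟨h0, h1⟩
      obtain ⟨k, hk⟩ := exists_nat_gt (r₁ / r)
      refine ⟨k, ?_, h1⟩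
      rw [div_lt_iff₀ h0] at hk
      rw [div_lt_iff₀ (by positivity)]
      nlinarith
    · rintro ⟨k, h0, h1⟩
      exact ⟨lt_trans (by positivity) h0, h1⟩
  have hdir : Directed (· ⊆ ·) fun k : ℕ => Ioc (r₁ / ((k : ℝ) + 1)) r₁ := by
    refine Monotone.directed_le (f := fun k : ℕ => Ioc (r₁ / ((k : ℝ) + 1)) r₁) ?_
    intro k l hkl
    refine Ioc_subset_Ioc_left ?_
    have : (k : ℝ) ≤ l := by exact_mod_cast hkl
    gcongr
  have h1 : ∫⁻ r in Ioc 0 r₁, ENNReal.ofReal (g₁ r) ≤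
      ∫⁻ r in Ioi (0 : ℝ), ENNReal.ofReal (g₂ r) := by
    rw [hU, setLIntegral_iUnion_of_directed _ hdir]
    refine iSup_le fun k => keyl _ (by positivity) ?_
    exact div_le_self hr₁.le (by linarith [(Nat.cast_nonneg k : (0 : ℝ) ≤ k)])
  have h2 : ∫⁻ r in Ioi r₁, ENNReal.ofReal (g₁ r) = 0 := by
    rw [setLIntegral_congr_fun (g := fun _ => 0) measurableSet_Ioi]
    · simp
    · intro r hr
      have hr' : r₁ < r := hr
      have hw0 : w' r = 0 := by
        have hd : HasDerivAt w 0 r := by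
          refine (hasDerivAt_const r (0 : ℝ)).congr_of_eventuallyEq ?_
          filter_upwards [lt_mem_nhds hr'] with s hs using hz s hs.le
        exact (hw r).unique hd
      simp [hg₁, hw0, hz r hr'.le]
  rw [← Ioc_union_Ioi_eq_Ioi hr₁.le, lintegral_union measurableSet_Ioi
    (Set.disjoint_left.2 fun r hr hr' => not_lt.2 hr.2 hr'), h2, add_zero,
    Ioc_union_Ioi_eq_Ioi hr₁.le]
  exact h1

/-- Grönwall along a ray: the equality case of the Hardy inequality forces `w = 0`. -/
lemma ray_eq_zero {w w' : ℝ → ℝ} {a c r₁ : ℝ} (ha : 0 ≤ a) (hc : r₁ < c)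
    (hw : ∀ r, HasDerivAt w (w' r) r) (hz : w r₁ = 0)
    (hle : ∀ r, 0 < r → r ≤ r₁ → |w' r| ≤ a * |w r| / (r * Real.log (c / r))) :
    ∀ r, 0 < r → r ≤ r₁ → w r = 0 := by
  intro ε hε hε₁
  have hr₁ : 0 < r₁ := hε.trans_le hε₁
  have hc0 : 0 < c := hr₁.trans hc
  have hl₁ : 0 < Real.log (c / r₁) := Real.log_pos (by rw [one_lt_div hr₁]; exact hc)
  have hwc : Continuous w := continuous_iff_continuousAt.2 fun r => (hw r).continuousAt
  have h := eq_zero_of_abs_deriv_le_mul_abs_self_of_eq_zero_right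
    (f := fun s => w (-s)) (f' := fun s => -w' (-s)) (a := -r₁) (b := -ε)
    (K := a / (ε * Real.log (c / r₁)))
    (by fun_prop) (fun s _ => by
      have := (hw (-s)).comp s (hasDerivAt_neg s)
      simp only [mul_neg, mul_one] at this
      exact this.hasDerivWithinAt) (by simpa using hz) (by
      rintro s ⟨hs₁, hs₂⟩
      have h1 : ε < -s := by linarith
      have h2 : -s ≤ r₁ := by linarith
      rw [norm_neg, Real.norm_eq_abs, Real.norm_eq_abs]
      refine (hle (-s) (hε.trans h1) h2).trans ?_
      rw [mul_div_right_comm]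
      have hs0 : 0 < -s := hε.trans h1
      gcongr) (-ε) ⟨by linarith, le_rfl⟩
  simpa using h

/-! ### The strict Hardy inequality -/

lemma inner_gradient_eq {N : ℕ} (u : Euc N → ℝ) (c : ℝ) (x : Euc N) :
    ⟪c • x, gradient u x⟫ = c * fderiv ℝ u x x := by
  rw [real_inner_smul_left, real_inner_comm, gradient, InnerProductSpace.toDual_symm_apply]

/-- The Hardy inequality with strict sign, for `C¹` functions of compact support inside
`{p < R}`. Finiteness of the left-hand integral is part of the conclusion. -/
lemma hardy_strict (n : ℕ) {p : Euc (n + 2) → ℝ} {m M : ℝ} (hp : IsGauge p m M)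
    {u : Euc (n + 2) → ℝ} {R R₁ : ℝ} (hR₁ : 0 < R₁) (hR : R₁ < R) (hu : ContDiff ℝ 1 u)
    (hcs : HasCompactSupport u) (hsupp : ∀ x, R₁ ≤ p x → u x = 0) (hne : u ≠ 0) :
    Integrable (fun x => (((n : ℝ) + 1) / (n + 2) * |u x| /
        (p x * Real.log (R / p x))) ^ (n + 2)) ∧
      ∫ x, (((n : ℝ) + 1) / (n + 2) * |u x| / (p x * Real.log (R / p x))) ^ (n + 2) <
        ∫ x, |(p x)⁻¹ * fderiv ℝ u x x| ^ (n + 2) := by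
  set a : ℝ := ((n : ℝ) + 1) / (n + 2) with ha
  have ha0 : 0 < a := by positivity
  have hR0 : 0 < R := hR₁.trans hR
  have huc : Continuous u := hu.continuous
  have hud : Differentiable ℝ u := hu.differentiable (by norm_num)
  have hfd : Continuous (fderiv ℝ u) := hu.continuous_fderiv (by norm_num)
  have hq : Continuous fun x => fderiv ℝ u x x := hfd.clm_apply continuous_id
  set A : Euc (n + 2) → ℝ := fun x => |(p x)⁻¹ * fderiv ℝ u x x| with hA
  set B : Euc (n + 2) → ℝ := fun x => a * |u x| / (p x * Real.log (R / p x)) with hB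
  set G : Euc (n + 2) → ℝ := fun x => A x ^ (n + 2) + ((n : ℝ) + 2) * B x ^ (n + 2)
    - ((n : ℝ) + 2) * A x * B x ^ (n + 1) with hG
  have hpm : Measurable p := hp.cont.measurable
  have hAm : Measurable A := by
    have : Measurable fun x => (p x)⁻¹ * fderiv ℝ u x x := hpm.inv.mul hq.measurable
    simpa only [hA, Real.norm_eq_abs] using this.norm
  have hBm : Measurable B := by
    have h1 : Measurable fun x => |u x| := huc.abs.measurable
    have h2 : Measurable fun x => Real.log (R / p x) :=
      Real.measurable_log.comp (measurable_const.div hpm)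
    exact (measurable_const.mul h1).div (hpm.mul h2)
  have hGm : Measurable G :=
    ((hAm.pow_const _).add ((hBm.pow_const _).const_mul _)).sub
      ((hAm.const_mul _).mul (hBm.pow_const _))
  have hA0 : ∀ x, 0 ≤ A x := fun x => abs_nonneg _
  have hlog : ∀ x, x ≠ 0 → p x < R → 0 < Real.log (R / p x) := fun x hx hxR =>
    Real.log_pos (by rwa [one_lt_div (hp.pos hx)])
  have hB0 : ∀ x, 0 ≤ B x := by
    intro x
    by_cases hx : x = 0
    · simp [hB, hx, hp.zero]
    · by_cases hxR : R₁ ≤ p x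
      · simp [hB, hsupp x hxR]
      · have h1 := hp.pos hx
        have h2 := hlog x hx (by linarith)
        positivity
  have hyoung : ∀ x, (A x - B x) ^ 2 * A x ^ n ≤ G x - B x ^ (n + 2) := by
    intro x
    refine (young_remainder n (hA0 x) (hB0 x)).trans (le_of_eq ?_)
    simp only [hG]
    ring
  have hBG : ∀ x, B x ^ (n + 2) ≤ G x := by
    intro x
    have h1 := hyoung x
    have h2 := pow_nonneg (hA0 x) n
    have h3 : 0 ≤ (A x - B x) ^ 2 * A x ^ n := by positivity
    linarith
  have hBN0 : ∀ x, 0 ≤ B x ^ (n + 2) := fun x => pow_nonneg (hB0 x) _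
  have hG0 : ∀ x, 0 ≤ G x := fun x => (hBN0 x).trans (hBG x)
  -- the boundedness of `x / p x` makes the right-hand integrand integrable
  have hAint : Integrable fun x => A x ^ (n + 2) := by
    have hbound : Integrable fun x => (m⁻¹ * ‖fderiv ℝ u x‖) ^ (n + 2) := by
      refine Continuous.integrable_of_hasCompactSupport (by fun_prop) ?_
      refine (hcs.fderiv (𝕜 := ℝ)).comp_left (g := fun L => (m⁻¹ * ‖L‖) ^ (n + 2)) ?_
      simp
    refine hbound.mono' (hAm.pow_const _).aestronglyMeasurable (Eventually.of_forall fun x => ?_)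
    rw [Real.norm_of_nonneg (pow_nonneg (hA0 x) _)]
    refine pow_le_pow_left₀ (hA0 x) ?_ _
    simp only [hA]
    by_cases hx : x = 0
    · simp only [hx, map_zero, mul_zero, abs_zero]
      exact mul_nonneg (inv_nonneg.2 hp.m_pos.le) (norm_nonneg _)
    have hpx := hp.pos hx
    have hmp := hp.m_pos
    have hlow := hp.lower x
    rw [abs_mul, abs_of_pos (inv_pos.2 hpx), inv_mul_le_iff₀ hpx]
    calc |fderiv ℝ u x x| ≤ ‖fderiv ℝ u x‖ * ‖x‖ := (fderiv ℝ u x).le_opNorm x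
      _ = m * ‖x‖ * (m⁻¹ * ‖fderiv ℝ u x‖) := by field_simp
      _ ≤ p x * (m⁻¹ * ‖fderiv ℝ u x‖) := by gcongr
  have hray : ∀ ω : Euc (n + 2), ω ≠ 0 → 0 < p ω ∧
      (∀ r : ℝ, HasDerivAt (fun r : ℝ => u (r • ω)) (fderiv ℝ u (r • ω) ω) r) ∧
      (∀ r : ℝ, 0 < r → A (r • ω) = (p ω)⁻¹ * |fderiv ℝ u (r • ω) ω|) ∧
      (∀ r : ℝ, 0 < r → B (r • ω) =
        (p ω)⁻¹ * (a * |u (r • ω)| / (r * Real.log (R / p ω / r)))) ∧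
      (∀ r : ℝ, R₁ / p ω ≤ r → u (r • ω) = 0) := by
    intro ω hω
    have hP := hp.pos hω
    refine ⟨hP, ?_, ?_, ?_, ?_⟩
    · intro r
      have h1 : HasDerivAt (fun r : ℝ => r • ω) ω r := by
        simpa using (hasDerivAt_id r).smul_const ω
      exact (hud (r • ω)).hasFDerivAt.comp_hasDerivAt r h1
    · intro r hr
      simp only [hA]
      rw [hp.homog r ω hr, map_smul, smul_eq_mul, ← abs_of_pos (inv_pos.2 hP), ← abs_mul]
      congr 1
      field_simp
    · intro r hr
      simp only [hB]
      rw [hp.homog r ω hr, div_div, mul_comm r (p ω)]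
      rw [← div_eq_inv_mul, div_div]
      congr 1
      ring
    · intro r hr
      have h0 : 0 < r := lt_of_lt_of_le (by positivity) hr
      refine hsupp _ ?_
      rwa [hp.homog r ω h0, ← div_le_iff₀ hP]
  have hpolar : ∫⁻ x, ENNReal.ofReal (G x) ≤ ∫⁻ x, ENNReal.ofReal (A x ^ (n + 2)) := by
    rw [lintegral_polar (by omega) hGm.ennreal_ofReal,
      lintegral_polar (by omega) (hAm.pow_const _).ennreal_ofReal]
    refine lintegral_mono fun ω => ?_
    have hω : (ω : Euc (n + 2)) ≠ 0 := by
      intro h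
      have := ω.2
      rw [mem_sphere_zero_iff_norm, h, norm_zero] at this
      exact zero_ne_one this
    obtain ⟨hP, hder, hAr, hBr, hzr⟩ := hray ω hω
    set P := p ω with hPdef
    have hw'c : Continuous fun r : ℝ => fderiv ℝ u (r • (ω : Euc (n + 2))) ω := by fun_prop
    have hrayD := hardy_ray n (c := R / P) (div_pos hR₁ hP)
      ((div_lt_div_iff_of_pos_right hP).2 hR) hder hw'c hzr
    have hPn : 0 ≤ P⁻¹ ^ (n + 2) := by positivity
    have e1 : ∫⁻ r in Ioi (0 : ℝ), ENNReal.ofReal (r ^ (n + 2 - 1)) *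
        ENNReal.ofReal (A (r • (ω : Euc (n + 2))) ^ (n + 2)) =
        ENNReal.ofReal (P⁻¹ ^ (n + 2)) * ∫⁻ r in Ioi (0 : ℝ), ENNReal.ofReal
          (r ^ (n + 1) * |fderiv ℝ u (r • (ω : Euc (n + 2))) ω| ^ (n + 2)) := by
      rw [← lintegral_const_mul' _ _ ENNReal.ofReal_ne_top]
      refine setLIntegral_congr_fun measurableSet_Ioi fun r hr => ?_
      have hr0 : 0 < r := hr
      have hrn : 0 ≤ r ^ (n + 2 - 1) := by positivity
      rw [← ENNReal.ofReal_mul hrn, ← ENNReal.ofReal_mul hPn, hAr r hr]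
      congr 1
      simp only [Nat.add_succ_sub_one]
      ring
    have e2 : ∫⁻ r in Ioi (0 : ℝ), ENNReal.ofReal (r ^ (n + 2 - 1)) *
        ENNReal.ofReal (G (r • (ω : Euc (n + 2)))) =
        ENNReal.ofReal (P⁻¹ ^ (n + 2)) * ∫⁻ r in Ioi (0 : ℝ), ENNReal.ofReal
          (r ^ (n + 1) * (|fderiv ℝ u (r • (ω : Euc (n + 2))) ω| ^ (n + 2)
        + ((n : ℝ) + 2) * (a * |u (r • (ω : Euc (n + 2)))| /
            (r * Real.log (R / P / r))) ^ (n + 2)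
        - ((n : ℝ) + 2) * |fderiv ℝ u (r • (ω : Euc (n + 2))) ω| *
            (a * |u (r • (ω : Euc (n + 2)))| / (r * Real.log (R / P / r))) ^ (n + 1))) := by
      rw [← lintegral_const_mul' _ _ ENNReal.ofReal_ne_top]
      refine setLIntegral_congr_fun measurableSet_Ioi fun r hr => ?_
      have hr0 : 0 < r := hr
      have hrn : 0 ≤ r ^ (n + 2 - 1) := by positivity
      rw [← ENNReal.ofReal_mul hrn, ← ENNReal.ofReal_mul hPn]
      simp only [hG]
      rw [hAr r hr, hBr r hr]
      congr 1
      simp only [Nat.add_succ_sub_one]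
      ring_nf
    rw [e1, e2]
    exact mul_le_mul_right hrayD _
  have hAfin : ∫⁻ x, ENNReal.ofReal (A x ^ (n + 2)) < ⊤ := by
    rw [← ofReal_integral_eq_lintegral_ofReal hAint
      (Eventually.of_forall fun x => pow_nonneg (hA0 x) _)]
    exact ENNReal.ofReal_lt_top
  have hGint : Integrable G :=
    ⟨hGm.aestronglyMeasurable, by
      rw [hasFiniteIntegral_iff_ofReal (Eventually.of_forall hG0)]
      exact hpolar.trans_lt hAfin⟩
  have hBint : Integrable fun x => B x ^ (n + 2) := by
    refine hGint.mono' (hBm.pow_const _).aestronglyMeasurable (Eventually.of_forall fun x => ?_)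
    rw [Real.norm_of_nonneg (hBN0 x)]
    exact hBG x
  have hGA : ∫ x, G x ≤ ∫ x, A x ^ (n + 2) := by
    rw [integral_eq_lintegral_of_nonneg_ae (Eventually.of_forall hG0) hGm.aestronglyMeasurable,
      integral_eq_lintegral_of_nonneg_ae
        (Eventually.of_forall fun x => pow_nonneg (hA0 x) _) hAint.aestronglyMeasurable]
    exact ENNReal.toReal_mono hAfin.ne hpolar
  refine ⟨hBint, ?_⟩
  by_contra hcon
  rw [not_lt] at hcon
  -- in case of equality the remainder `G - B ^ N` vanishes identically on `0 < p < R`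
  have hDint : ∫ x, (G x - B x ^ (n + 2)) = 0 := by
    refine le_antisymm ?_ (integral_nonneg fun x => sub_nonneg.2 (hBG x))
    rw [integral_sub hGint hBint]
    linarith
  have hDae : (fun x => G x - B x ^ (n + 2)) =ᵐ[volume] 0 :=
    (integral_eq_zero_iff_of_nonneg (fun x => sub_nonneg.2 (hBG x)) (hGint.sub hBint)).1 hDint
  set U : Set (Euc (n + 2)) := {x | x ≠ 0 ∧ p x < R} with hU
  have hUo : IsOpen U := isOpen_ne.inter (isOpen_lt hp.cont continuous_const)
  have hpU : ∀ x ∈ U, p x ≠ 0 := fun x hx => (hp.pos hx.1).ne'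
  have hAc : ContinuousOn A U := by
    refine ContinuousOn.abs (ContinuousOn.mul (hp.cont.continuousOn.inv₀ hpU) hq.continuousOn)
  have hBc : ContinuousOn B U := by
    refine ContinuousOn.div (by fun_prop) (hp.cont.continuousOn.mul
      (ContinuousOn.log (continuousOn_const.div hp.cont.continuousOn hpU) ?_)) ?_
    · intro x hx
      exact (div_pos hR0 (hp.pos hx.1)).ne'
    · intro x hx
      exact (mul_pos (hp.pos hx.1) (hlog x hx.1 hx.2)).ne'
  have hDc : ContinuousOn (fun x => G x - B x ^ (n + 2)) U :=
    (((hAc.pow _).add (continuousOn_const.mul (hBc.pow _))).sub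
      ((continuousOn_const.mul hAc).mul (hBc.pow _))).sub (hBc.pow _)
  have hD0 := Measure.eqOn_open_of_ae_eq (ae_restrict_of_ae hDae) hUo hDc continuousOn_const
  have hAB : ∀ x ∈ U, A x ≤ B x := by
    intro x hx
    have h1 : G x - B x ^ (n + 2) = 0 := hD0 hx
    have h2 := hyoung x
    rw [h1] at h2
    rcases (hA0 x).eq_or_lt with h3 | h3
    · rw [← h3]
      exact hB0 x
    · have h4 : (A x - B x) ^ 2 ≤ 0 := by
        by_contra h5
        rw [not_le] at h5
        exact absurd h2 (not_le.2 (mul_pos h5 (pow_pos h3 n)))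
      have h5 : A x - B x = 0 := pow_eq_zero_iff (two_ne_zero) |>.1 (le_antisymm h4 (sq_nonneg _))
      linarith
  have hu0 : ∀ x, x ≠ 0 → u x = 0 := by
    intro x hx
    by_cases hxR : R₁ ≤ p x
    · exact hsupp x hxR
    rw [not_le] at hxR
    obtain ⟨hP, hder, hAr, hBr, hzr⟩ := hray x hx
    have h1 : (1 : ℝ) ≤ R₁ / p x := by
      rw [one_le_div hP]
      exact hxR.le
    have := ray_eq_zero (c := R / p x) ha0.le ((div_lt_div_iff_of_pos_right hP).2 hR) hder
      (hzr _ le_rfl) (by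
        intro r hr hr1
        have hmem : r • x ∈ U := by
          refine ⟨smul_ne_zero hr.ne' hx, ?_⟩
          rw [hp.homog r x hr, ← lt_div_iff₀ hP]
          exact hr1.trans_lt ((div_lt_div_iff_of_pos_right hP).2 hR)
        have h2 := hAB _ hmem
        rw [hAr r hr, hBr r hr] at h2
        exact le_of_mul_le_mul_left h2 (inv_pos.2 hP)) 1 one_pos h1
    simpa using this
  refine hne ((Continuous.ae_eq_iff_eq volume huc continuous_const).1 ?_)
  have hae : ∀ᵐ x : Euc (n + 2), x ≠ 0 := by
    have : (volume : Measure (Euc (n + 2))) {0} = 0 := measure_singleton 0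
    exact compl_mem_ae_iff.2 this
  filter_upwards [hae] with x hx using hu0 x hx

/-! ### Almost optimal functions -/

/-- Sharpness of the one-dimensional Hardy inequality, with test functions supported arbitrarily
far out: `F s = s ^ ((N - 1) / N) * χ (log s / L)` with a fixed bump `χ` on `(1, 3)` and `L`
large. In the variable `z = log s / L` the two integrals become `L ∫ |a χ + χ' / L| ^ N` and
`L ∫ χ ^ N`. -/
lemma exists_almost_optimal_line (n : ℕ) (S q : ℝ)
    (hq : (((n : ℝ) + 1) / (n + 2)) ^ (n + 2) < q) :
    ∃ (F : ℝ → ℝ) (T : ℝ), ContDiff ℝ (⊤ : ℕ∞) F ∧ (∀ s, s ≤ S → F s = 0) ∧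
      (∀ s, T ≤ s → F s = 0) ∧
      ∫ s, |deriv F s| ^ (n + 2) < q * ∫ s, |F s| ^ (n + 2) / s ^ (n + 2) := by
  set a : ℝ := ((n : ℝ) + 1) / (n + 2) with ha
  have ha0 : 0 < a := by positivity
  have hna : ((n : ℝ) + 2) * a = n + 1 := by rw [ha]; field_simp
  let χ : ContDiffBump (2 : ℝ) := ⟨1 / 2, 1, by norm_num, by norm_num⟩
  have hχ : ContDiff ℝ (⊤ : ℕ∞) χ := χ.contDiff
  have hχc : Continuous χ := χ.continuous
  have hχ'c : Continuous (deriv χ) := hχ.continuous_deriv (by norm_num)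
  have hχd : ∀ z, HasDerivAt χ (deriv χ z) z := fun z =>
    (hχ.differentiable (by norm_num) z).hasDerivAt
  have hχ1 : ∀ z, z ≤ 1 → χ z = 0 := fun z hz =>
    χ.zero_of_le_dist (show (1 : ℝ) ≤ dist z 2 by
      rw [Real.dist_eq, abs_of_nonpos (by linarith)]; linarith)
  have hχ3 : ∀ z, 3 ≤ z → χ z = 0 := fun z hz =>
    χ.zero_of_le_dist (show (1 : ℝ) ≤ dist z 2 by
      rw [Real.dist_eq, abs_of_nonneg (by linarith)]; linarith)
  have hχout : ∀ z, z ∉ Icc (1 : ℝ) 3 → χ z = 0 ∧ deriv χ z = 0 := by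
    intro z hz
    have hz' : z ∉ tsupport χ := by
      rw [χ.tsupport_eq]
      intro h
      have h1 : dist z 2 ≤ 1 := h
      rw [Real.dist_eq, abs_le] at h1
      exact hz ⟨by linarith, by linarith⟩
    refine ⟨image_eq_zero_of_notMem_tsupport hz', ?_⟩
    by_contra h
    exact hz' (support_deriv_subset h)
  set J : ℝ → ℝ := fun δ => ∫ z in Icc (1 : ℝ) 3, |a * χ z + δ * deriv χ z| ^ (n + 2) with hJ
  have hJc : Continuous J := by
    refine continuous_parametric_integral_of_continuous
      (f := fun δ z => |a * χ z + δ * deriv χ z| ^ (n + 2)) ?_ isCompact_Icc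
    unfold Function.uncurry
    fun_prop
  set I : ℝ := ∫ z, |χ z| ^ (n + 2) with hI
  have hI0 : 0 < I := by
    refine Continuous.integral_pos_of_hasCompactSupport_nonneg_nonzero (x := 2) (by fun_prop) ?_
      (fun z => by positivity) ?_
    · exact χ.hasCompactSupport.comp_left (g := fun y : ℝ => |y| ^ (n + 2)) (by simp)
    · have : (0 : ℝ) < χ 2 := χ.pos_of_mem_ball (by simp [χ])
      positivity
  have hJ0 : J 0 = a ^ (n + 2) * I := by
    simp only [hJ, hI, zero_mul, add_zero, abs_mul, mul_pow, abs_of_pos ha0]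
    rw [integral_const_mul]
    congr 1
    refine setIntegral_eq_integral_of_forall_compl_eq_zero fun z hz => ?_
    simp [(hχout z hz).1]
  have hev : ∀ᶠ δ in 𝓝 (0 : ℝ), J δ < q * I := by
    refine hJc.continuousAt.eventually_lt continuousAt_const ?_
    rw [hJ0]
    exact mul_lt_mul_of_pos_right hq hI0
  obtain ⟨L, hL1, hLS, hL0⟩ := ((tendsto_inv_atTop_zero.eventually hev).and
    ((eventually_gt_atTop S).and (eventually_gt_atTop (0 : ℝ)))).exists
  set F : ℝ → ℝ := fun s => if 0 < s then Real.exp (a * Real.log s) * χ (Real.log s / L) else 0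
    with hF
  have hFlow : ∀ s, s ≤ Real.exp L → F s = 0 := by
    intro s hs
    simp only [hF]
    split_ifs with h
    · rw [hχ1, mul_zero]
      rw [div_le_one hL0]
      exact (Real.log_le_iff_le_exp h).2 hs
    · rfl
  have hFhigh : ∀ s, Real.exp (3 * L) ≤ s → F s = 0 := by
    intro s hs
    have h : 0 < s := (Real.exp_pos _).trans_le hs
    simp only [hF, if_pos h]
    rw [hχ3, mul_zero]
    rw [le_div_iff₀ hL0]
    exact (Real.le_log_iff_exp_le h).2 hs
  have hFpos : ∀ s, 0 < s → F =ᶠ[𝓝 s] fun s => Real.exp (a * Real.log s) * χ (Real.log s / L) := by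
    intro s hs
    filter_upwards [lt_mem_nhds hs] with t ht
    simp only [hF, if_pos ht]
  have hFneg : ∀ s, s ≤ 0 → F =ᶠ[𝓝 s] fun _ => 0 := by
    intro s hs
    filter_upwards [gt_mem_nhds (hs.trans_lt (Real.exp_pos L))] with t ht using hFlow t ht.le
  have hFd : ∀ s, 0 < s → HasDerivAt F (Real.exp (a * Real.log s) * s⁻¹ *
      (a * χ (Real.log s / L) + L⁻¹ * deriv χ (Real.log s / L))) s := by
    intro s hs
    have hlog := Real.hasDerivAt_log hs.ne'
    have d1 := (hlog.const_mul a).exp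
    have d2 := (hχd (Real.log s / L)).comp s (hlog.div_const L)
    refine ((d1.mul d2).congr_of_eventuallyEq (hFpos s hs)).congr_deriv ?_
    simp only [Function.comp]
    ring
  have himage : (fun z : ℝ => Real.exp (L * z)) '' univ = Ioi 0 := by
    ext s
    simp only [image_univ, mem_range, mem_Ioi]
    constructor
    · rintro ⟨z, rfl⟩
      exact Real.exp_pos _
    · intro hs
      refine ⟨Real.log s / L, ?_⟩
      rw [mul_div_cancel₀ _ hL0.ne', Real.exp_log hs]
  have hsubst : ∀ g : ℝ → ℝ, (∀ s, s ≤ 0 → g s = 0) →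
      ∫ s, g s = ∫ z, L * (Real.exp (L * z) * g (Real.exp (L * z))) := by
    intro g hg
    rw [← setIntegral_eq_integral_of_forall_compl_eq_zero (s := Ioi (0 : ℝ))
      (fun s hs => hg s (not_lt.1 hs)), ← himage,
      integral_image_eq_integral_abs_deriv_smul MeasurableSet.univ
        (f' := fun z => Real.exp (L * z) * L), Measure.restrict_univ]
    · refine integral_congr_ae (Eventually.of_forall fun z => ?_)
      have := Real.exp_pos (L * z)
      simp only [smul_eq_mul]
      rw [abs_of_pos (by positivity)]
      ring
    · intro z _
      simpa using ((hasDerivAt_id z).const_mul L).exp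
    · intro z _ z' _ h
      have := Real.exp_injective h
      exact mul_left_cancel₀ hL0.ne' this
  have e1 : ∫ s, |deriv F s| ^ (n + 2) = L * J L⁻¹ := by
    rw [hsubst _ (fun s hs => by simp [(hFneg s hs).deriv_eq]), integral_const_mul]
    congr 1
    simp only [hJ]
    rw [setIntegral_eq_integral_of_forall_compl_eq_zero fun z hz => by simp [hχout z hz]]
    refine integral_congr_ae (Eventually.of_forall fun z => ?_)
    simp only
    rw [(hFd _ (Real.exp_pos (L * z))).deriv, Real.log_exp, mul_div_cancel_left₀ _ hL0.ne',
      abs_mul, mul_pow, ← mul_assoc, abs_of_pos (by positivity), ← Real.exp_neg, ← Real.exp_add,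
      ← Real.exp_nat_mul, ← Real.exp_add]
    have : L * z + ((n + 2 : ℕ) : ℝ) * (a * (L * z) + -(L * z)) = 0 := by
      push_cast
      linear_combination (L * z) * hna
    rw [this, Real.exp_zero, one_mul]
  have e2 : ∫ s, |F s| ^ (n + 2) / s ^ (n + 2) = L * I := by
    rw [hsubst _ (fun s hs => by simp [hFlow s (hs.trans (Real.exp_pos L).le)]),
      integral_const_mul]
    congr 1
    refine integral_congr_ae (Eventually.of_forall fun z => ?_)
    simp only [hF, if_pos (Real.exp_pos (L * z))]
    rw [Real.log_exp, mul_div_cancel_left₀ _ hL0.ne', abs_mul, mul_pow,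
      abs_of_pos (Real.exp_pos _), div_eq_mul_inv, ← inv_pow, ← Real.exp_neg,
      ← Real.exp_nat_mul, ← Real.exp_nat_mul]
    have : L * z + ((n + 2 : ℕ) : ℝ) * (a * (L * z)) + ((n + 2 : ℕ) : ℝ) * (-(L * z)) = 0 := by
      push_cast
      linear_combination (L * z) * hna
    calc _ = Real.exp (L * z + ((n + 2 : ℕ) : ℝ) * (a * (L * z)) + ((n + 2 : ℕ) : ℝ) * (-(L * z)))
          * |χ z| ^ (n + 2) := by
          rw [Real.exp_add, Real.exp_add]
          ring
      _ = _ := by rw [this, Real.exp_zero, one_mul]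
  refine ⟨F, Real.exp (3 * L), ?_, ?_, hFhigh, ?_⟩
  · rw [contDiff_iff_contDiffAt]
    intro s
    rcases le_or_gt s 0 with hs | hs
    · exact contDiffAt_const.congr_of_eventuallyEq (hFneg s hs)
    · refine ContDiffAt.congr_of_eventuallyEq ?_ (hFpos s hs)
      have hlog : ContDiffAt ℝ (⊤ : ℕ∞) Real.log s := Real.contDiffAt_log.2 hs.ne'
      exact (contDiffAt_const.mul hlog).exp.mul
        (hχ.contDiffAt.comp s (hlog.div_const L))
  · intro s hs
    exact hFlow s (by linarith [Real.add_one_le_exp L])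
  · rw [e1, e2]
    have := mul_lt_mul_of_pos_left hL1 hL0
    linarith

lemma integral_log_subst (C : ℝ) (k : ℝ → ℝ) :
    ∫ r in Ioi (0 : ℝ), r⁻¹ * k (C - Real.log r) = ∫ s, k s := by
  have himage : (fun s : ℝ => Real.exp (C - s)) '' univ = Ioi 0 := by
    ext r
    simp only [image_univ, mem_range, mem_Ioi]
    constructor
    · rintro ⟨z, rfl⟩
      exact Real.exp_pos _
    · intro hr
      refine ⟨C - Real.log r, ?_⟩
      rw [sub_sub_cancel, Real.exp_log hr]
  rw [← himage, integral_image_eq_integral_abs_deriv_smul MeasurableSet.univ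
    (f' := fun s => -Real.exp (C - s)), Measure.restrict_univ]
  · refine integral_congr_ae (Eventually.of_forall fun s => ?_)
    have := Real.exp_pos (C - s)
    simp only [smul_eq_mul]
    rw [abs_neg, abs_of_pos this, Real.log_exp, sub_sub_cancel]
    field_simp
  · intro s _
    simpa using ((hasDerivAt_id s).const_sub C).exp
  · intro s _ s' _ h
    have := Real.exp_injective h
    linarith

/-- Test functions in `Ω` built from the Euclidean radius as `F (C - log ‖x‖)`. Since
`C = log (R / m)` makes `log (R / p x) ≤ C - log ‖x‖`, replacing the anisotropic logarithm by the
radial one decreases the weighted integral, and the quotient is controlled by that of `F`. -/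
lemma exists_almost_optimal (n : ℕ) {p : Euc (n + 2) → ℝ} {m M : ℝ} (hp : IsGauge p m M)
    {Ω : Set (Euc (n + 2))} (hΩ : IsOpen Ω) (h0 : 0 ∈ Ω) {R : ℝ} (hR : 0 < R)
    (hΩR : ∀ x ∈ Ω, p x < R) {q : ℝ} (hq : (((n : ℝ) + 1) / (n + 2)) ^ (n + 2) < q) :
    ∃ u : Euc (n + 2) → ℝ, IsTestFun Ω u ∧ u ≠ 0 ∧ ∃ K I₁ I₂ : ℝ, 0 ≤ K ∧ I₁ < q * I₂ ∧
      ∫ x, |(p x)⁻¹ * fderiv ℝ u x x| ^ (n + 2) = K * I₁ ∧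
      (Integrable (fun x => |u x| ^ (n + 2) /
          (p x ^ (n + 2) * Real.log (R / p x) ^ (n + 2))) →
        K * I₂ ≤ ∫ x, |u x| ^ (n + 2) / (p x ^ (n + 2) * Real.log (R / p x) ^ (n + 2))) := by
  obtain ⟨ρ, hρ, hρΩ⟩ := Metric.isOpen_iff.1 hΩ 0 h0
  set C : ℝ := Real.log (R / m) with hC
  set S : ℝ := max 0 (max C (C - Real.log ρ + 1)) with hS
  have hS0 : 0 ≤ S := le_max_left _ _
  have hSC : C ≤ S := (le_max_left _ _).trans (le_max_right _ _)
  have hSρ : C - Real.log ρ + 1 ≤ S := (le_max_right _ _).trans (le_max_right _ _)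
  obtain ⟨F, T, hFs, hFS, hFT, hFlt⟩ := exists_almost_optimal_line n S q hq
  set u : Euc (n + 2) → ℝ := fun x => F (C - Real.log ‖x‖) with hu
  have hu0 : u 0 = 0 := by
    simp only [hu, norm_zero, Real.log_zero, sub_zero]
    exact hFS C hSC
  have hne0 : ∀ x, u x ≠ 0 → x ≠ 0 := by
    rintro x hx rfl
    exact hx hu0
  have hnear : u =ᶠ[𝓝 0] fun _ => 0 := by
    filter_upwards [Metric.ball_mem_nhds (0 : Euc (n + 2)) (Real.exp_pos (C - T))] with x hx
    by_cases hx0 : x = 0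
    · rw [hx0, hu0]
    · rw [mem_ball_zero_iff, ← Real.log_lt_iff_lt_exp (norm_pos_iff.2 hx0)] at hx
      exact hFT _ (by linarith)
  have husm : ContDiff ℝ (⊤ : ℕ∞) u := by
    rw [contDiff_iff_contDiffAt]
    intro x
    by_cases hx : x = 0
    · rw [hx]
      exact contDiffAt_const.congr_of_eventuallyEq hnear
    · exact hFs.contDiffAt.comp x
        (contDiffAt_const.sub ((contDiffAt_norm ℝ hx).log (norm_ne_zero_iff.2 hx)))
  have hsub : Function.support u ⊆ Metric.closedBall 0 (Real.exp (C - S)) := by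
    intro x hx
    have hx0 := hne0 x hx
    rw [mem_closedBall_zero_iff, ← Real.log_le_iff_le_exp (norm_pos_iff.2 hx0)]
    by_contra h
    rw [not_le] at h
    exact hx (hFS _ (by linarith))
  have hball : Metric.closedBall (0 : Euc (n + 2)) (Real.exp (C - S)) ⊆ Ω := by
    refine (Metric.closedBall_subset_ball ?_).trans hρΩ
    rw [← Real.lt_log_iff_exp_lt hρ]
    linarith
  have htest : IsTestFun Ω u :=
    ⟨husm, HasCompactSupport.of_support_subset_isCompact (isCompact_closedBall _ _) hsub,
      (closure_minimal hsub Metric.isClosed_closedBall).trans hball⟩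
  have hune : u ≠ 0 := by
    intro h
    have hF0 : F = 0 := by
      funext s
      obtain ⟨e, he⟩ := exists_norm_eq (Euc (n + 2)) (Real.exp_pos (C - s)).le
      have := congrFun h e
      simp only [hu, he, Real.log_exp, sub_sub_cancel] at this
      exact this
    rw [hF0] at hFlt
    simp at hFlt
  obtain ⟨K, hK0, hK⟩ := integral_polar_gauge (by omega) hp
  refine ⟨u, htest, hune, K, _, _, hK0, hFlt, ?_, ?_⟩
  · rw [← integral_log_subst C (fun s => |deriv F s| ^ (n + 2)),
      ← hK (fun r => |deriv F (C - Real.log r)| ^ (n + 2))]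
    refine integral_congr_ae (Eventually.of_forall fun x => ?_)
    by_cases hx : x = 0
    · simp [hx, hp.zero]
    have hxn := norm_pos_iff.2 hx
    have hud : HasFDerivAt u (fderiv ℝ u x) ((1 : ℝ) • x) := by
      rw [one_smul]
      exact (husm.differentiable (by norm_num) x).hasFDerivAt
    have h1 : HasDerivAt (fun r : ℝ => r • x) x 1 := by
      simpa using (hasDerivAt_id (1 : ℝ)).smul_const x
    have h2 := hud.comp_hasDerivAt (1 : ℝ) h1
    have h3 : HasDerivAt (fun r : ℝ => F (C - Real.log ‖x‖ - Real.log r))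
        (deriv F (C - Real.log ‖x‖) * -1) 1 := by
      have d1 : HasDerivAt (fun r : ℝ => C - Real.log ‖x‖ - Real.log r) (-1) 1 := by
        simpa using (Real.hasDerivAt_log one_ne_zero).const_sub (C - Real.log ‖x‖)
      have d2 : HasDerivAt F (deriv F (C - Real.log ‖x‖)) (C - Real.log ‖x‖ - Real.log 1) := by
        rw [Real.log_one, sub_zero]
        exact (hFs.differentiable (by norm_num) _).hasDerivAt
      exact d2.comp (1 : ℝ) d1
    have h4 : (u ∘ fun r : ℝ => r • x) =ᶠ[𝓝 1]
        fun r : ℝ => F (C - Real.log ‖x‖ - Real.log r) := by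
      filter_upwards [lt_mem_nhds (zero_lt_one (α := ℝ))] with r hr
      simp only [hu, Function.comp]
      rw [norm_smul, Real.norm_of_nonneg hr.le, Real.log_mul hr.ne' hxn.ne']
      congr 1
      ring
    have h5 := h2.unique (h3.congr_of_eventuallyEq h4)
    simp only
    rw [h5, abs_mul, mul_pow, abs_of_pos (inv_pos.2 (hp.pos hx)), inv_pow, mul_neg_one, abs_neg]
  · intro hintegrable
    rw [← integral_log_subst C (fun s => |F s| ^ (n + 2) / s ^ (n + 2)),
      ← hK (fun r => |F (C - Real.log r)| ^ (n + 2) / (C - Real.log r) ^ (n + 2))]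
    have hs : ∀ x, u x ≠ 0 → 0 < C - Real.log ‖x‖ := by
      intro x hx
      by_contra h
      exact hx (hFS _ ((not_lt.1 h).trans hS0))
    refine integral_mono_of_nonneg (Eventually.of_forall fun x => ?_) hintegrable
      (Eventually.of_forall fun x => ?_)
    · by_cases hx : u x = 0
      · have hx' : F (C - Real.log ‖x‖) = 0 := hx
        simp [hx']
      · have h1 := hs x hx
        have h2 := hp.nonneg x
        simp only [Pi.zero_apply]
        positivity
    · by_cases hx : u x = 0
      · have hx' : F (C - Real.log ‖x‖) = 0 := hx
        simp [hx, hx']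
      · have h1 := hs x hx
        have hx0 := hne0 x hx
        have h2 := hp.pos hx0
        have hxΩ : x ∈ Ω := hball (hsub hx)
        have hl : 0 < Real.log (R / p x) := Real.log_pos (by
          rw [one_lt_div h2]
          exact hΩR x hxΩ)
        have hle : Real.log (R / p x) ≤ C - Real.log ‖x‖ := by
          have hm := hp.m_pos
          have hxn := norm_pos_iff.2 hx0
          rw [hC, ← Real.log_div (by positivity) hxn.ne', div_div]
          refine Real.log_le_log (by positivity) ?_
          have := hp.lower x
          gcongr
        have hpow : Real.log (R / p x) ^ (n + 2) ≤ (C - Real.log ‖x‖) ^ (n + 2) :=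
          pow_le_pow_left₀ hl.le hle _
        change (p x ^ (n + 2))⁻¹ * (|u x| ^ (n + 2) / (C - Real.log ‖x‖) ^ (n + 2)) ≤ _
        calc (p x ^ (n + 2))⁻¹ * (|u x| ^ (n + 2) / (C - Real.log ‖x‖) ^ (n + 2))
            ≤ (p x ^ (n + 2))⁻¹ * (|u x| ^ (n + 2) / Real.log (R / p x) ^ (n + 2)) := by
              gcongr
          _ = _ := by
              field_simp


/-! ### The quotient over `Ω` -/

/-- The gauge does not attain its supremum on a bounded open set containing the origin, since
every nonzero point can be pushed outwards. -/
lemma gauge_lt_sSup {n : ℕ} {p : Euc (n + 2) → ℝ} {m M : ℝ} (hp : IsGauge p m M)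
    {Ω : Set (Euc (n + 2))} (hΩ : IsOpen Ω) (hb : Bornology.IsBounded Ω) (h0 : 0 ∈ Ω) :
    ∀ x ∈ Ω, p x < sSup (p '' Ω) := by
  have hbdd : BddAbove (p '' Ω) := by
    obtain ⟨C, hC⟩ := hb.exists_norm_le
    refine ⟨M * C, ?_⟩
    rintro _ ⟨x, hx, rfl⟩
    exact (hp.upper x).trans (mul_le_mul_of_nonneg_left (hC x hx) hp.M_pos.le)
  have key : ∀ x ∈ Ω, x ≠ 0 → p x < sSup (p '' Ω) := by
    intro x hx hx0
    have hc : ContinuousAt (fun t : ℝ => t • x) 1 := by fun_prop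
    have hev : ∀ᶠ t in 𝓝 (1 : ℝ), t • x ∈ Ω :=
      hc.eventually (by simpa using hΩ.mem_nhds hx)
    have hev2 : ∀ᶠ t in 𝓝[>] (1 : ℝ), t • x ∈ Ω := hev.filter_mono nhdsWithin_le_nhds
    obtain ⟨t, ht, ht1⟩ := (hev2.and self_mem_nhdsWithin).exists
    have ht1 : (1 : ℝ) < t := ht1
    refine lt_of_lt_of_le ?_ (le_csSup hbdd ⟨t • x, ht, rfl⟩)
    rw [hp.homog t x (by linarith)]
    nlinarith [hp.pos hx0]
  intro x hx
  rcases eq_or_ne x 0 with rfl | hx0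
  · obtain ⟨v, hv⟩ := exists_ne (0 : Euc (n + 2))
    have hc : ContinuousAt (fun t : ℝ => t • v) 0 := by fun_prop
    have hev : ∀ᶠ t in 𝓝 (0 : ℝ), t • v ∈ Ω :=
      hc.eventually (by simpa using hΩ.mem_nhds h0)
    have hev2 : ∀ᶠ t in 𝓝[>] (0 : ℝ), t • v ∈ Ω := hev.filter_mono nhdsWithin_le_nhds
    obtain ⟨t, ht, ht1⟩ := (hev2.and self_mem_nhdsWithin).exists
    have ht1 : (0 : ℝ) < t := ht1
    have hne : t • v ≠ 0 := smul_ne_zero ht1.ne' hv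
    rw [hp.zero]
    exact (hp.pos hne).trans (key _ ht hne)
  · exact key x hx hx0

/-- The support of a test function stays in a strictly smaller gauge ball. -/
lemma exists_smaller_radius {n : ℕ} {p : Euc (n + 2) → ℝ} {m M : ℝ} (hp : IsGauge p m M)
    {Ω : Set (Euc (n + 2))} {R : ℝ} (hΩR : ∀ x ∈ Ω, p x < R) {u : Euc (n + 2) → ℝ}
    (hu : IsTestFun Ω u) (hne : u ≠ 0) :
    ∃ R₁, 0 < R₁ ∧ R₁ < R ∧ ∀ x, R₁ ≤ p x → u x = 0 := by
  obtain ⟨-, hcs, hsub⟩ := hu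
  have hnon : (tsupport u).Nonempty := by
    obtain ⟨x, hx⟩ := Function.ne_iff.1 hne
    exact ⟨x, subset_tsupport u hx⟩
  obtain ⟨y, hy, hmax⟩ := hcs.isCompact.exists_isMaxOn hnon hp.cont.continuousOn
  have hyR := hΩR y (hsub hy)
  have hy0 := hp.nonneg y
  refine ⟨(p y + R) / 2, by linarith, by linarith, fun x hx => ?_⟩
  by_contra h
  have : p x ≤ p y := hmax (subset_tsupport u h)
  linarith

/-- The strict Hardy inequality for a test function, with integrals over `Ω` replaced by
integrals over the whole space and with a denominator known to be finite and positive. -/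
lemma quotient_facts {n : ℕ} {p : Euc (n + 2) → ℝ} {m M : ℝ} (hp : IsGauge p m M)
    {Ω : Set (Euc (n + 2))} {R : ℝ} (hΩR : ∀ x ∈ Ω, p x < R) {u : Euc (n + 2) → ℝ}
    (hu : IsTestFun Ω u) (hne : u ≠ 0) :
    (∫ x in Ω, |⟪(p x)⁻¹ • x, gradient u x⟫| ^ (n + 2)
      = ∫ x, |(p x)⁻¹ * fderiv ℝ u x x| ^ (n + 2)) ∧
    (∫ x in Ω, |u x| ^ (n + 2) / (p x ^ (n + 2) * Real.log (R / p x) ^ (n + 2))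
      = ∫ x, |u x| ^ (n + 2) / (p x ^ (n + 2) * Real.log (R / p x) ^ (n + 2))) ∧
    Integrable (fun x => |u x| ^ (n + 2) / (p x ^ (n + 2) * Real.log (R / p x) ^ (n + 2))) ∧
    0 < ∫ x, |u x| ^ (n + 2) / (p x ^ (n + 2) * Real.log (R / p x) ^ (n + 2)) ∧
    (((n : ℝ) + 1) / (n + 2)) ^ (n + 2) *
        ∫ x, |u x| ^ (n + 2) / (p x ^ (n + 2) * Real.log (R / p x) ^ (n + 2))
      < ∫ x, |(p x)⁻¹ * fderiv ℝ u x x| ^ (n + 2) := by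
  obtain ⟨R₁, hR₁, hR, hz⟩ := exists_smaller_radius hp hΩR hu hne
  obtain ⟨hI, hlt⟩ := hardy_strict n hp hR₁ hR (hu.1.of_le (by norm_cast))
    hu.2.1 hz hne
  have hout : ∀ x, x ∉ Ω → x ∉ tsupport u := fun x hx h => hx (hu.2.2 h)
  set a : ℝ := ((n : ℝ) + 1) / (n + 2) with ha
  have ha0 : 0 < a := by positivity
  have hB : (fun x => (a * |u x| / (p x * Real.log (R / p x))) ^ (n + 2)) =
      fun x => a ^ (n + 2) *
        (|u x| ^ (n + 2) / (p x ^ (n + 2) * Real.log (R / p x) ^ (n + 2))) := by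
    funext x
    rw [div_pow, mul_pow, mul_pow, mul_div_assoc]
  rw [hB] at hI hlt
  have hInt := (integrable_const_mul_iff (IsUnit.mk0 _ (pow_pos ha0 (n + 2)).ne') _).1 hI
  rw [integral_const_mul] at hlt
  have hlog : ∀ x, x ≠ 0 → u x ≠ 0 → 0 < Real.log (R / p x) := by
    intro x hx hux
    have h1 : p x < R₁ := by
      by_contra h
      exact hux (hz x (not_lt.1 h))
    exact Real.log_pos ((one_lt_div (hp.pos hx)).2 (h1.trans hR))
  have hpos : ∀ x, x ≠ 0 → u x ≠ 0 →
      0 < |u x| ^ (n + 2) / (p x ^ (n + 2) * Real.log (R / p x) ^ (n + 2)) := by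
    intro x hx hux
    have := hlog x hx hux
    have := hp.pos hx
    have := abs_pos.2 hux
    positivity
  have hnn : ∀ x, 0 ≤ |u x| ^ (n + 2) / (p x ^ (n + 2) * Real.log (R / p x) ^ (n + 2)) := by
    intro x
    rcases eq_or_ne x 0 with rfl | hx
    · simp [hp.zero]
    · by_cases hux : u x = 0
      · simp [hux]
      · exact (hpos x hx hux).le
  refine ⟨?_, ?_, hInt, ?_, hlt⟩
  · simp_rw [inner_gradient_eq]
    refine setIntegral_eq_integral_of_forall_compl_eq_zero fun x hx => ?_
    have : fderiv ℝ u x = 0 := by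
      by_contra h
      exact hout x hx (support_fderiv_subset ℝ h)
    simp [this]
  · refine setIntegral_eq_integral_of_forall_compl_eq_zero fun x hx => ?_
    simp [image_eq_zero_of_notMem_tsupport (hout x hx)]
  · refine lt_of_le_of_ne (integral_nonneg hnn) fun h0 => hne ?_
    have hae := (integral_eq_zero_iff_of_nonneg hnn hInt).1 h0.symm
    refine (Continuous.ae_eq_iff_eq volume hu.1.continuous continuous_zero).1 ?_
    filter_upwards [hae, Measure.ae_ne volume (0 : Euc (n + 2))] with x hx hx0
    by_contra hux
    exact (hpos x hx0 hux).ne' hx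

/-- The best constant in the anisotropic critical Hardy inequality on a bounded
domain containing the origin is ((N-1)/N)^N and it is not attained. -/
theorem finsler_hardy_critical_best_constant
    (N : ℕ) (hN : 2 ≤ N) (H : Euc N → ℝ) (hH : IsFinslerNorm H)
    (Ω : Set (Euc N)) (hΩopen : IsOpen Ω) (hΩconn : IsConnected Ω)
    (hΩbdd : Bornology.IsBounded Ω) (h0 : 0 ∈ Ω) :
    sInf {r : ℝ | ∃ u : Euc N → ℝ, IsTestFun Ω u ∧ u ≠ 0 ∧
        r = (∫ x in Ω, |⟪(polarNorm H x)⁻¹ • x, gradient u x⟫| ^ N) /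
            ∫ x in Ω, |u x| ^ N /
              (polarNorm H x ^ N *
                Real.log (sSup (polarNorm H '' Ω) / polarNorm H x) ^ N)}
      = (((N : ℝ) - 1) / (N : ℝ)) ^ N ∧
    (∀ u : Euc N → ℝ, IsTestFun Ω u → u ≠ 0 →
      (((N : ℝ) - 1) / (N : ℝ)) ^ N <
        (∫ x in Ω, |⟪(polarNorm H x)⁻¹ • x, gradient u x⟫| ^ N) /
          ∫ x in Ω, |u x| ^ N /
            (polarNorm H x ^ N *
              Real.log (sSup (polarNorm H '' Ω) / polarNorm H x) ^ N)) := by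
  obtain ⟨n, rfl⟩ : ∃ n, N = n + 2 := ⟨N - 2, by omega⟩
  obtain ⟨m, M, hp⟩ := isGauge_polarNorm hN hH
  have hΩR := gauge_lt_sSup hp hΩopen hΩbdd h0
  have hR : 0 < sSup (polarNorm H '' Ω) := by simpa [hp.zero] using hΩR 0 h0
  have hcast : (((n + 2 : ℕ) : ℝ) - 1) / ((n + 2 : ℕ) : ℝ) = ((n : ℝ) + 1) / (n + 2) := by
    push_cast
    ring
  rw [hcast]
  have hstrict : ∀ u : Euc (n + 2) → ℝ, IsTestFun Ω u → u ≠ 0 →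
      (((n : ℝ) + 1) / (n + 2)) ^ (n + 2) <
        (∫ x in Ω, |⟪(polarNorm H x)⁻¹ • x, gradient u x⟫| ^ (n + 2)) /
          ∫ x in Ω, |u x| ^ (n + 2) /
            (polarNorm H x ^ (n + 2) *
              Real.log (sSup (polarNorm H '' Ω) / polarNorm H x) ^ (n + 2)) := by
    intro u hu hne
    obtain ⟨h1, h2, -, h4, h5⟩ := quotient_facts hp hΩR hu hne
    rw [h1, h2, lt_div_iff₀ h4]
    exact h5
  refine ⟨csInf_eq_of_forall_ge_of_forall_gt_exists_lt ?_ ?_ ?_, hstrict⟩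
  · obtain ⟨u, hu, hne, -⟩ := exists_almost_optimal n hp hΩopen h0 hR hΩR
      (lt_add_one ((((n : ℝ) + 1) / (n + 2)) ^ (n + 2)))
    exact ⟨_, u, hu, hne, rfl⟩
  · rintro _ ⟨u, hu, hne, rfl⟩
    exact (hstrict u hu hne).le
  · intro w hw
    obtain ⟨u, hu, hne, K, I₁, I₂, hK, hI, hnum, hden⟩ :=
      exists_almost_optimal n hp hΩopen h0 hR hΩR hw
    obtain ⟨h1, h2, h3, h4, h5⟩ := quotient_facts hp hΩR hu hne
    refine ⟨_, ⟨u, hu, hne, rfl⟩, ?_⟩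
    rw [h1, h2, div_lt_iff₀ h4]
    have ha : (0 : ℝ) < (((n : ℝ) + 1) / (n + 2)) ^ (n + 2) := by positivity
    have hnum0 : 0 < K * I₁ := by
      rw [← hnum]
      exact (mul_pos ha h4).trans h5
    have hK0 : 0 < K := lt_of_le_of_ne hK fun h => by simp [← h] at hnum0
    rw [hnum]
    calc K * I₁ < K * (w * I₂) := mul_lt_mul_of_pos_left hI hK0
      _ = w * (K * I₂) := by ring
      _ ≤ _ := mul_le_mul_of_nonneg_left (hden h3) (ha.trans hw).le
end
end

section
/- Let N ≥ 2 and 1 < p < ∞, let ℝ^N_+ = { x = (x', x_N) ∈ ℝ^N : x_N > 0 }, and let d_H(x) = inf { H⁰(x − y) : y ∈ ℝ^N, y_N = 0 } be the anisotropic distance of x ∈ ℝ^N_+ to the boundary (a positive linear function of x_N, everywhere differentiable, with H(∇d_H) = 1). Then C_p(ℝ^N_+) := inf over nonzero u ∈ C_c^∞(ℝ^N_+) of [ ∫_{ℝ^N_+} |∇u(x) · (∇_ξ H)(∇d_H(x))|^p dx / ∫_{ℝ^N_+} |u(x)|^p / d_H(x)^p dx ] equals ((p−1)/p)^p. -/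
/-!
Write `e` for the last coordinate vector, `η = e / H e` and `w = ∇H(η)`. Euler's identity gives
`⟪w, η⟫ = 1`, and convexity places `w` in the polar unit ball. On the half-space this forces
`dH x = ⟪η, x⟫` (`IsFinslerNorm.dist_hyperplane`), so `∇dH = η` there and the numerator of the
quotient is the integral of `|∂_w u| ^ p`. The claim is thus the one-dimensional Hardy inequality
along the lines in direction `w`, on which `t = l x = ⟪η, x⟫` is a parameter with
`l w = 1`.

*Lower bound* (`hardy_lower`). With `λ = (p - 1) / p`, the tangent-line inequality for `|·| ^ p`
gives pointwise `|∂_w u| ^ p - λ ^ p |u| ^ p / l ^ p ≥ λ ^ (p - 1) ∂_w (|u| ^ p l ^ (1 - p))`,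
and the right-hand side integrates to zero because `|u| ^ p l ^ (1 - p)` is `C¹` with compact
support.

*Sharpness* (`hardy_sharp`). Take `u x = g (l x) ψ (x - l x • w)` with a bump function `ψ` and
`g t = t ^ λ χ (ε log t)`. Fubini in the coordinates `(t, y) ∈ ℝ × ker l` cancels the factor
coming from `ψ`, and the substitution `s = ε log t` turns the quotient into
`∫ |λ χ + ε χ'| ^ p / ∫ |χ| ^ p`, which tends to `λ ^ p` as `ε → 0`.
-/

open MeasureTheory Set Filter
open scoped RealInnerProductSpace Topology ENNReal NNReal

noncomputable section

/-! ### Hardy's inequality in one direction -/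

section Hardy

/-- The tangent line to `t ↦ |t| ^ p` at `c ≥ 0` lies below the graph. -/
lemma tangent_le_abs_rpow {p : ℝ} (hp : 1 < p) {c : ℝ} (hc : 0 ≤ c) (b : ℝ) :
    c ^ p + p * c ^ (p - 1) * (b - c) ≤ |b| ^ p := by
  rcases hc.eq_or_lt with rfl | hc
  · rw [Real.zero_rpow (by linarith), Real.zero_rpow (by linarith)]
    simp only [mul_zero, zero_mul, add_zero]
    positivity
  · have h1 := one_add_mul_self_le_rpow_one_add (s := |b| / c - 1) (p := p)
      (by have : 0 ≤ |b| / c := by positivity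
          linarith) hp.le
    rw [add_sub_cancel, Real.div_rpow (abs_nonneg b) hc.le,
      le_div_iff₀ (Real.rpow_pos_of_pos hc p)] at h1
    refine le_trans ?_ h1
    rw [Real.rpow_sub_one hc.ne']
    have h2 : 0 ≤ p * (c ^ p / c) := by positivity
    calc c ^ p + p * (c ^ p / c) * (b - c)
        ≤ c ^ p + p * (c ^ p / c) * (|b| - c) := by
          gcongr
          exact le_abs_self b
      _ = _ := by field_simp

/-- The pointwise form of Hardy's inequality: with `a = u(x)`, `v` the derivative of `u` and
`d` the distance, the bracket on the left is the derivative of `|u| ^ p * d ^ (1 - p)`, which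
integrates to zero. -/
lemma hardy_pointwise {p : ℝ} (hp : 1 < p) (a v d : ℝ) (hd : 0 < d) :
    ((p - 1) / p) ^ (p - 1) *
        (p * |a| ^ (p - 2) * a * v * d ^ (1 - p) + |a| ^ p * ((1 - p) * d ^ (-p)))
      ≤ |v| ^ p - ((p - 1) / p) ^ p * (|a| ^ p / d ^ p) := by
  have hp0 : 0 < p := by linarith
  have hp1 : 0 < p - 1 := by linarith
  rcases eq_or_ne a 0 with rfl | ha
  · simp only [abs_zero, Real.zero_rpow hp0.ne', mul_zero, zero_mul, zero_div, add_zero, sub_zero]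
    positivity
  · have ha' : 0 < |a| := abs_pos.mpr ha
    set l := (p - 1) / p with hl
    have hl0 : 0 < l := by positivity
    have h := tangent_le_abs_rpow hp (c := l * (|a| / d)) (by positivity) (a * v / |a|)
    have hb : abs (a * v / |a|) = |v| := by
      rw [abs_div, abs_mul, abs_abs]; field_simp
    rw [hb, Real.rpow_sub_one (by positivity), Real.mul_rpow hl0.le (by positivity),
      Real.div_rpow ha'.le hd.le] at h
    rw [Real.rpow_sub_one hl0.ne', Real.rpow_sub ha', Real.rpow_sub hd, Real.rpow_neg hd.le,
      Real.rpow_one, Real.rpow_two]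
    rw [le_sub_iff_add_le]
    refine le_trans (le_of_eq ?_) h
    have hD : 0 < d ^ p := by positivity
    have hpl : p * l = p - 1 := by rw [hl]; field_simp
    clear_value l
    field_simp
    linear_combination |a| ^ 2 * hpl

variable {E : Type*} [NormedAddCommGroup E] [InnerProductSpace ℝ E]

/-- The integral of a directional derivative of a compactly supported `C¹` function vanishes. -/
lemma integral_fderiv_apply_eq_zero [FiniteDimensional ℝ E] [MeasurableSpace E] [BorelSpace E]
    {f : E → ℝ} (hf : ContDiff ℝ 1 f)
    (hc : HasCompactSupport f) (w : E) : ∫ x, fderiv ℝ f x w = 0 := by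
  have hcont : Continuous (fun x => fderiv ℝ f x w) :=
    (hf.continuous_fderiv one_ne_zero).clm_apply continuous_const
  have hcs : HasCompactSupport (fun x => fderiv ℝ f x w) := hc.fderiv_apply ℝ w
  have h := integral_bilinear_hasLineDerivAt_right_eq_neg_left_of_integrable
    (μ := (volume : Measure E)) (f := f) (f' := fun x => fderiv ℝ f x w)
    (g := fun _ => (1 : ℝ)) (g' := fun _ => (0 : ℝ)) (v := w)
    (B := ContinuousLinearMap.mul ℝ ℝ)
    (by simpa using hcont.integrable_of_hasCompactSupport hcs) (by simp)
    (by simpa using hf.continuous.integrable_of_hasCompactSupport hc)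
    (fun x _ => ((hf.differentiable one_ne_zero) x).hasFDerivAt.hasLineDerivAt w)
    (fun x _ => (hasFDerivAt_const (1 : ℝ) x).hasLineDerivAt w)
  simpa using h

/-- Multiplying a power of a test function by a power of a linear function that is positive on
its support preserves `C¹` regularity. -/
lemma contDiff_abs_rpow_mul {p : ℝ} (hp : 1 < p) (q : ℝ) {u : E → ℝ} (hu : ContDiff ℝ 1 u)
    (l : E →L[ℝ] ℝ) (hs : tsupport u ⊆ {x | 0 < l x}) :
    ContDiff ℝ 1 (fun x => |u x| ^ p * l x ^ q) := by
  rw [contDiff_iff_contDiffAt]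
  intro x
  by_cases hx : x ∈ tsupport u
  · have h1 : ContDiff ℝ 1 (fun x => |u x| ^ p) := hu.norm_rpow hp
    exact h1.contDiffAt.mul (l.contDiff.contDiffAt.rpow_const_of_ne (hs hx).ne')
  · rw [notMem_tsupport_iff_eventuallyEq] at hx
    refine (contDiffAt_const (c := (0 : ℝ))).congr_of_eventuallyEq ?_
    filter_upwards [hx] with y hy
    simp [hy, Real.zero_rpow (by linarith : p ≠ 0)]

lemma hasCompactSupport_abs_rpow_mul {p : ℝ} (hp : 1 < p) (q : ℝ) {u : E → ℝ}
    (hc : HasCompactSupport u) (l : E →L[ℝ] ℝ) :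
    HasCompactSupport (fun x => |u x| ^ p * l x ^ q) := by
  refine hc.mono ?_
  intro x hx hx0
  apply hx
  simp [hx0, Real.zero_rpow (by linarith : p ≠ 0)]

lemma abs_rpow_div_eq {p : ℝ} (hp : 1 < p) {u : E → ℝ} (l : E →L[ℝ] ℝ)
    (hs : tsupport u ⊆ {x | 0 < l x}) :
    (fun x => |u x| ^ p / l x ^ p) = fun x => |u x| ^ p * l x ^ (-p) := by
  funext x
  by_cases hx : x ∈ tsupport u
  · rw [Real.rpow_neg (le_of_lt (hs hx)), div_eq_mul_inv]
  · simp [image_eq_zero_of_notMem_tsupport hx, Real.zero_rpow (by linarith : p ≠ 0)]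

/-- **Hardy's inequality** along a direction `w` transversal to the hyperplane `l = 0`. -/
lemma hardy_lower [FiniteDimensional ℝ E] [MeasurableSpace E] [BorelSpace E]
    {p : ℝ} (hp : 1 < p) {u : E → ℝ} (hu : ContDiff ℝ 1 u)
    (hc : HasCompactSupport u) (l : E →L[ℝ] ℝ) (hs : tsupport u ⊆ {x | 0 < l x})
    (w : E) (hw : l w = 1) :
    ((p - 1) / p) ^ p * ∫ x, |u x| ^ p / l x ^ p ≤ ∫ x, |fderiv ℝ u x w| ^ p := by
  have hp0 : p ≠ 0 := by linarith
  set f : E → ℝ := fun x => |u x| ^ p * l x ^ (1 - p) with hf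
  have hfC : ContDiff ℝ 1 f := contDiff_abs_rpow_mul hp _ hu l hs
  have hfc : HasCompactSupport f := hasCompactSupport_abs_rpow_mul hp _ hc l
  have hint := integral_fderiv_apply_eq_zero hfC hfc w
  have i1 : Integrable (fun x => fderiv ℝ f x w) :=
    ((hfC.continuous_fderiv one_ne_zero).clm_apply continuous_const).integrable_of_hasCompactSupport
      (hfc.fderiv_apply ℝ w)
  have i2 : Integrable (fun x => |u x| ^ p / l x ^ p) := by
    rw [abs_rpow_div_eq hp l hs]
    exact (contDiff_abs_rpow_mul hp _ hu l hs).continuous.integrable_of_hasCompactSupport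
      (hasCompactSupport_abs_rpow_mul hp _ hc l)
  have i3 : Integrable (fun x => |fderiv ℝ u x w| ^ p) := by
    have hcu : Continuous (fun x => fderiv ℝ u x w) :=
      (hu.continuous_fderiv one_ne_zero).clm_apply continuous_const
    refine (hcu.abs.rpow_const (fun x => Or.inr (by linarith))).integrable_of_hasCompactSupport ?_
    refine (hc.fderiv_apply ℝ w).mono ?_
    intro x hx hx0
    apply hx
    simp only at hx0
    simp [hx0, Real.zero_rpow hp0]
  have key : ∀ x, ((p - 1) / p) ^ (p - 1) * fderiv ℝ f x w
      ≤ |fderiv ℝ u x w| ^ p - ((p - 1) / p) ^ p * (|u x| ^ p / l x ^ p) := by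
    intro x
    by_cases hx : x ∈ tsupport u
    · have hl : 0 < l x := hs hx
      have h1 : HasFDerivAt (fun x => |u x| ^ p)
          ((p * |u x| ^ (p - 2) * u x) • fderiv ℝ u x) x :=
        (hasDerivAt_abs_rpow (u x) hp).comp_hasFDerivAt x
          (hu.differentiable one_ne_zero x).hasFDerivAt
      have h2 : HasFDerivAt (fun x => l x ^ (1 - p)) (((1 - p) * l x ^ (1 - p - 1)) • l) x :=
        (Real.hasDerivAt_rpow_const (Or.inl hl.ne')).comp_hasFDerivAt x l.hasFDerivAt
      have h3 : HasFDerivAt f _ x := h1.mul h2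
      rw [h3.fderiv]
      refine le_trans (le_of_eq ?_) (hardy_pointwise hp (u x) (fderiv ℝ u x w) (l x) hl)
      simp only [add_apply, smul_apply, smul_eq_mul, hw]
      rw [show 1 - p - 1 = -p by ring]
      ring
    · have h0 : u =ᶠ[𝓝 x] 0 := notMem_tsupport_iff_eventuallyEq.mp hx
      have h1 : f =ᶠ[𝓝 x] fun _ => 0 := by
        filter_upwards [h0] with y hy
        simp [hf, hy, Real.zero_rpow hp0]
      have h2 : u =ᶠ[𝓝 x] fun _ => 0 := h0
      rw [h1.fderiv_eq, h2.fderiv_eq, h2.eq_of_nhds]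
      simp [Real.zero_rpow hp0]
  have h := integral_mono (i1.const_mul _) (i3.sub (i2.const_mul _)) key
  simp only [Pi.sub_apply] at h
  rw [integral_const_mul, hint, integral_sub i3 (i2.const_mul _), integral_const_mul] at h
  linarith

/-- The denominator of the Hardy quotient is positive. -/
lemma hardy_denominator_pos [FiniteDimensional ℝ E] [MeasurableSpace E] [BorelSpace E]
    {p : ℝ} (hp : 1 < p) {u : E → ℝ} (hu : ContDiff ℝ 1 u)
    (hc : HasCompactSupport u) (hu0 : u ≠ 0) (l : E →L[ℝ] ℝ) (hs : tsupport u ⊆ {x | 0 < l x}) :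
    0 < ∫ x, |u x| ^ p / l x ^ p := by
  obtain ⟨x, hx⟩ := Function.ne_iff.mp hu0
  have hl : 0 < l x := hs (subset_tsupport u hx)
  have hux : 0 < |u x| := abs_pos.mpr hx
  have heq := abs_rpow_div_eq hp l hs
  refine Continuous.integral_pos_of_hasCompactSupport_nonneg_nonzero (x := x) ?_ ?_ ?_ ?_
  · rw [heq]; exact (contDiff_abs_rpow_mul hp _ hu l hs).continuous
  · rw [heq]; exact hasCompactSupport_abs_rpow_mul hp _ hc l
  · intro y
    by_cases hy : y ∈ tsupport u
    · have : 0 < l y := hs hy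
      simp only [Pi.zero_apply]; positivity
    · simp [image_eq_zero_of_notMem_tsupport hy, Real.zero_rpow (by linarith : p ≠ 0)]
  · positivity

/-! ### Sharpness of the constant -/

/-- Fubini in the oblique coordinates `x = t • w + y` with `t = l x` and `y ∈ ker l`. -/
lemma integral_slice [FiniteDimensional ℝ E] [MeasurableSpace E] [BorelSpace E]
    (l : E →L[ℝ] ℝ) (w : E) (hw : l w = 1) :
    ∃ c : ℝ, 0 < c ∧ ∀ (φ : ℝ → ℝ) (ρ : E → ℝ),
      ∫ x, φ (l x) * ρ (x - l x • w) =
        c * ((∫ t, φ t) * ∫ y : LinearMap.ker (l : E →ₗ[ℝ] ℝ), ρ y) := by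
  set K := LinearMap.ker (l : E →ₗ[ℝ] ℝ)
  have hK : ∀ x : E, x - l x • w ∈ K := by
    intro x
    simp [K, hw]
  have hK' : ∀ y : K, l (y : E) = 0 := fun y => y.2
  let L₀ : E ≃ₗ[ℝ] ℝ × K :=
    { toFun := fun x => (l x, ⟨x - l x • w, hK x⟩)
      invFun := fun z => z.1 • w + (z.2 : E)
      map_add' := by
        intro x y
        ext
        · simp
        · simp only [map_add, Prod.mk_add_mk, AddMemClass.mk_add_mk, add_smul]
          abel
      map_smul' := by
        intro a x
        ext
        · simp
        · simp [mul_smul, smul_sub]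
      left_inv := by
        intro x
        simp
      right_inv := by
        rintro ⟨t, y⟩
        ext
        · simp [hw, hK']
        · simp [hw, hK'] }
  let L : E ≃L[ℝ] ℝ × K := L₀.toContinuousLinearEquiv
  have hL : ∀ x, L x = (l x, ⟨x - l x • w, hK x⟩) := fun x => rfl
  have hhaar : (Measure.map L (volume : Measure E)).IsAddHaarMeasure := L.isAddHaarMeasure_map _
  have hc := Measure.isAddLeftInvariant_eq_smul
    (Measure.map L (volume : Measure E)) ((volume : Measure ℝ).prod (volume : Measure K))
  have hc0 := Measure.addHaarScalarFactor_pos_of_isAddHaarMeasure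
    (Measure.map L (volume : Measure E)) ((volume : Measure ℝ).prod (volume : Measure K))
  set c := Measure.addHaarScalarFactor
    (Measure.map L (volume : Measure E)) ((volume : Measure ℝ).prod (volume : Measure K))
  refine ⟨c, NNReal.coe_pos.mpr hc0, fun φ ρ => ?_⟩
  have h1 := L.toHomeomorph.measurableEmbedding.integral_map (μ := (volume : Measure E))
    (fun z : ℝ × K => φ z.1 * ρ (z.2 : E))
  have h2 : Measure.map L.toHomeomorph (volume : Measure E) = Measure.map L volume := rfl
  rw [h2, hc, integral_smul_nnreal_measure, integral_prod_mul φ (fun y : K => ρ y)] at h1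
  rw [NNReal.smul_def, smul_eq_mul] at h1
  exact h1.symm

/-- The substitution `t = exp (s / ε)`. -/
lemma integral_Ioi_log {ε : ℝ} (hε : 0 < ε) (F : ℝ → ℝ) :
    ∫ t in Ioi (0 : ℝ), t⁻¹ * F (ε * Real.log t) = ε⁻¹ * ∫ s, F s := by
  have himg : Set.image (fun s : ℝ => Real.exp (s / ε)) univ = Ioi 0 := by
    ext t
    constructor
    · rintro ⟨s, -, rfl⟩
      exact Real.exp_pos _
    · intro ht
      refine ⟨ε * Real.log t, mem_univ _, ?_⟩
      simp only
      rw [mul_div_cancel_left₀ _ hε.ne', Real.exp_log ht]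
  have h := integral_image_eq_integral_abs_deriv_smul (s := univ)
    (f := fun s : ℝ => Real.exp (s / ε)) (f' := fun s => Real.exp (s / ε) * (1 / ε))
    MeasurableSet.univ
    (fun s _ => ((hasDerivAt_id s).div_const ε).exp.hasDerivWithinAt)
    (fun a _ b _ hab => by
      have := Real.exp_injective hab
      field_simp at this
      exact this)
    (fun t => t⁻¹ * F (ε * Real.log t))
  rw [himg] at h
  rw [h, setIntegral_univ, ← integral_const_mul]
  congr 1
  funext s
  rw [abs_of_pos (by positivity), Real.log_exp, mul_div_cancel₀ _ hε.ne', smul_eq_mul]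
  field_simp

/-- The one-dimensional profile `t ↦ t ^ ((p - 1) / p) * χ (ε * log t)` on `t > 0`, extended by zero.
For small `ε` it is a slowly varying truncation of the virtual extremal `t ^ ((p - 1) / p)`. -/
def hardyProfile (p ε : ℝ) (χ : ℝ → ℝ) (t : ℝ) : ℝ :=
  if 0 < t then t ^ ((p - 1) / p) * χ (ε * Real.log t) else 0

lemma hardyProfile_eq_zero {p ε : ℝ} (hε : 0 < ε) {χ : ℝ → ℝ}
    (hχ : ∀ s, 2 ≤ |s| → χ s = 0) {t : ℝ}
    (ht : t ∉ Icc (Real.exp (-2 / ε)) (Real.exp (2 / ε))) : hardyProfile p ε χ t = 0 := by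
  unfold hardyProfile
  split_ifs with h0
  · rw [hχ, mul_zero]
    by_contra! hlt
    rw [abs_lt] at hlt
    apply ht
    constructor
    · rw [← Real.le_log_iff_exp_le h0, div_le_iff₀ hε]; linarith [hlt.1]
    · rw [← Real.log_le_iff_le_exp h0, le_div_iff₀ hε]; linarith [hlt.2]
  · rfl

lemma hardyProfile_eventuallyEq {p ε : ℝ} {χ : ℝ → ℝ} {t : ℝ} (ht : 0 < t) :
    hardyProfile p ε χ =ᶠ[𝓝 t] fun t => t ^ ((p - 1) / p) * χ (ε * Real.log t) := by
  filter_upwards [lt_mem_nhds ht] with s hs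
  simp [hardyProfile, hs]

lemma hardyProfile_eventuallyEq_zero {p ε : ℝ} (hε : 0 < ε) {χ : ℝ → ℝ}
    (hχ : ∀ s, 2 ≤ |s| → χ s = 0) {t : ℝ} (ht : t ≤ 0) :
    hardyProfile p ε χ =ᶠ[𝓝 t] fun _ => 0 := by
  filter_upwards [gt_mem_nhds (ht.trans_lt (Real.exp_pos (-2 / ε)))] with s hs
  exact hardyProfile_eq_zero hε hχ (fun h => absurd h.1 (not_le.mpr hs))

lemma contDiff_hardyProfile {p ε : ℝ} (hε : 0 < ε) {χ : ℝ → ℝ}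
    (hχ : ∀ s, 2 ≤ |s| → χ s = 0) (hχs : ContDiff ℝ (⊤ : ℕ∞) χ) :
    ContDiff ℝ (⊤ : ℕ∞) (hardyProfile p ε χ) := by
  rw [contDiff_iff_contDiffAt]
  intro t
  rcases le_or_gt t 0 with ht | ht
  · exact contDiffAt_const.congr_of_eventuallyEq (hardyProfile_eventuallyEq_zero hε hχ ht)
  · refine ContDiffAt.congr_of_eventuallyEq ?_ (hardyProfile_eventuallyEq ht)
    refine (contDiffAt_id.rpow_const_of_ne ht.ne').mul ?_
    exact hχs.contDiffAt.comp t (contDiffAt_const.mul (contDiffAt_id.log ht.ne'))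

lemma deriv_hardyProfile {p ε : ℝ} {χ : ℝ → ℝ} (hχs : ContDiff ℝ (⊤ : ℕ∞) χ)
    {t : ℝ} (ht : 0 < t) :
    deriv (hardyProfile p ε χ) t = t ^ ((p - 1) / p - 1) *
      ((p - 1) / p * χ (ε * Real.log t) + ε * deriv χ (ε * Real.log t)) := by
  rw [(hardyProfile_eventuallyEq ht).deriv_eq]
  have h1 : HasDerivAt (fun t : ℝ => t ^ ((p - 1) / p)) _ t :=
    Real.hasDerivAt_rpow_const (Or.inl ht.ne')
  have h2 : HasDerivAt χ (deriv χ (ε * Real.log t)) (ε * Real.log t) :=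
    (hχs.differentiable (by simp) _).hasDerivAt
  have h3 : HasDerivAt (fun t : ℝ => ε * Real.log t) (ε * t⁻¹) t :=
    (Real.hasDerivAt_log ht.ne').const_mul ε
  have h4 : HasDerivAt (fun t : ℝ => χ (ε * Real.log t)) _ t := h2.comp t h3
  have h5 : HasDerivAt (fun t : ℝ => t ^ ((p - 1) / p) * χ (ε * Real.log t)) _ t := h1.mul h4
  rw [h5.deriv, Real.rpow_sub_one ht.ne']
  field_simp

/-- Both integrals of the one-dimensional Hardy quotient reduce to this substitution. -/
lemma integral_abs_rpow_log {p ε : ℝ} (hp : 1 < p) (hε : 0 < ε) {G : ℝ → ℝ} {A : ℝ → ℝ}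
    (h0 : ∀ t ≤ 0, G t = 0)
    (h1 : ∀ t, 0 < t → G t = t ^ ((p - 1) / p - 1) * A (ε * Real.log t)) :
    ∫ t, |G t| ^ p = ε⁻¹ * ∫ s, |A s| ^ p := by
  have hp0 : p ≠ 0 := by linarith
  rw [← integral_Ioi_log hε (fun s => |A s| ^ p),
    ← setIntegral_eq_integral_of_forall_compl_eq_zero (s := Ioi 0)]
  · refine setIntegral_congr_fun measurableSet_Ioi ?_
    intro t ht
    have ht' : (0 : ℝ) < t := ht
    simp only
    rw [h1 t ht', abs_mul, abs_of_pos (by positivity : 0 < t ^ ((p - 1) / p - 1)),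
      Real.mul_rpow (by positivity) (abs_nonneg _), ← Real.rpow_mul ht'.le,
      show ((p - 1) / p - 1) * p = -1 by field_simp; ring, Real.rpow_neg_one]
  · intro t ht
    rw [h0 t (by simpa using ht), abs_zero, Real.zero_rpow hp0]

/-- The one-dimensional energy tends to that of the unperturbed profile as `ε → 0`. -/
lemma tendsto_profile_energy {p : ℝ} (hp : 1 < p) {χ : ℝ → ℝ} (hχs : ContDiff ℝ (⊤ : ℕ∞) χ)
    (hχ : HasCompactSupport χ) :
    Tendsto (fun ε : ℝ => ∫ s, |(p - 1) / p * χ s + ε * deriv χ s| ^ p) (𝓝 0)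
      (𝓝 (((p - 1) / p) ^ p * ∫ s, |χ s| ^ p)) := by
  have hp0 : p ≠ 0 := by linarith
  have hd : Continuous (deriv χ) := hχs.continuous_deriv (by simp)
  have hc : Continuous (fun ε : ℝ =>
      ∫ s in tsupport χ, |(p - 1) / p * χ s + ε * deriv χ s| ^ p) := by
    refine continuous_parametric_integral_of_continuous ?_ hχ
    refine Continuous.rpow_const ?_ (fun _ => Or.inr (by linarith))
    exact ((continuous_const.mul (hχs.continuous.comp continuous_snd)).add
      (continuous_fst.mul (hd.comp continuous_snd))).abs
  have heq : (fun ε : ℝ => ∫ s in tsupport χ, |(p - 1) / p * χ s + ε * deriv χ s| ^ p)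
      = fun ε : ℝ => ∫ s, |(p - 1) / p * χ s + ε * deriv χ s| ^ p := by
    funext ε
    refine setIntegral_eq_integral_of_forall_compl_eq_zero ?_
    intro s hs
    have h1 : χ s = 0 := image_eq_zero_of_notMem_tsupport hs
    have h2 : deriv χ s = 0 :=
      image_eq_zero_of_notMem_tsupport (fun h => hs (tsupport_deriv_subset h))
    simp [h1, h2, Real.zero_rpow hp0]
  rw [heq] at hc
  have h := hc.tendsto 0
  convert h using 2
  rw [← integral_const_mul]
  congr 1
  funext s
  have hl : 0 ≤ (p - 1) / p := div_nonneg (by linarith) (by linarith)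
  rw [zero_mul, add_zero, abs_mul, abs_of_nonneg hl, Real.mul_rpow hl (abs_nonneg _)]

/-- The Hardy constant cannot be improved: products of the profile in `t = l x` with a fixed
bump function of the projection along `w` have quotients arbitrarily close to it. -/
lemma hardy_sharp [FiniteDimensional ℝ E] [MeasurableSpace E] [BorelSpace E]
    {p : ℝ} (hp : 1 < p) (l : E →L[ℝ] ℝ) (w : E) (hw : l w = 1) {r : ℝ}
    (hr : ((p - 1) / p) ^ p < r) :
    ∃ u : E → ℝ, ContDiff ℝ (⊤ : ℕ∞) u ∧ HasCompactSupport u ∧ tsupport u ⊆ {x | 0 < l x} ∧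
      u ≠ 0 ∧ (∫ x, |fderiv ℝ u x w| ^ p) / (∫ x, |u x| ^ p / l x ^ p) < r := by
  have hp0 : p ≠ 0 := by linarith
  let χ : ContDiffBump (0 : ℝ) := ⟨1, 2, one_pos, one_lt_two⟩
  let ψ : ContDiffBump (0 : E) := ⟨1, 2, one_pos, one_lt_two⟩
  have hχs : ContDiff ℝ (⊤ : ℕ∞) χ := χ.contDiff
  have hχ0 : ∀ s, 2 ≤ |s| → χ s = 0 := fun s hs => χ.zero_of_le_dist (by simpa using hs)
  have hχ1 : χ 0 = 1 := χ.one_of_mem_closedBall (by simp [χ])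
  have hψ0 : ∀ y, 2 ≤ ‖y‖ → ψ y = 0 := fun y hy => ψ.zero_of_le_dist (by simpa using hy)
  have hψ1 : ψ 0 = 1 := ψ.one_of_mem_closedBall (by simp [ψ])
  have hI : 0 < ∫ s, |χ s| ^ p := by
    refine Continuous.integral_pos_of_hasCompactSupport_nonneg_nonzero (x := 0) ?_ ?_ ?_ ?_
    · exact χ.continuous.abs.rpow_const (fun _ => Or.inr (by linarith))
    · refine χ.hasCompactSupport.mono ?_
      intro x hx hx0
      exact hx (by simp [hx0, Real.zero_rpow hp0])
    · intro x; simp only [Pi.zero_apply]; positivity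
    · simp [hχ1]
  have hlim := tendsto_profile_energy hp hχs χ.hasCompactSupport
  obtain ⟨ε, hεr, hε⟩ : ∃ ε : ℝ,
      (∫ s, |(p - 1) / p * χ s + ε * deriv χ s| ^ p) < r * (∫ s, |χ s| ^ p) ∧ 0 < ε := by
    have h1 := (hlim.eventually (gt_mem_nhds (mul_lt_mul_of_pos_right hr hI))).filter_mono
      (nhdsWithin_le_nhds (s := Ioi 0))
    exact (h1.and self_mem_nhdsWithin).exists
  set g := hardyProfile p ε χ with hg
  have hgs : ContDiff ℝ (⊤ : ℕ∞) g := contDiff_hardyProfile hε hχ0 hχs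
  let P : E →L[ℝ] E := ContinuousLinearMap.id ℝ E - l.smulRight w
  have hP : ∀ x, P x = x - l x • w := fun x => by simp [P]
  have hPw : P w = 0 := by simp [hP, hw]
  let u : E → ℝ := fun x => g (l x) * ψ (P x)
  have hus : ContDiff ℝ (⊤ : ℕ∞) u :=
    (hgs.comp l.contDiff).mul (ψ.contDiff.comp P.contDiff)
  let S : Set E := {x | l x ∈ Icc (Real.exp (-2 / ε)) (Real.exp (2 / ε)) ∧ ‖P x‖ ≤ 2}
  have hSc : IsClosed S :=
    (isClosed_Icc.preimage l.continuous).inter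
      (isClosed_le P.continuous.norm continuous_const)
  have huS : Function.support u ⊆ S := by
    intro x hx
    constructor
    · by_contra h
      exact hx (by simp [u, hg, hardyProfile_eq_zero hε hχ0 h])
    · by_contra! h
      exact hx (by simp [u, hψ0 _ h.le])
  have htS : tsupport u ⊆ S := closure_minimal huS hSc
  have hSb : IsCompact S := by
    refine Metric.isCompact_of_isClosed_isBounded hSc ?_
    refine (Metric.isBounded_closedBall (x := (0 : E))
      (r := 2 + Real.exp (2 / ε) * ‖w‖)).subset ?_
    rintro x ⟨⟨h1, h2⟩, h3⟩
    rw [mem_closedBall_zero_iff]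
    have h4 : 0 < l x := (Real.exp_pos _).trans_le h1
    calc ‖x‖ = ‖P x + l x • w‖ := by rw [hP]; simp
      _ ≤ ‖P x‖ + ‖l x • w‖ := norm_add_le _ _
      _ ≤ 2 + Real.exp (2 / ε) * ‖w‖ := by
        rw [norm_smul, Real.norm_eq_abs, abs_of_pos h4]
        gcongr
  have hu0 : u ≠ 0 := by
    intro h
    have h1 : u w = 1 := by
      simp [u, hPw, hψ1, hw, hg, hardyProfile, hχ1]
    rw [h] at h1
    simp at h1
  have hder : ∀ x, fderiv ℝ u x w = deriv g (l x) * ψ (P x) := by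
    intro x
    have h1 : HasFDerivAt (fun x => g (l x)) (deriv g (l x) • l) x :=
      (hgs.differentiable (by simp) (l x)).hasDerivAt.comp_hasFDerivAt x l.hasFDerivAt
    have h2 : HasFDerivAt (fun x => ψ (P x)) ((fderiv ℝ ψ (P x)).comp P) x :=
      ((ψ.contDiff (n := 1)).differentiable one_ne_zero (P x)).hasFDerivAt.comp x P.hasFDerivAt
    have h3 : HasFDerivAt u _ x := h1.mul h2
    rw [h3.fderiv]
    simp [hPw, hw, mul_comm]
  have hupos := hardy_denominator_pos hp (hus.of_le (by simp)) (hSb.of_isClosed_subset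
    (isClosed_tsupport u) htS) hu0 l (fun x hx => (Real.exp_pos _).trans_le (htS hx).1.1)
  refine ⟨u, hus, hSb.of_isClosed_subset (isClosed_tsupport u) htS,
    fun x hx => (Real.exp_pos _).trans_le (htS hx).1.1, hu0, ?_⟩
  obtain ⟨c, hc, hslice⟩ := integral_slice l w hw
  set J := ∫ y : LinearMap.ker (l : E →ₗ[ℝ] ℝ), |ψ y| ^ p with hJ
  have hnum : ∫ x, |fderiv ℝ u x w| ^ p =
      c * ((ε⁻¹ * ∫ s, |(p - 1) / p * χ s + ε * deriv χ s| ^ p) * J) := by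
    rw [← integral_abs_rpow_log hp hε (G := deriv g), hJ,
      ← hslice (fun t => |deriv g t| ^ p) (fun y => |ψ y| ^ p)]
    · congr 1
      funext x
      rw [hder, abs_mul, Real.mul_rpow (abs_nonneg _) (abs_nonneg _), hP]
    · intro t ht
      rw [(hardyProfile_eventuallyEq_zero hε hχ0 ht).deriv_eq, deriv_const]
    · intro t ht
      exact deriv_hardyProfile hχs ht
  have hden : ∫ x, |u x| ^ p / l x ^ p = c * ((ε⁻¹ * ∫ s, |χ s| ^ p) * J) := by
    rw [← integral_abs_rpow_log hp hε (G := fun t => g t / t), hJ,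
      ← hslice (fun t => |g t / t| ^ p) (fun y => |ψ y| ^ p)]
    · congr 1
      funext x
      rcases le_or_gt (l x) 0 with h | h
      · have : g (l x) = 0 := (hardyProfile_eventuallyEq_zero hε hχ0 h).eq_of_nhds
        simp [u, this, Real.zero_rpow hp0]
      · rw [abs_div, abs_of_pos h, Real.div_rpow (abs_nonneg _) h.le, abs_mul,
          Real.mul_rpow (abs_nonneg _) (abs_nonneg _), hP]
        ring
    · intro t ht
      simp [hg, (hardyProfile_eventuallyEq_zero hε hχ0 ht).eq_of_nhds]
    · intro t ht
      simp only [hg, hardyProfile, if_pos ht]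
      rw [Real.rpow_sub_one ht.ne']
      ring
  rw [div_lt_iff₀ hupos]
  rw [hden] at hupos
  rw [hnum, hden]
  -- The mass `J` of the transversal bump is positive because the whole denominator is.
  have hJ0 : 0 ≤ J := integral_nonneg (fun y => by positivity)
  have hJpos : 0 < J := by
    rcases hJ0.eq_or_lt with h | h
    · rw [← h] at hupos; simp at hupos
    · exact h
  have hm : 0 < c * ε⁻¹ * J := by positivity
  have := mul_lt_mul_of_pos_left hεr hm
  linarith

end Hardy

/-! ### Finsler norms and the distance to a hyperplane -/

section Finsler

variable {N : ℕ} {H : Euc N → ℝ}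

lemma IsFinslerNorm.pos (hH : IsFinslerNorm H) {ξ : Euc N} (hξ : ξ ≠ 0) : 0 < H ξ := by
  obtain ⟨a, b, ha, -, hab⟩ := hH.bounds
  exact (mul_pos ha (norm_pos_iff.mpr hξ)).trans_le (hab ξ).1

lemma IsFinslerNorm.add_le (hH : IsFinslerNorm H) (ξ η : Euc N) : H (ξ + η) ≤ H ξ + H η := by
  have h : H ((1 / 2 : ℝ) • ξ + (1 / 2 : ℝ) • η) ≤ (1 / 2 : ℝ) • H ξ + (1 / 2 : ℝ) • H η :=
    hH.convexOn.2 (mem_univ ξ) (mem_univ η) (by norm_num) (by norm_num) (by norm_num)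
  rw [← smul_add, hH.homog, abs_of_pos (by norm_num)] at h
  simp only [smul_eq_mul] at h
  linarith

lemma IsFinslerNorm.hasGradientAt (hH : IsFinslerNorm H) {ξ : Euc N} (hξ : ξ ≠ 0) :
    HasGradientAt H (gradient H ξ) ξ := by
  refine DifferentiableAt.hasGradientAt ?_
  exact (hH.smooth.differentiableOn (by norm_num)).differentiableAt
    (isOpen_compl_singleton.mem_nhds hξ)

/-- The directional derivative of `H`, expressed through its gradient. -/
lemma IsFinslerNorm.hasDerivAt_line (hH : IsFinslerNorm H) {ξ : Euc N} (hξ : ξ ≠ 0) (v : Euc N) :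
    HasDerivAt (fun s : ℝ => H (ξ + s • v)) ⟪gradient H ξ, v⟫ 0 := by
  have h := (hH.hasGradientAt hξ).hasFDerivAt.hasLineDerivAt v
  simpa [HasLineDerivAt] using h

/-- Euler's identity for the one-homogeneous function `H`. -/
lemma IsFinslerNorm.inner_gradient_self (hH : IsFinslerNorm H) {ξ : Euc N} (hξ : ξ ≠ 0) :
    ⟪gradient H ξ, ξ⟫ = H ξ := by
  have h1 := hH.hasDerivAt_line hξ ξ
  have h2 : HasDerivAt (fun s : ℝ => (1 + s) * H ξ) (1 * H ξ) 0 :=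
    ((hasDerivAt_id (0 : ℝ)).const_add 1).mul_const _
  have h3 : (fun s : ℝ => H (ξ + s • ξ)) =ᶠ[𝓝 0] fun s : ℝ => (1 + s) * H ξ := by
    filter_upwards [lt_mem_nhds (show (-1 : ℝ) < 0 by norm_num)] with s hs
    rw [show ξ + s • ξ = (1 + s) • ξ by rw [add_smul, one_smul], hH.homog,
      abs_of_pos (by linarith)]
  rw [one_mul] at h2
  exact h1.unique (h2.congr_of_eventuallyEq h3)

/-- Gradients of `H` lie in the polar unit ball. -/
lemma IsFinslerNorm.inner_gradient_le (hH : IsFinslerNorm H) {ξ : Euc N} (hξ : ξ ≠ 0)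
    (v : Euc N) : ⟪gradient H ξ, v⟫ ≤ H v := by
  have h1 := (hH.hasDerivAt_line hξ v).tendsto_slope_zero_right
  refine le_of_tendsto h1 ?_
  filter_upwards [self_mem_nhdsWithin] with s hs
  have hs' : (0 : ℝ) < s := hs
  have h2 := hH.add_le ξ (s • v)
  rw [hH.homog, abs_of_pos hs'] at h2
  simp only [zero_add, zero_smul, add_zero, smul_eq_mul]
  rw [inv_mul_le_iff₀ hs']
  linarith

lemma IsFinslerNorm.bddAbove_polar (hH : IsFinslerNorm H) (x : Euc N) :
    BddAbove {r : ℝ | ∃ ξ : Euc N, ξ ≠ 0 ∧ r = ⟪ξ, x⟫ / H ξ} := by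
  obtain ⟨a, b, ha, -, hab⟩ := hH.bounds
  refine ⟨‖x‖ / a, ?_⟩
  rintro r ⟨ξ, hξ, rfl⟩
  rw [div_le_div_iff₀ (hH.pos hξ) ha]
  calc ⟪ξ, x⟫ * a ≤ (‖ξ‖ * ‖x‖) * a := by
        gcongr
        exact real_inner_le_norm ξ x
    _ = ‖x‖ * (a * ‖ξ‖) := by ring
    _ ≤ ‖x‖ * H ξ := by
        gcongr
        exact (hab ξ).1

lemma IsFinslerNorm.le_polarNorm (hH : IsFinslerNorm H) (x : Euc N) {ξ : Euc N} (hξ : ξ ≠ 0) :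
    ⟪ξ, x⟫ / H ξ ≤ polarNorm H x :=
  le_csSup (hH.bddAbove_polar x) ⟨ξ, hξ, rfl⟩

lemma IsFinslerNorm.polarNorm_smul_gradient_le (hH : IsFinslerNorm H) {ξ : Euc N} (hξ : ξ ≠ 0)
    {t : ℝ} (ht : 0 ≤ t) : polarNorm H (t • gradient H ξ) ≤ t := by
  refine csSup_le ⟨_, ξ, hξ, rfl⟩ ?_
  rintro r ⟨η, hη, rfl⟩
  rw [div_le_iff₀ (hH.pos hη), inner_smul_right, real_inner_comm]
  gcongr
  exact hH.inner_gradient_le hξ η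

/-- The anisotropic distance to the hyperplane `x i = 0` is `x i / H eᵢ` on the half-space.
The infimum is attained by moving along the gradient of `H` at the normal direction. -/
lemma IsFinslerNorm.dist_hyperplane (hH : IsFinslerNorm H) (i : Fin N) {x : Euc N}
    (hx : 0 < x i) :
    sInf {r : ℝ | ∃ y : Euc N, y i = 0 ∧ r = polarNorm H (x - y)}
      = x i / H (EuclideanSpace.single i 1) := by
  set e : Euc N := EuclideanSpace.single i 1 with he
  have he0 : e ≠ 0 := by simp [he]
  have hinner : ∀ z : Euc N, ⟪e, z⟫ = z i := by
    intro z; simp [he, EuclideanSpace.inner_single_left]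
  have hpos := hH.pos he0
  have hlow : ∀ y : Euc N, y i = 0 → x i / H e ≤ polarNorm H (x - y) := by
    intro y hy
    have h := hH.le_polarNorm (x - y) he0
    rw [hinner] at h
    simpa [hy] using h
  apply le_antisymm
  · have hmem : polarNorm H ((x i / H e) • gradient H e) ∈
        {r : ℝ | ∃ y : Euc N, y i = 0 ∧ r = polarNorm H (x - y)} := by
      refine ⟨x - (x i / H e) • gradient H e, ?_, by rw [sub_sub_cancel]⟩
      have h := hH.inner_gradient_self he0
      rw [real_inner_comm, hinner] at h
      simp only [PiLp.sub_apply, PiLp.smul_apply, smul_eq_mul, h]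
      field_simp
      ring
    refine (csInf_le ⟨x i / H e, ?_⟩ hmem).trans
      (hH.polarNorm_smul_gradient_le he0 (by positivity))
    rintro r ⟨y, hy, rfl⟩
    exact hlow y hy
  · refine le_csInf ⟨_, 0, by simp, rfl⟩ ?_
    rintro r ⟨y, hy, rfl⟩
    exact hlow y hy

end Finsler

/-! ### The best constant -/

/-- The best constant in the anisotropic Hardy inequality on the half-space is
((p-1)/p)^p. -/
theorem finsler_hardy_halfspace_best_constant
    (N : ℕ) (hN : 2 ≤ N) (H : Euc N → ℝ) (hH : IsFinslerNorm H)
    (p : ℝ) (hp : 1 < p)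
    (halfspace : Set (Euc N))
    (hhs : halfspace = {x : Euc N | 0 < x ⟨N - 1, by omega⟩})
    (dH : Euc N → ℝ)
    (hdH : ∀ x, dH x = sInf {r : ℝ | ∃ y : Euc N,
        y ⟨N - 1, by omega⟩ = 0 ∧ r = polarNorm H (x - y)}) :
    sInf {r : ℝ | ∃ u : Euc N → ℝ, IsTestFun halfspace u ∧ u ≠ 0 ∧
        r = (∫ x in halfspace, |⟪gradient u x, gradient H (gradient dH x)⟫| ^ p) /
            ∫ x in halfspace, |u x| ^ p / dH x ^ p}
      = ((p - 1) / p) ^ p := by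
  have hp0 : p ≠ 0 := by linarith
  set i : Fin N := ⟨N - 1, by omega⟩ with hi
  set e : Euc N := EuclideanSpace.single i 1 with he
  have he0 : e ≠ 0 := by simp [he]
  have hpos : 0 < H e := hH.pos he0
  -- `l` is the linear function that agrees with `dH` on the half-space, and `η` its gradient.
  set η : Euc N := (H e)⁻¹ • e with hη
  have hη0 : η ≠ 0 := smul_ne_zero (inv_ne_zero hpos.ne') he0
  set l : Euc N →L[ℝ] ℝ := innerSL ℝ η with hl
  have hlx : ∀ x, l x = x i / H e := by
    intro x
    simp only [hl, hη, innerSL_apply_apply, inner_smul_left, he, EuclideanSpace.inner_single_left]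
    simp
    field_simp
  set w : Euc N := gradient H η with hwdef
  have hw : l w = 1 := by
    rw [hl, innerSL_apply_apply, real_inner_comm, hwdef, hH.inner_gradient_self hη0, hη, hH.homog,
      abs_of_pos (by positivity), inv_mul_cancel₀ hpos.ne']
  have hset : halfspace = {x | 0 < l x} := by
    rw [hhs]
    ext x
    simp only [mem_ofPred_eq, hlx]
    exact (div_pos_iff_of_pos_right hpos).symm
  have hopen : IsOpen halfspace := by
    rw [hset]; exact isOpen_lt continuous_const l.continuous
  have hd : ∀ x ∈ halfspace, dH x = l x := by
    intro x hx
    rw [hhs] at hx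
    rw [hdH, hlx]
    exact hH.dist_hyperplane i hx
  have hgrad : ∀ x ∈ halfspace, gradient dH x = η := by
    intro x hx
    have h1 : dH =ᶠ[𝓝 x] l := by
      filter_upwards [hopen.mem_nhds hx] with y hy using hd y hy
    have h2 : HasGradientAt l η x := by
      rw [hasGradientAt_iff_hasFDerivAt]
      exact l.hasFDerivAt
    exact (h2.congr_of_eventuallyEq h1).gradient
  have hnum : ∀ u : Euc N → ℝ, tsupport u ⊆ halfspace →
      ∫ x in halfspace, |⟪gradient u x, gradient H (gradient dH x)⟫| ^ p
        = ∫ x, |fderiv ℝ u x w| ^ p := by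
    intro u hu
    refine (setIntegral_congr_fun hopen.measurableSet ?_).trans
      (setIntegral_eq_integral_of_forall_compl_eq_zero ?_)
    · intro x hx
      simp only
      rw [hgrad x hx, ← hwdef, gradient, InnerProductSpace.toDual_symm_apply]
    · intro x hx
      have h : x ∉ tsupport (fderiv ℝ u) := fun h => hx (hu (tsupport_fderiv_subset ℝ h))
      rw [image_eq_zero_of_notMem_tsupport h]
      simp [Real.zero_rpow hp0]
  have hden : ∀ u : Euc N → ℝ, tsupport u ⊆ halfspace →
      ∫ x in halfspace, |u x| ^ p / dH x ^ p = ∫ x, |u x| ^ p / l x ^ p := by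
    intro u hu
    refine (setIntegral_congr_fun hopen.measurableSet ?_).trans
      (setIntegral_eq_integral_of_forall_compl_eq_zero ?_)
    · intro x hx
      simp only
      rw [hd x hx]
    · intro x hx
      rw [image_eq_zero_of_notMem_tsupport (fun h => hx (hu h))]
      simp [Real.zero_rpow hp0]
  refine csInf_eq_of_forall_ge_of_forall_gt_exists_lt ?_ ?_ ?_
  · obtain ⟨u, h1, h2, h3, h4, -⟩ := hardy_sharp hp l w hw (lt_add_one _)
    exact ⟨_, u, ⟨h1, h2, hset ▸ h3⟩, h4, rfl⟩
  · rintro r ⟨u, ⟨h1, h2, h3⟩, h4, rfl⟩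
    have h1' : ContDiff ℝ 1 u := h1.of_le (by simp)
    rw [hnum u h3, hden u h3,
      le_div_iff₀ (hardy_denominator_pos hp h1' h2 h4 l (hset ▸ h3))]
    exact hardy_lower hp h1' h2 l (hset ▸ h3) w hw
  · intro r hr
    obtain ⟨u, h1, h2, h3, h4, h5⟩ := hardy_sharp hp l w hw hr
    have h3' : tsupport u ⊆ halfspace := hset ▸ h3
    refine ⟨_, ⟨u, ⟨h1, h2, h3'⟩, h4, rfl⟩, ?_⟩
    rw [hnum u h3', hden u h3']
    exact h5
end
end

section
/- Let N ≥ 2, let c > 0 and a ∈ ℝ with 1 + a > 0, and consider the map Φ : ℝ^N ∖ {0} → ℝ^N, Φ(y) = c · H⁰(y)^a · y. Then Φ is differentiable at every y ≠ 0 and the determinant of its Jacobian matrix (∂Φ_i/∂y_j)_{1 ≤ i,j ≤ N} equals c^N (1 + a) H⁰(y)^{aN}; in particular its absolute value is c^N (1 + a) H⁰(y)^{aN}. -/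
/-!
The polar function `H⁰` is the support function of the compact set `{H = 1}`.  The positive
definite Hessian of `H²` rules out segments in `{H = 1}`, so for `y ≠ 0` the maximizer `ξ` of
`⟪·, y⟫` over `{H = 1}` is unique (`IsFinslerNorm.maximizer_unique`); by compactness, maximizers
for points `x → y` converge to it.  If `ζ x` is a maximizer for `x`, then
`0 ≤ H⁰ x - H⁰ y - ⟪ξ, x - y⟫ ≤ ⟪ζ x - ξ, x - y⟫ = o(‖x - y‖)`, hence `H⁰` is differentiable at
`y` with gradient `ξ`, and `⟪ξ, y⟫ = H⁰ y` (`IsFinslerNorm.exists_hasFDerivAt_polarNorm`).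

By the product rule `DΦ(y) v = c H⁰(y)^a (v + (a / H⁰(y)) ⟪ξ, v⟫ y)`, a scalar multiple of a
rank-one perturbation of the identity, whose determinant is
`(c H⁰(y)^a)^N (1 + (a / H⁰(y)) ⟪ξ, y⟫) = (c H⁰(y)^a)^N (1 + a)`.
-/

open MeasureTheory Set Filter
open scoped RealInnerProductSpace Topology ENNReal NNReal

noncomputable section

lemma iteratedFDeriv_two_eq_zero_of_line {E : Type*} [NormedAddCommGroup E] [NormedSpace ℝ E]
    {f : E → ℝ} {z v : E} {k : ℝ} (hf : ContDiffAt ℝ 2 f z)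
    (h : ∀ᶠ t : ℝ in 𝓝 0, f (z + t • v) = k) : iteratedFDeriv ℝ 2 f z ![v, v] = 0 := by
  have hline : ∀ t : ℝ, HasDerivAt (fun s : ℝ => z + s • v) v t := fun t => by
    simpa using ((hasDerivAt_id t).smul_const v).const_add z
  have hlim : Tendsto (fun s : ℝ => z + s • v) (𝓝 0) (𝓝 z) := by
    simpa using (hline 0).continuousAt.tendsto
  have h1 : ∀ᶠ t : ℝ in 𝓝 0, fderiv ℝ f (z + t • v) v = 0 := by
    filter_upwards [h.eventually_nhds, hlim.eventually (hf.eventually (by simp))] with t ht hft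
    have hd := (hft.differentiableAt (by norm_num)).hasFDerivAt.comp_hasDerivAt t (hline t)
    exact hd.unique ((hasDerivAt_const t k).congr_of_eventuallyEq ht)
  have hd2 : HasFDerivAt (fderiv ℝ f) (fderiv ℝ (fderiv ℝ f) z) (z + (0 : ℝ) • v) := by
    rw [zero_smul, add_zero]
    exact ((hf.fderiv_right (m := 1) (by norm_num)).differentiableAt (by norm_num)).hasFDerivAt
  have h2 : HasDerivAt (fun t : ℝ => fderiv ℝ f (z + t • v) v)
      (fderiv ℝ (fderiv ℝ f) z v v) 0 :=
    (ContinuousLinearMap.apply ℝ ℝ v).hasFDerivAt.comp_hasDerivAt (0 : ℝ)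
      (hd2.comp_hasDerivAt (0 : ℝ) (hline 0))
  rw [iteratedFDeriv_two_apply]
  exact h2.unique ((hasDerivAt_const (0 : ℝ) (0 : ℝ)).congr_of_eventuallyEq h1)

namespace IsFinslerNorm

variable {N : ℕ} {H : Euc N → ℝ}

lemma pos_s17 (hH : IsFinslerNorm H) {ξ : Euc N} (hξ : ξ ≠ 0) : 0 < H ξ := by
  obtain ⟨a, b, ha, -, h⟩ := hH.bounds
  exact lt_of_lt_of_le (mul_pos ha (norm_pos_iff.2 hξ)) (h ξ).1

lemma ne_zero_of_eq_one (hH : IsFinslerNorm H) {ξ : Euc N} (hξ : H ξ = 1) : ξ ≠ 0 := by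
  rintro rfl
  have := hH.homog 0 0
  simp [hξ] at this

lemma normalize (hH : IsFinslerNorm H) {ξ : Euc N} (hξ : ξ ≠ 0) : H ((H ξ)⁻¹ • ξ) = 1 := by
  have h := hH.pos_s17 hξ
  rw [hH.homog, abs_of_pos (inv_pos.2 h), inv_mul_cancel₀ h.ne']

lemma isCompact_sphere (hH : IsFinslerNorm H) : IsCompact {ξ : Euc N | H ξ = 1} := by
  obtain ⟨a, b, ha, -, h⟩ := hH.bounds
  refine Metric.isCompact_of_isClosed_isBounded ?_ ?_
  · exact isClosed_eq hH.convexOn.locallyLipschitz.continuous continuous_const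
  · refine (Metric.isBounded_closedBall (x := (0 : Euc N)) (r := a⁻¹)).subset fun ξ hξ => ?_
    have h1 := (h ξ).1
    replace hξ : H ξ = 1 := hξ
    rw [mem_closedBall_zero_iff, ← one_div, le_div_iff₀ ha]
    linarith

lemma bddAbove_polar_s17 (hH : IsFinslerNorm H) (x : Euc N) :
    BddAbove {r : ℝ | ∃ ξ : Euc N, ξ ≠ 0 ∧ r = ⟪ξ, x⟫ / H ξ} := by
  obtain ⟨a, b, ha, -, h⟩ := hH.bounds
  refine ⟨‖x‖ / a, ?_⟩
  rintro r ⟨ξ, hξ, rfl⟩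
  rw [div_le_div_iff₀ (hH.pos_s17 hξ) ha]
  have h1 := real_inner_le_norm ξ x
  have h2 := (h ξ).1
  nlinarith [norm_nonneg x, norm_nonneg ξ]

lemma inner_le_polarNorm (hH : IsFinslerNorm H) {ξ : Euc N} (hξ : H ξ = 1) (x : Euc N) :
    ⟪ξ, x⟫ ≤ polarNorm H x :=
  le_csSup (hH.bddAbove_polar_s17 x) ⟨ξ, hH.ne_zero_of_eq_one hξ, by rw [hξ, div_one]⟩

lemma polarNorm_pos (hH : IsFinslerNorm H) {y : Euc N} (hy : y ≠ 0) : 0 < polarNorm H y := by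
  refine lt_of_lt_of_le ?_ (le_csSup (hH.bddAbove_polar_s17 y) ⟨y, hy, rfl⟩)
  exact div_pos (real_inner_self_pos.2 hy) (hH.pos_s17 hy)

/-- The supremum defining the polar function is attained on `{H = 1}`.  The nonzero vector `y`
only serves to make that set nonempty. -/
lemma exists_maximizer (hH : IsFinslerNorm H) {y : Euc N} (hy : y ≠ 0) (x : Euc N) :
    ∃ ξ : Euc N, H ξ = 1 ∧ polarNorm H x = ⟪ξ, x⟫ := by
  obtain ⟨ξ, hξ, hmax⟩ := hH.isCompact_sphere.exists_isMaxOn ⟨_, hH.normalize hy⟩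
    (f := fun ξ : Euc N => ⟪ξ, x⟫) (by fun_prop)
  refine ⟨ξ, hξ, le_antisymm ?_ (hH.inner_le_polarNorm hξ x)⟩
  refine csSup_le ⟨_, y, hy, rfl⟩ ?_
  rintro r ⟨η, hη, rfl⟩
  have := hmax (hH.normalize hη)
  simpa [real_inner_smul_left, div_eq_inv_mul] using this

/-- `H` cannot be constant along a nondegenerate line germ away from the origin, since the
second derivative of `H²` along the line would vanish. -/
lemma not_locally_const (hH : IsFinslerNorm H) {z v : Euc N} (hz : z ≠ 0) (hv : v ≠ 0)
    (h : ∀ᶠ t : ℝ in 𝓝 0, H (z + t • v) = 1) : False := by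
  have hat : ContDiffAt ℝ 2 (fun x => H x ^ 2) z :=
    (hH.smooth.pow 2).contDiffAt (isOpen_compl_singleton.mem_nhds hz)
  have h0 := iteratedFDeriv_two_eq_zero_of_line hat (v := v) (k := 1)
    (h.mono fun t ht => by rw [ht, one_pow])
  exact (hH.hessPosDef z hz v hv).ne' h0

lemma maximizer_unique (hH : IsFinslerNorm H) {y : Euc N} (hy : y ≠ 0) {ξ η : Euc N}
    (hξ : H ξ = 1) (hη : H η = 1) (hξy : polarNorm H y = ⟪ξ, y⟫)
    (hηy : polarNorm H y = ⟪η, y⟫) : η = ξ := by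
  by_contra hne
  have hM := hH.polarNorm_pos hy
  -- on the segment, `⟪·, y⟫` is maximal, so `H ≥ 1`, while convexity gives `H ≤ 1`
  have hin : ∀ s : ℝ, ⟪ξ + s • (η - ξ), y⟫ = polarNorm H y := fun s => by
    rw [inner_add_left, real_inner_smul_left, inner_sub_left, ← hξy, ← hηy]; ring
  have hnz : ∀ s : ℝ, ξ + s • (η - ξ) ≠ 0 := fun s h0 => by
    have := hin s
    rw [h0, inner_zero_left] at this
    exact hM.ne this
  have hseg : ∀ s : ℝ, 0 ≤ s → s ≤ 1 → H (ξ + s • (η - ξ)) = 1 := fun s h0 h1 => by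
    apply le_antisymm
    · have := hH.convexOn.2 (mem_univ ξ) (mem_univ η) (sub_nonneg.2 h1) h0 (by ring)
      rw [hξ, hη] at this
      have he : ξ + s • (η - ξ) = (1 - s) • ξ + s • η := by module
      rw [he]
      simpa using this
    · have hp := hH.pos_s17 (hnz s)
      have := hH.inner_le_polarNorm (hH.normalize (hnz s)) y
      rw [real_inner_smul_left, hin, inv_mul_le_iff₀ hp] at this
      exact le_of_mul_le_mul_right (by simpa using this) hM
  refine hH.not_locally_const (hnz (1 / 2)) (sub_ne_zero.2 hne) ?_
  have h0 : Ioo (-(1 / 2) : ℝ) (1 / 2) ∈ 𝓝 (0 : ℝ) := Ioo_mem_nhds (by norm_num) (by norm_num)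
  filter_upwards [h0] with t ht
  rw [add_assoc, ← add_smul]
  exact hseg _ (by linarith [ht.1]) (by linarith [ht.2])

/-- The polar function is differentiable off the origin, with gradient the maximizer `ξ`; the
last conjunct is Euler's identity. -/
lemma exists_hasFDerivAt_polarNorm (hH : IsFinslerNorm H) {y : Euc N} (hy : y ≠ 0) :
    ∃ ξ : Euc N, HasFDerivAt (polarNorm H) (innerSL ℝ ξ) y ∧ ⟪ξ, y⟫ = polarNorm H y := by
  choose ζ hζ1 hζ using fun x => hH.exists_maximizer hy x
  have hle : ∀ x η, H η = 1 → ⟪η, x⟫ ≤ ⟪ζ x, x⟫ := fun x η hη => by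
    rw [← hζ]; exact hH.inner_le_polarNorm hη x
  have hlim : Tendsto ζ (𝓝 y) (𝓝 (ζ y)) := by
    refine hH.isCompact_sphere.tendsto_nhds_of_unique_mapClusterPt
      (Eventually.of_forall hζ1) fun η hη hcl => ?_
    obtain ⟨U, hU, hUη⟩ := mapClusterPt_iff_ultrafilter.1 hcl
    have hx : Tendsto (fun x : Euc N => x) U (𝓝 y) := hU
    have hmax : ⟪ζ y, y⟫ ≤ ⟪η, y⟫ :=
      le_of_tendsto_of_tendsto' (tendsto_const_nhds.inner hx) (hUη.inner hx)
        fun x => hle x _ (hζ1 y)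
    exact hH.maximizer_unique hy (hζ1 y) hη (hζ y)
      ((hζ y).trans (le_antisymm hmax (hle y η hη)))
  refine ⟨ζ y, ?_, (hζ y).symm⟩
  rw [hasFDerivAt_iff_isLittleO, Asymptotics.isLittleO_iff]
  intro ε hε
  filter_upwards [Metric.tendsto_nhds.1 hlim ε hε] with x hx
  rw [dist_eq_norm] at hx
  have h1 := hle x (ζ y) (hζ1 y)
  have h2 := hle y (ζ x) (hζ1 x)
  have h3 := real_inner_le_norm (ζ x - ζ y) (x - y)
  have h4 : ‖ζ x - ζ y‖ * ‖x - y‖ ≤ ε * ‖x - y‖ := by gcongr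
  rw [hζ x, hζ y, innerSL_apply_apply, Real.norm_eq_abs, abs_le]
  simp only [inner_sub_left, inner_sub_right] at h3 ⊢
  have h5 : 0 ≤ ε * ‖x - y‖ := by positivity
  constructor <;> linarith

end IsFinslerNorm

/-- Jacobian determinant of the anisotropic radial deformation y ↦ c H⁰(y)^a y. -/
theorem finsler_jacobian_radial_map
    (N : ℕ) (hN : 2 ≤ N) (H : Euc N → ℝ) (hH : IsFinslerNorm H)
    (c : ℝ) (hc : 0 < c) (a : ℝ) (ha : 0 < 1 + a)
    (Φ : Euc N → Euc N) (hΦ : ∀ y, Φ y = (c * polarNorm H y ^ a) • y)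
    (y : Euc N) (hy : y ≠ 0) :
    DifferentiableAt ℝ Φ y ∧
    LinearMap.det ((fderiv ℝ Φ y).toLinearMap)
      = c ^ N * (1 + a) * polarNorm H y ^ (a * (N : ℝ)) ∧
    |LinearMap.det ((fderiv ℝ Φ y).toLinearMap)|
      = c ^ N * (1 + a) * polarNorm H y ^ (a * (N : ℝ)) := by
  obtain ⟨ξ, hξ, hξy⟩ := hH.exists_hasFDerivAt_polarNorm hy
  have hp := hH.polarNorm_pos hy
  obtain rfl : Φ = fun y => (c * polarNorm H y ^ a) • y := funext hΦ
  have hD := ((hξ.rpow_const (p := a) (Or.inl hp.ne')).const_mul c).fun_smul (hasFDerivAt_id y)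
  simp only [id_eq] at hD
  have hdet : LinearMap.det
      ((fderiv ℝ (fun y => (c * polarNorm H y ^ a) • y) y).toLinearMap)
      = c ^ N * (1 + a) * polarNorm H y ^ (a * (N : ℝ)) := by
    have hform : (fderiv ℝ (fun y => (c * polarNorm H y ^ a) • y) y).toLinearMap
        = (c * polarNorm H y ^ a) •
          LinearMap.transvection ((a / polarNorm H y) • (innerSL ℝ ξ).toLinearMap) y := by
      rw [hD.fderiv]
      ext1 v
      simp only [ContinuousLinearMap.coe_coe, _root_.add_apply,
        _root_.smul_apply, ContinuousLinearMap.smulRight_apply,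
        ContinuousLinearMap.id_apply, LinearMap.smul_apply, LinearMap.transvection.apply,
        smul_eq_mul, smul_add, smul_smul, Real.rpow_sub_one hp.ne']
      congr 2
      ring
    rw [hform, LinearMap.det_smul, LinearMap.transvection.det, finrank_euclideanSpace_fin,
      mul_pow, Real.rpow_mul hp.le, Real.rpow_natCast]
    simp only [LinearMap.smul_apply, ContinuousLinearMap.coe_coe, innerSL_apply_apply, hξy,
      smul_eq_mul, div_mul_cancel₀ a hp.ne']
    ring
  refine ⟨hD.differentiableAt, hdet, ?_⟩
  rw [hdet, abs_of_pos (by positivity)]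
end
end

section
/- Let N ≥ 2, R > 0, λ > 0, let W_R = { x ∈ ℝ^N : H⁰(x) < R } be the Wulff ball of radius R, and let u ∈ C_c^∞(W_R ∖ {0}). Define u_λ(x) = λ^{−(N−1)/N} · u( (H⁰(x)/R)^{λ−1} x ) for x ∈ W_R ∖ {0} (and u_λ(0) = 0). Then both sides of the anisotropic critical Hardy inequality are invariant under this scaling: ∫_{W_R} |(x/H⁰(x)) · ∇u_λ(x)|^N dx = ∫_{W_R} |(y/H⁰(y)) · ∇u(y)|^N dy and ∫_{W_R} |u_λ(x)|^N / ( H⁰(x)^N (log(R/H⁰(x)))^N ) dx = ∫_{W_R} |u(y)|^N / ( H⁰(y)^N (log(R/H⁰(y)))^N ) dy. -/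
/-!
Write `P = H⁰` and `Φ x = (P x / R)^(λ-1) x`, so that `u_λ = λ^(-(N-1)/N) u ∘ Φ` off the origin.
Both identities are instances of the change of variables `y = Φ x` on `W_R`.

`P` is positive off the origin, positively homogeneous and subadditive, hence Lipschitz, so by
Rademacher's theorem it is differentiable almost everywhere; that is all the regularity the
argument needs. Let `S` be the set of nonzero points of `W_R` where `P` is differentiable. It has
full measure in `W_R`, and `Φ` is a bijection of `S` whose inverse is the same map with `1/λ` in
place of `λ` (`Phi_Phi`, `Phi_mem_goodSet`). By Euler's identity `DP(x) x = P x`, the derivative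
`DΦ(x) = g id + Dg(x) ⊗ x` with `g = (P/R)^(λ-1)` satisfies `DΦ(x) x = λ g(x) x` and has
determinant `λ g(x)^N`. Therefore `∫_{W_R} F = ∫_{W_R} λ g^N F(Φ x)` for every `F`
(`integral_eq_of_pointwise`).

The pointwise identities needed on `S` come from `P (Φ x) = g(x) P x`,
`log (R / P (Φ x)) = λ log (R / P x)` and `Du_λ(x) x = λ^(-(N-1)/N) λ Du(Φ x) (Φ x)`.
-/

open MeasureTheory Set Filter
open scoped RealInnerProductSpace Topology ENNReal NNReal

noncomputable section

/-- The properties of the polar norm used in the change of variables. -/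
structure IsGauge_s18 {N : ℕ} (P : Euc N → ℝ) : Prop where
  pos : ∀ x, x ≠ 0 → 0 < P x
  smul : ∀ t : ℝ, 0 < t → ∀ x, P (t • x) = t * P x
  lip : ∃ K : ℝ≥0, LipschitzWith K P

/-! ### The polar norm -/

section Polar

variable {N : ℕ} {H : Euc N → ℝ}

lemma inner_div_le {a : ℝ} (ha : 0 < a) (hb : ∀ ξ : Euc N, a * ‖ξ‖ ≤ H ξ) (x ξ : Euc N)
    (hξ : ξ ≠ 0) : ⟪ξ, x⟫ / H ξ ≤ a⁻¹ * ‖x‖ := by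
  have h0 : 0 < ‖ξ‖ := norm_pos_iff.2 hξ
  have hH : 0 < H ξ := lt_of_lt_of_le (by positivity) (hb ξ)
  rw [div_le_iff₀ hH]
  calc ⟪ξ, x⟫ ≤ ‖ξ‖ * ‖x‖ := real_inner_le_norm ξ x
    _ = a⁻¹ * ‖x‖ * (a * ‖ξ‖) := by field_simp
    _ ≤ a⁻¹ * ‖x‖ * H ξ := by gcongr; exact hb ξ

lemma polarNorm_isGauge (hN : 2 ≤ N) (hH : IsFinslerNorm H) : IsGauge_s18 (polarNorm H) := by
  obtain ⟨a, b, ha, -, hab⟩ := hH.bounds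
  have hb : ∀ ξ : Euc N, a * ‖ξ‖ ≤ H ξ := fun ξ => (hab ξ).1
  have : Nonempty (Fin N) := ⟨⟨0, by omega⟩⟩
  obtain ⟨e, he⟩ := exists_ne (0 : Euc N)
  have hne : ∀ x : Euc N, {r : ℝ | ∃ ξ : Euc N, ξ ≠ 0 ∧ r = ⟪ξ, x⟫ / H ξ}.Nonempty :=
    fun x => ⟨_, e, he, rfl⟩
  have hle : ∀ x ξ : Euc N, ξ ≠ 0 → ⟪ξ, x⟫ / H ξ ≤ polarNorm H x := by
    intro x ξ hξ
    refine le_csSup ⟨a⁻¹ * ‖x‖, ?_⟩ ⟨ξ, hξ, rfl⟩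
    rintro r ⟨η, hη, rfl⟩
    exact inner_div_le ha hb x η hη
  have hsup : ∀ (x : Euc N) (c : ℝ), (∀ ξ, ξ ≠ 0 → ⟪ξ, x⟫ / H ξ ≤ c) → polarNorm H x ≤ c := by
    intro x c h
    refine csSup_le (hne x) ?_
    rintro r ⟨η, hη, rfl⟩
    exact h η hη
  have hsm : ∀ t : ℝ, 0 < t → ∀ x, polarNorm H (t • x) ≤ t * polarNorm H x := by
    intro t ht x
    refine hsup _ _ fun ξ hξ => ?_
    rw [inner_smul_right, mul_div_assoc]
    exact mul_le_mul_of_nonneg_left (hle x ξ hξ) ht.le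
  refine ⟨fun x hx => ?_, fun t ht x => le_antisymm (hsm t ht x) ?_, ?_⟩
  · refine lt_of_lt_of_le ?_ (hle x x hx)
    have h0 : 0 < ‖x‖ := norm_pos_iff.2 hx
    have : 0 < H x := lt_of_lt_of_le (by positivity) (hb x)
    rw [real_inner_self_eq_norm_sq]
    positivity
  · have h := hsm t⁻¹ (inv_pos.2 ht) (t • x)
    rw [inv_smul_smul₀ ht.ne'] at h
    calc t * polarNorm H x ≤ t * (t⁻¹ * polarNorm H (t • x)) := by gcongr
      _ = polarNorm H (t • x) := by field_simp
  · refine ⟨_, LipschitzWith.of_le_add_mul' a⁻¹ fun x y => hsup _ _ fun ξ hξ => ?_⟩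
    have hx : x = y + (x - y) := by abel
    have hin : ⟪ξ, x⟫ = ⟪ξ, y⟫ + ⟪ξ, x - y⟫ := by rw [← inner_add_right, ← hx]
    rw [hin, add_div, dist_eq_norm]
    exact add_le_add (hle y ξ hξ) (inner_div_le ha hb _ ξ hξ)

end Polar

/-! ### The scaling map -/

/-- The scaling map `Φ x = (P x / R)^(λ-1) x`. -/
def Phi {N : ℕ} (P : Euc N → ℝ) (R lam : ℝ) (x : Euc N) : Euc N :=
  (P x / R) ^ (lam - 1) • x

/-- The nonzero points of the Wulff ball `{P < R}` at which `P` is differentiable. -/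
def goodSet {N : ℕ} (P : Euc N → ℝ) (R : ℝ) : Set (Euc N) :=
  {x | x ≠ 0 ∧ P x < R ∧ DifferentiableAt ℝ P x}

section Scaling

variable {N : ℕ} {P : Euc N → ℝ} {R lam : ℝ}

lemma IsGauge_s18.phi (hP : IsGauge_s18 P) (hR : 0 < R) {x : Euc N} (hx : x ≠ 0) :
    P (Phi P R lam x) = (P x / R) ^ (lam - 1) * P x :=
  hP.smul _ (Real.rpow_pos_of_pos (div_pos (hP.pos x hx) hR) _) x

lemma IsGauge_s18.phi_div (hP : IsGauge_s18 P) (hR : 0 < R) {x : Euc N} (hx : x ≠ 0) :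
    P (Phi P R lam x) / R = (P x / R) ^ lam := by
  have h := div_pos (hP.pos x hx) hR
  rw [hP.phi hR hx, mul_div_assoc]
  nth_rewrite 2 [← Real.rpow_one (P x / R)]
  rw [← Real.rpow_add h]
  congr 1; ring

lemma Phi_Phi (hP : IsGauge_s18 P) (hR : 0 < R) (mu : ℝ) (h1 : mu * lam = 1) {x : Euc N}
    (hx : x ≠ 0) : Phi P R mu (Phi P R lam x) = x := by
  have h := div_pos (hP.pos x hx) hR
  rw [Phi, hP.phi_div hR hx, Phi, smul_smul, ← Real.rpow_mul h.le, ← Real.rpow_add h]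
  have : lam * (mu - 1) + (lam - 1) = 0 := by linear_combination h1
  rw [this, Real.rpow_zero, one_smul]

lemma Phi_mem_goodSet (hP : IsGauge_s18 P) (hR : 0 < R) (hlam : 0 < lam) {x : Euc N}
    (hx : x ∈ goodSet P R) : Phi P R lam x ∈ goodSet P R := by
  obtain ⟨h0, hlt, hd⟩ := hx
  have h := div_pos (hP.pos x h0) hR
  have hg : 0 < (P x / R) ^ (lam - 1) := Real.rpow_pos_of_pos h _
  refine ⟨smul_ne_zero hg.ne' h0, ?_, ?_⟩
  · have := Real.rpow_lt_one h.le ((div_lt_one hR).2 hlt) hlam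
    rw [← hP.phi_div hR h0] at this
    exact (div_lt_one hR).1 this
  · -- By homogeneity, `P` is a multiple of its composition with a dilation taking `Φ x` to `x`.
    set t := (P x / R) ^ (lam - 1) with ht
    have heq : P = fun y => t * P (t⁻¹ • y) := by
      funext y
      rw [hP.smul _ (inv_pos.2 hg)]
      field_simp
    have hd' : DifferentiableAt ℝ P (t⁻¹ • (Phi P R lam x)) := by
      rw [Phi, ← ht, inv_smul_smul₀ hg.ne']
      exact hd
    have hcomp : DifferentiableAt ℝ (fun y => t * P (t⁻¹ • y)) (Phi P R lam x) :=
      (hd'.comp (Phi P R lam x) (differentiableAt_id.const_smul t⁻¹)).const_mul t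
    rwa [← heq] at hcomp

/-- Euler's identity for the homogeneous function `P`. -/
lemma euler (hP : IsGauge_s18 P) {x : Euc N} (hd : DifferentiableAt ℝ P x) :
    fderiv ℝ P x x = P x := by
  have h1 : HasDerivAt (fun t : ℝ => t • x) x 1 := by
    simpa using (hasDerivAt_id (1 : ℝ)).smul_const x
  have h2 : HasDerivAt (fun t : ℝ => P (t • x)) (fderiv ℝ P x x) 1 := by
    have : HasFDerivAt P (fderiv ℝ P x) ((1 : ℝ) • x) := by
      rw [one_smul]; exact hd.hasFDerivAt
    exact this.comp_hasDerivAt (1 : ℝ) h1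
  have h3 : HasDerivAt (fun t : ℝ => t * P x) (P x) 1 := by
    simpa using (hasDerivAt_id (1 : ℝ)).mul_const (P x)
  have h4 : (fun t : ℝ => P (t • x)) =ᶠ[𝓝 1] fun t => t * P x := by
    filter_upwards [lt_mem_nhds (zero_lt_one : (0 : ℝ) < 1)] with t ht
    exact hP.smul t ht x
  exact h2.unique (h3.congr_of_eventuallyEq h4)

/-- The derivative of the scaling map `Φ`. -/
def dPhi (P : Euc N → ℝ) (R lam : ℝ) (x : Euc N) : Euc N →L[ℝ] Euc N :=
  (P x / R) ^ (lam - 1) •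
    (ContinuousLinearMap.id ℝ (Euc N) + (((lam - 1) / P x) • fderiv ℝ P x).smulRight x)

lemma hasFDerivAt_Phi (hP : IsGauge_s18 P) (hR : 0 < R) {x : Euc N} (hx : x ∈ goodSet P R) :
    HasFDerivAt (Phi P R lam) (dPhi P R lam x) x := by
  obtain ⟨h0, -, hd⟩ := hx
  have hpos := hP.pos x h0
  have h := div_pos hpos hR
  have h1 : HasFDerivAt (fun y => P y / R) (R⁻¹ • fderiv ℝ P x) x := by
    simpa [div_eq_inv_mul] using hd.hasFDerivAt.const_mul R⁻¹
  have h2 := h1.rpow_const (p := lam - 1) (Or.inl h.ne')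
  have h3 := h2.smul (hasFDerivAt_id x)
  refine h3.congr_fderiv ?_
  ext1 v
  simp only [dPhi, _root_.add_apply, _root_.smul_apply,
    ContinuousLinearMap.smulRight_apply, ContinuousLinearMap.id_apply, id, smul_eq_mul, smul_add,
    smul_smul]
  congr 2
  rw [Real.rpow_sub_one h.ne']
  field_simp

lemma dPhi_self (hP : IsGauge_s18 P) {x : Euc N} (hx : x ∈ goodSet P R) :
    dPhi P R lam x x = lam • Phi P R lam x := by
  obtain ⟨h0, -, hd⟩ := hx
  have hpos := hP.pos x h0
  simp only [dPhi, _root_.add_apply, _root_.smul_apply,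
    ContinuousLinearMap.smulRight_apply, ContinuousLinearMap.id_apply, smul_eq_mul, smul_add,
    smul_smul, euler hP hd, Phi]
  rw [← add_smul]
  congr 1
  field_simp
  ring

lemma det_dPhi (hP : IsGauge_s18 P) {x : Euc N} (hx : x ∈ goodSet P R) :
    (dPhi P R lam x).det = lam * ((P x / R) ^ (lam - 1)) ^ N := by
  obtain ⟨h0, -, hd⟩ := hx
  have hpos := hP.pos x h0
  have hlin : ((dPhi P R lam x : Euc N →L[ℝ] Euc N) : Euc N →ₗ[ℝ] Euc N) =
      (P x / R) ^ (lam - 1) •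
        LinearMap.transvection ((((lam - 1) / P x) • fderiv ℝ P x : Euc N →L[ℝ] ℝ) :
          Euc N →ₗ[ℝ] ℝ) x := by
    ext1 v
    rfl
  rw [ContinuousLinearMap.det, hlin, LinearMap.det_smul, LinearMap.transvection.det]
  simp only [finrank_euclideanSpace, Fintype.card_fin, ContinuousLinearMap.coe_coe,
    _root_.smul_apply, euler hP hd, smul_eq_mul]
  field_simp
  ring

/-! ### The change of variables -/

lemma measurableSet_goodSet (hP : IsGauge_s18 P) : MeasurableSet (goodSet P R) := by
  obtain ⟨K, hK⟩ := hP.lip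
  exact (measurableSet_singleton (0 : Euc N)).compl.inter
    ((measurableSet_lt hK.continuous.measurable measurable_const).inter
      (measurableSet_of_differentiableAt ℝ P))

lemma goodSet_ae_eq (hN : 2 ≤ N) (hP : IsGauge_s18 P) :
    ({x | P x < R} : Set (Euc N)) =ᵐ[volume] goodSet P R := by
  obtain ⟨K, hK⟩ := hP.lip
  have : Nonempty (Fin N) := ⟨⟨0, by omega⟩⟩
  have h0 : ∀ᵐ x : Euc N, x ≠ 0 := by
    simp [ae_iff, measure_singleton]
  filter_upwards [hK.ae_differentiableAt (μ := volume), h0] with x hx hx0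
  exact propext ⟨fun h => ⟨hx0, h, hx⟩, fun h => h.2.1⟩

lemma image_goodSet (hP : IsGauge_s18 P) (hR : 0 < R) (hlam : 0 < lam) :
    Phi P R lam '' goodSet P R = goodSet P R := by
  refine Subset.antisymm (image_subset_iff.2 fun x hx => Phi_mem_goodSet hP hR hlam hx) ?_
  intro y hy
  exact ⟨Phi P R lam⁻¹ y, Phi_mem_goodSet hP hR (inv_pos.2 hlam) hy,
    Phi_Phi hP hR lam (mul_inv_cancel₀ hlam.ne') hy.1⟩

lemma integral_eq_of_pointwise (hN : 2 ≤ N) (hP : IsGauge_s18 P) (hR : 0 < R) (hlam : 0 < lam)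
    (F G : Euc N → ℝ)
    (h : ∀ x ∈ goodSet P R, G x = lam * ((P x / R) ^ (lam - 1)) ^ N * F (Phi P R lam x)) :
    ∫ x in {x | P x < R}, G x = ∫ y in {x | P x < R}, F y := by
  rw [setIntegral_congr_set (goodSet_ae_eq hN hP), setIntegral_congr_set (goodSet_ae_eq hN hP)]
  have hinj : InjOn (Phi P R lam) (goodSet P R) := by
    intro x hx y hy hxy
    have h1 : lam⁻¹ * lam = 1 := inv_mul_cancel₀ hlam.ne'
    rw [← Phi_Phi hP hR lam⁻¹ h1 hx.1, hxy, Phi_Phi hP hR lam⁻¹ h1 hy.1]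
  have key := integral_image_eq_integral_abs_det_fderiv_smul volume (measurableSet_goodSet hP)
    (fun x hx => (hasFDerivAt_Phi (lam := lam) hP hR hx).hasFDerivWithinAt) hinj F
  rw [image_goodSet hP hR hlam] at key
  rw [key]
  refine setIntegral_congr_fun (measurableSet_goodSet hP) fun x hx => ?_
  have hg : 0 < (P x / R) ^ (lam - 1) :=
    Real.rpow_pos_of_pos (div_pos (hP.pos x hx.1) hR) _
  rw [h x hx, det_dPhi hP hx, abs_of_pos (by positivity), smul_eq_mul]

/-- The normalising factor satisfies `(λ^(-(N-1)/N))^N λ^N = λ`. -/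
lemma factor_pow (hN : 2 ≤ N) (hlam : 0 < lam) :
    (lam ^ (-(((N : ℝ) - 1) / (N : ℝ)))) ^ N * lam ^ N = lam := by
  have hN0 : (N : ℝ) ≠ 0 := by positivity
  rw [← Real.rpow_natCast, ← Real.rpow_mul hlam.le, ← Real.rpow_natCast lam N,
    ← Real.rpow_add hlam]
  have : -(((N : ℝ) - 1) / (N : ℝ)) * N + N = 1 := by field_simp; ring
  rw [this, Real.rpow_one]

end Scaling

open scoped Classical in
/-- Scale invariance of the anisotropic critical Hardy inequality on the Wulff
ball W_R under the scaling u_λ(x) = λ^{-(N-1)/N} u((H⁰(x)/R)^{λ-1} x). -/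
theorem finsler_critical_hardy_scale_invariance
    (N : ℕ) (hN : 2 ≤ N) (H : Euc N → ℝ) (hH : IsFinslerNorm H)
    (R : ℝ) (hR : 0 < R) (lam : ℝ) (hlam : 0 < lam)
    (WR : Set (Euc N)) (hWR : WR = {x : Euc N | polarNorm H x < R})
    (u : Euc N → ℝ) (hu : IsTestFun (WR \ {0}) u)
    (ulam : Euc N → ℝ)
    (hulam : ∀ x : Euc N, ulam x = if x = 0 then 0 else
        lam ^ (-(((N : ℝ) - 1) / (N : ℝ))) * u ((polarNorm H x / R) ^ (lam - 1) • x)) :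
    (∫ x in WR, |⟪(polarNorm H x)⁻¹ • x, gradient ulam x⟫| ^ N
        = ∫ y in WR, |⟪(polarNorm H y)⁻¹ • y, gradient u y⟫| ^ N) ∧
    (∫ x in WR, |ulam x| ^ N / (polarNorm H x ^ N * Real.log (R / polarNorm H x) ^ N)
        = ∫ y in WR, |u y| ^ N /
            (polarNorm H y ^ N * Real.log (R / polarNorm H y) ^ N)) := by
  have hP := polarNorm_isGauge hN hH
  subst hWR
  have hfac := factor_pow hN hlam
  set P := polarNorm H with hPdef
  set c : ℝ := lam ^ (-(((N : ℝ) - 1) / (N : ℝ))) with hc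
  have hcpos : 0 < c := Real.rpow_pos_of_pos hlam _
  have hul : ∀ x, x ≠ 0 → ulam x = c * u (Phi P R lam x) := fun x hx => by
    rw [hulam, if_neg hx, Phi]
  constructor
  · refine integral_eq_of_pointwise hN hP hR hlam _ _ fun x hx => ?_
    have hpos := hP.pos x hx.1
    have hg : 0 < (P x / R) ^ (lam - 1) := Real.rpow_pos_of_pos (div_pos hpos hR) _
    have hdu : DifferentiableAt ℝ u (Phi P R lam x) :=
      (hu.1.differentiable (by simp)).differentiableAt
    have hev : ulam =ᶠ[𝓝 x] fun y => c * u (Phi P R lam y) := by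
      filter_upwards [isOpen_ne.mem_nhds hx.1] with y hy
      exact hul y hy
    have hder : fderiv ℝ ulam x x = c * (lam * fderiv ℝ u (Phi P R lam x) (Phi P R lam x)) := by
      have h1 := ((hdu.hasFDerivAt.comp x (hasFDerivAt_Phi (lam := lam) hP hR hx)).const_mul
        c).congr_of_eventuallyEq hev
      rw [h1.fderiv]
      simp [dPhi_self hP hx]
    rw [inner_gradient_right, inner_gradient_right]
    simp only [map_smul, hder, smul_eq_mul, hP.phi hR hx.1, conj_trivial, abs_mul, mul_pow,
      abs_inv, abs_of_pos hcpos, abs_of_pos hlam, abs_of_pos hg, abs_of_pos hpos]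
    generalize |fderiv ℝ u (Phi P R lam x) (Phi P R lam x)| = D
    generalize (P x / R) ^ (lam - 1) = g at hg
    simp only [inv_pow, mul_pow]
    field_simp
    linear_combination D ^ N * hfac
  · refine integral_eq_of_pointwise hN hP hR hlam _ _ fun x hx => ?_
    have hpos := hP.pos x hx.1
    have hr := div_pos hpos hR
    have hg : 0 < (P x / R) ^ (lam - 1) := Real.rpow_pos_of_pos hr _
    have hlog : 0 < Real.log (R / P x) := Real.log_pos ((one_lt_div hpos).2 hx.2.1)
    have hlog' : Real.log (R / P (Phi P R lam x)) = lam * Real.log (R / P x) := by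
      rw [← inv_div, hP.phi_div hR hx.1, ← inv_div (P x) R, Real.log_inv, Real.log_inv,
        Real.log_rpow hr]
      ring
    rw [hul x hx.1, hlog', hP.phi hR hx.1, abs_mul, abs_of_pos hcpos]
    simp only [mul_pow]
    nth_rewrite 2 [← hfac]
    field_simp
end
end

section
/- Let m > N ≥ 2 be integers, set α = (m−N)/(N−1), and let R > 0. Let H be a Finsler norm on ℝ^m with polar H⁰ and let K be a Finsler norm on ℝ^N with polar K⁰; set κ_m = Lebesgue measure of { x ∈ ℝ^m : H⁰(x) < 1 }, κ_N = Lebesgue measure of { y ∈ ℝ^N : K⁰(y) < 1 }, ω_{m−1} = m κ_m, ω_{N−1} = N κ_N, and W^N_R = { y ∈ ℝ^N : K⁰(y) < R }. Let W ∈ C¹((0, R)), define the K⁰-radial function w(y) = W(K⁰(y)) on W^N_R ∖ {0} and the H⁰-radial function u(x) = U(H⁰(x)) on ℝ^m ∖ {0}, where U(r) = W( R·exp(−r^{−α}) ) for r > 0. Assume the four integrals below are finite. Then I(u) = (ω_{m−1}/ω_{N−1}) · ((m−N)/(N−1))^{N−1} · J(w), where I(u) = ∫_{ℝ^m} |∇u(x)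 · x/H⁰(x)|^N dx − ((m−N)/N)^N ∫_{ℝ^m} |u(x)|^N / H⁰(x)^N dx and J(w) = ∫_{W^N_R} |∇w(y) · y/K⁰(y)|^N dy − ((N−1)/N)^N ∫_{W^N_R} |w(y)|^N / ( K⁰(y)^N (log(R/K⁰(y)))^N ) dy. -/
/-!
Both functionals only involve radial functions, and the identity holds separately for the gradient
terms and for the Hardy terms.

The polar `G⁰` of a Finsler norm is a norm equivalent to the Euclidean one. It is therefore
Lipschitz, so by Rademacher's theorem it is differentiable almost everywhere, and Euler's identity
`∇G⁰(x) · x = G⁰(x)` gives `∇v(x) · x / G⁰(x) = V'(G⁰(x))` almost everywhere for `v = V ∘ G⁰`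
(`IsFinslerNorm.inner_gradient_radial`); no finer regularity of the polar is needed.
Polar coordinates adapted to `G⁰` (`IsFinslerNorm.integral_comp_polarNorm`) then turn the four
integrals into one-dimensional ones, with weights `r ^ (m - 1)` and `s ^ (N - 1)`.

These are compared through the change of variables `s = R * exp (-r ^ (-α))`
(`setIntegral_Ioo_eq_radialSubst`), for which `ds / dr = α * s * r ^ (-α - 1)` and
`log (R / s) = r ^ (-α)`. Since `(α + 1) * (N - 1) = m - 1`, all powers of `r` match, leaving the
factor `α ^ (N - 1)` in front of both terms.
-/

open MeasureTheory Set Filter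
open scoped RealInnerProductSpace Topology ENNReal NNReal

noncomputable section

/-! ### The polar norm -/

section Polar

variable {n : ℕ} {G : Euc n → ℝ}

theorem IsFinslerNorm.pos_s19 (hG : IsFinslerNorm G) {ξ : Euc n} (hξ : ξ ≠ 0) : 0 < G ξ := by
  obtain ⟨a, b, ha, -, h⟩ := hG.bounds
  exact lt_of_lt_of_le (mul_pos ha (norm_pos_iff.2 hξ)) (h ξ).1

/-- The quotients defining the polar norm are bounded above by `C * ‖x‖`, uniformly in `ξ`; this
makes the supremum genuine. -/
theorem IsFinslerNorm.exists_quotient_le (hG : IsFinslerNorm G) :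
    ∃ C : ℝ, 0 < C ∧ ∀ x ξ : Euc n, ξ ≠ 0 → ⟪ξ, x⟫ / G ξ ≤ C * ‖x‖ := by
  obtain ⟨a, b, ha, -, h⟩ := hG.bounds
  refine ⟨a⁻¹, inv_pos.2 ha, fun x ξ hξ => ?_⟩
  rw [div_le_iff₀ (hG.pos_s19 hξ)]
  calc ⟪ξ, x⟫ ≤ ‖ξ‖ * ‖x‖ := real_inner_le_norm _ _
    _ = a⁻¹ * ‖x‖ * (a * ‖ξ‖) := by field_simp
    _ ≤ a⁻¹ * ‖x‖ * G ξ := by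
      gcongr
      exact (h ξ).1

theorem IsFinslerNorm.quotient_le_polarNorm (hG : IsFinslerNorm G) (x : Euc n) {ξ : Euc n}
    (hξ : ξ ≠ 0) : ⟪ξ, x⟫ / G ξ ≤ polarNorm G x := by
  obtain ⟨C, -, hC⟩ := hG.exists_quotient_le
  refine le_csSup ⟨C * ‖x‖, ?_⟩ ⟨ξ, hξ, rfl⟩
  rintro r ⟨η, hη, rfl⟩
  exact hC x η hη

theorem polarNorm_le [Nontrivial (Euc n)] {x : Euc n} {c : ℝ}
    (h : ∀ ξ : Euc n, ξ ≠ 0 → ⟪ξ, x⟫ / G ξ ≤ c) : polarNorm G x ≤ c := by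
  obtain ⟨ξ, hξ⟩ := exists_ne (0 : Euc n)
  refine csSup_le ⟨_, ξ, hξ, rfl⟩ ?_
  rintro r ⟨η, hη, rfl⟩
  exact h η hη

theorem IsFinslerNorm.polarNorm_pos_s19 (hG : IsFinslerNorm G) {x : Euc n} (hx : x ≠ 0) :
    0 < polarNorm G x := by
  refine lt_of_lt_of_le ?_ (hG.quotient_le_polarNorm x hx)
  rw [real_inner_self_eq_norm_sq]
  have := norm_pos_iff.2 hx
  have := hG.pos_s19 hx
  positivity

theorem IsFinslerNorm.polarNorm_zero [Nontrivial (Euc n)] (hG : IsFinslerNorm G) :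
    polarNorm G 0 = 0 := by
  apply le_antisymm
  · exact polarNorm_le fun ξ _ => by simp
  · obtain ⟨ξ, hξ⟩ := exists_ne (0 : Euc n)
    simpa using hG.quotient_le_polarNorm 0 hξ

theorem IsFinslerNorm.polarNorm_add_le [Nontrivial (Euc n)] (hG : IsFinslerNorm G)
    (x y : Euc n) : polarNorm G (x + y) ≤ polarNorm G x + polarNorm G y := by
  refine polarNorm_le fun ξ hξ => ?_
  rw [inner_add_right, add_div]
  exact add_le_add (hG.quotient_le_polarNorm x hξ) (hG.quotient_le_polarNorm y hξ)

theorem IsFinslerNorm.polarNorm_neg (hG : IsFinslerNorm G) (x : Euc n) :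
    polarNorm G (-x) = polarNorm G x := by
  have hneg : ∀ ξ, G (-ξ) = G ξ := fun ξ => by simpa using hG.homog (-1) ξ
  unfold polarNorm
  congr 1
  ext r
  constructor
  · rintro ⟨ξ, hξ, rfl⟩
    exact ⟨-ξ, neg_ne_zero.2 hξ, by simp [hneg]⟩
  · rintro ⟨ξ, hξ, rfl⟩
    exact ⟨-ξ, neg_ne_zero.2 hξ, by simp [hneg]⟩

theorem IsFinslerNorm.polarNorm_smul_of_pos [Nontrivial (Euc n)] (hG : IsFinslerNorm G)
    {t : ℝ} (ht : 0 < t) (x : Euc n) : polarNorm G (t • x) = t * polarNorm G x := by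
  have key : ∀ {t : ℝ}, 0 < t → ∀ x, polarNorm G (t • x) ≤ t * polarNorm G x := by
    intro t ht x
    refine polarNorm_le fun ξ hξ => ?_
    rw [inner_smul_right, mul_div_assoc]
    exact mul_le_mul_of_nonneg_left (hG.quotient_le_polarNorm x hξ) ht.le
  refine le_antisymm (key ht x) ?_
  have h := key (inv_pos.2 ht) (t • x)
  rw [smul_smul, inv_mul_cancel₀ ht.ne', one_smul] at h
  calc t * polarNorm G x ≤ t * (t⁻¹ * polarNorm G (t • x)) := by gcongr
    _ = polarNorm G (t • x) := by field_simp

theorem IsFinslerNorm.polarNorm_smul [Nontrivial (Euc n)] (hG : IsFinslerNorm G)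
    (t : ℝ) (x : Euc n) : polarNorm G (t • x) = |t| * polarNorm G x := by
  rcases lt_trichotomy t 0 with h | rfl | h
  · rw [abs_of_neg h, ← hG.polarNorm_smul_of_pos (neg_pos.2 h), neg_smul, hG.polarNorm_neg]
  · simp [hG.polarNorm_zero]
  · rw [abs_of_pos h, hG.polarNorm_smul_of_pos h]

theorem IsFinslerNorm.exists_lipschitzWith_polarNorm [Nontrivial (Euc n)]
    (hG : IsFinslerNorm G) : ∃ C : ℝ≥0, LipschitzWith C (polarNorm G) := by
  obtain ⟨C, hC0, hC⟩ := hG.exists_quotient_le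
  refine ⟨C.toNNReal, LipschitzWith.of_le_add_mul _ fun x y => ?_⟩
  have h1 := hG.polarNorm_add_le y (x - y)
  rw [add_sub_cancel] at h1
  have h2 : polarNorm G (x - y) ≤ C * ‖x - y‖ := polarNorm_le (hC _)
  rw [Real.coe_toNNReal _ hC0.le, dist_eq_norm]
  linarith

end Polar

/-! ### Radial functions -/

section Radial

variable {n : ℕ} {G : Euc n → ℝ}

/-- Euler's identity for the one-homogeneous function `polarNorm G`. -/
theorem IsFinslerNorm.fderiv_polarNorm_self [Nontrivial (Euc n)] (hG : IsFinslerNorm G)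
    {x : Euc n} (hd : DifferentiableAt ℝ (polarNorm G) x) :
    fderiv ℝ (polarNorm G) x x = polarNorm G x := by
  have h1 : HasDerivAt (fun t : ℝ => t • x) x 1 := by
    simpa using (hasDerivAt_id (1 : ℝ)).smul_const x
  have hd' : HasFDerivAt (polarNorm G) (fderiv ℝ (polarNorm G) x) ((1 : ℝ) • x) := by
    simpa using hd.hasFDerivAt
  have h2 : HasDerivAt (fun t : ℝ => polarNorm G (t • x)) (fderiv ℝ (polarNorm G) x x) 1 :=
    HasFDerivAt.comp_hasDerivAt (l := polarNorm G) (f := fun t : ℝ => t • x) (1 : ℝ) hd' h1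
  have h3 : HasDerivAt (fun t : ℝ => t * polarNorm G x) (polarNorm G x) 1 := by
    simpa using (hasDerivAt_id (1 : ℝ)).mul_const (polarNorm G x)
  refine h2.unique (h3.congr_of_eventuallyEq ?_)
  filter_upwards [lt_mem_nhds (zero_lt_one (α := ℝ))] with t ht
  exact hG.polarNorm_smul_of_pos ht x

/-- The radial derivative of a function `V (G⁰ x)`, at a point where `G⁰` is differentiable. -/
theorem IsFinslerNorm.inner_gradient_radial [Nontrivial (Euc n)] (hG : IsFinslerNorm G)
    {V : ℝ → ℝ} {v : Euc n → ℝ} (hv : ∀ x, x ≠ 0 → v x = V (polarNorm G x))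
    {x : Euc n} (hx : x ≠ 0) (hd : DifferentiableAt ℝ (polarNorm G) x)
    (hV : DifferentiableAt ℝ V (polarNorm G x)) :
    ⟪(polarNorm G x)⁻¹ • x, gradient v x⟫ = deriv V (polarNorm G x) := by
  have hev : v =ᶠ[𝓝 x] V ∘ polarNorm G := by
    filter_upwards [isOpen_ne.mem_nhds hx] with y hy
    exact hv y hy
  have h1 : HasFDerivAt v (deriv V (polarNorm G x) • fderiv ℝ (polarNorm G) x) x :=
    (hV.hasDerivAt.comp_hasFDerivAt x hd.hasFDerivAt).congr_of_eventuallyEq hev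
  have hp := (hG.polarNorm_pos_s19 hx).ne'
  rw [gradient, real_inner_comm, InnerProductSpace.toDual_symm_apply, h1.fderiv]
  simp only [map_smul, smul_apply, smul_eq_mul, hG.fderiv_polarNorm_self hd]
  field_simp

open Module in
/-- Integration in polar coordinates with respect to an arbitrary norm `g` on a finite-dimensional
space `E`: the formula for normed spaces is applied to a copy of `E` normed by `g`. -/
theorem integral_comp_gauge {E : Type*} [AddCommGroup E] [Module ℝ E] [FiniteDimensional ℝ E]
    [mE : MeasurableSpace E] [tE : TopologicalSpace E] [IsTopologicalAddGroup E] [BorelSpace E]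
    [T2Space E] [ContinuousSMul ℝ E] [Nontrivial E] (μ : Measure E) [μ.IsAddHaarMeasure]
    {g : E → ℝ} (h1 : g 0 = 0) (h2 : ∀ x, g (-x) = g x) (h3 : ∀ x y, g (x + y) ≤ g x + g y)
    (h4 : ∀ {x}, g x = 0 → x = 0) (h5 : ∀ r x, g (r • x) ≤ |r| * (g x)) (f : ℝ → ℝ) :
    ∫ x, f (g x) ∂μ =
      finrank ℝ E * (μ {x : E | g x < 1}).toReal *
        ∫ r in Ioi (0 : ℝ), r ^ (finrank ℝ E - 1) * f r := by
  let F : Type _ := E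
  let p : AddGroupNorm F := ⟨⟨g, h1, h3, h2⟩, fun x hx ↦ h4 hx⟩
  let : NormedAddCommGroup F := AddGroupNorm.toNormedAddCommGroup p
  let : NormedSpace ℝ F := { norm_smul_le := fun _ _ ↦ h5 _ _ }
  let : TopologicalSpace F := UniformSpace.toTopologicalSpace
  let : MeasurableSpace F := borel F
  have : BorelSpace F := { measurable_eq := rfl }
  have : Nontrivial F := inferInstanceAs (Nontrivial E)
  let φ := @LinearEquiv.toContinuousLinearEquiv ℝ _ E _ _ tE _ _ F _ _ _ _ _ _ _ _ _
    (LinearEquiv.refl ℝ E : E ≃ₗ[ℝ] F)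
  let ν : Measure F := @Measure.map E F mE _ φ μ
  let ψ := @Homeomorph.toMeasurableEquiv E F tE mE _ _ _ _
    (@ContinuousLinearEquiv.toHomeomorph ℝ ℝ _ _ _ _ _ _ E tE _ F _ _ _ _ φ)
  have hmp : @MeasurePreserving E F mE _ ψ μ ν :=
    @Measurable.measurePreserving E F mE _ ψ (@MeasurableEquiv.measurable E F mE _ ψ) _
  have hball : μ {x : E | g x < 1} = ν (Metric.ball 0 1) := by
    rw [@Measure.map_apply E F mE _ μ φ _ _ measurableSet_ball]
    · congr!
      simp_rw [Metric.ball, dist_zero_right]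
      rfl
    · refine @Continuous.measurable E F tE mE _ _ _ _ φ ?_
      exact @ContinuousLinearEquiv.continuous ℝ ℝ _ _ _ _ _ _ E tE _ F _ _ _ _ φ
  have hint : ∫ x, f (g x) ∂μ = ∫ x : F, f ‖x‖ ∂ν := by
    rw [← hmp.integral_comp']
    rfl
  have key := integral_fun_norm_addHaar ν f
  rw [hint, hball, key]
  simp only [nsmul_eq_mul, smul_eq_mul, ← mul_assoc]
  rfl

theorem IsFinslerNorm.integral_comp_polarNorm [Nontrivial (Euc n)] (hG : IsFinslerNorm G)
    (f : ℝ → ℝ) :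
    ∫ x, f (polarNorm G x) =
      n * (volume {x : Euc n | polarNorm G x < 1}).toReal *
        ∫ r in Ioi (0 : ℝ), r ^ (n - 1) * f r := by
  have h := integral_comp_gauge (volume : Measure (Euc n)) hG.polarNorm_zero hG.polarNorm_neg
    hG.polarNorm_add_le
    (fun {x} h0 => by_contra fun hx => (hG.polarNorm_pos_s19 hx).ne' h0)
    (fun r x => (hG.polarNorm_smul r x).le) f
  simpa using h

theorem IsFinslerNorm.setIntegral_comp_polarNorm [Nontrivial (Euc n)] (hG : IsFinslerNorm G)
    (R : ℝ) (f : ℝ → ℝ) :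
    ∫ x in {x : Euc n | polarNorm G x < R}, f (polarNorm G x) =
      n * (volume {x : Euc n | polarNorm G x < 1}).toReal *
        ∫ r in Ioo 0 R, r ^ (n - 1) * f r := by
  obtain ⟨C, hC⟩ := hG.exists_lipschitzWith_polarNorm
  have hm : MeasurableSet {x : Euc n | polarNorm G x < R} :=
    measurableSet_lt hC.continuous.measurable measurable_const
  rw [← integral_indicator hm]
  have h1 : ({x : Euc n | polarNorm G x < R}.indicator fun x => f (polarNorm G x)) =
      fun x => (Iio R).indicator f (polarNorm G x) := by
    ext x
    simp [indicator]
  rw [h1, hG.integral_comp_polarNorm]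
  congr 1
  have h2 : (fun r : ℝ => r ^ (n - 1) * (Iio R).indicator f r) =
      (Iio R).indicator fun r => r ^ (n - 1) * f r := by
    ext r
    simp [indicator]
  rw [h2, setIntegral_indicator measurableSet_Iio, Ioi_inter_Iio]

theorem IsFinslerNorm.volume_unit_polarBall_toReal_ne_zero [Nontrivial (Euc n)]
    (hG : IsFinslerNorm G) :
    (volume {x : Euc n | polarNorm G x < 1}).toReal ≠ 0 := by
  obtain ⟨C, hC⟩ := hG.exists_lipschitzWith_polarNorm
  have ho : IsOpen {x : Euc n | polarNorm G x < 1} := isOpen_lt hC.continuous continuous_const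
  have hne : {x : Euc n | polarNorm G x < 1}.Nonempty := ⟨0, by simp [hG.polarNorm_zero]⟩
  have hbd : Bornology.IsBounded {x : Euc n | polarNorm G x < 1} := by
    obtain ⟨a, b, ha, hab, h⟩ := hG.bounds
    refine (Metric.isBounded_closedBall (x := (0 : Euc n)) (r := b)).subset fun x hx => ?_
    rw [mem_closedBall_zero_iff]
    by_cases h0 : x = 0
    · simp [h0, (ha.trans_le hab).le]
    have h1 := (hG.quotient_le_polarNorm x h0).trans_lt hx
    rw [div_lt_one (hG.pos_s19 h0), real_inner_self_eq_norm_sq] at h1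
    have h2 := norm_pos_iff.2 h0
    nlinarith [(h x).2]
  exact (ENNReal.toReal_pos (ho.measure_pos _ hne).ne' hbd.measure_lt_top.ne).ne'

end Radial

/-! ### The substitution `s = R * exp (-r ^ (-α))` -/

section Substitution

/-- The radial substitution, an increasing bijection from `(0, ∞)` onto `(0, R)`. -/
def radialSubst (R α r : ℝ) : ℝ := R * Real.exp (-(r ^ (-α)))

variable {R α : ℝ}

theorem radialSubst_mem (hR : 0 < R) {r : ℝ} (hr : 0 < r) :
    radialSubst R α r ∈ Ioo 0 R := by
  have h : 0 < r ^ (-α) := Real.rpow_pos_of_pos hr _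
  refine ⟨by unfold radialSubst; positivity, ?_⟩
  have : Real.exp (-(r ^ (-α))) < 1 := by
    rw [Real.exp_lt_one_iff]
    linarith
  unfold radialSubst
  nlinarith

theorem log_div_radialSubst (hR : 0 < R) (r : ℝ) :
    Real.log (R / radialSubst R α r) = r ^ (-α) := by
  unfold radialSubst
  rw [Real.exp_neg]
  have : R / (R * (Real.exp (r ^ (-α)))⁻¹) = Real.exp (r ^ (-α)) := by field_simp
  rw [this, Real.log_exp]

theorem hasDerivAt_radialSubst {r : ℝ} (hr : 0 < r) :
    HasDerivAt (radialSubst R α) (radialSubst R α r * (α * r ^ (-α - 1))) r := by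
  have h := (((Real.hasDerivAt_rpow_const (p := -α) (Or.inl hr.ne')).neg).exp).const_mul R
  refine HasDerivAt.congr_deriv (f := radialSubst R α) h ?_
  simp only [radialSubst, Pi.neg_apply]
  ring

theorem injOn_radialSubst (hR : 0 < R) (hα : 0 < α) : InjOn (radialSubst R α) (Ioi 0) := by
  intro r hr s hs h
  have h' : r ^ (-α) = s ^ (-α) := by
    rw [← log_div_radialSubst hR r, ← log_div_radialSubst hR s, h]
  exact (Real.rpow_left_inj (le_of_lt hr) (le_of_lt hs) (neg_ne_zero.2 hα.ne')).1 h'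

theorem image_radialSubst (hR : 0 < R) (hα : 0 < α) :
    radialSubst R α '' Ioi 0 = Ioo 0 R := by
  apply Subset.antisymm
  · rintro _ ⟨r, hr, rfl⟩
    exact radialSubst_mem hR hr
  · rintro s ⟨hs0, hsR⟩
    have hl : 0 < Real.log (R / s) := Real.log_pos ((one_lt_div hs0).2 hsR)
    refine ⟨Real.log (R / s) ^ (-α)⁻¹, Real.rpow_pos_of_pos hl _, ?_⟩
    unfold radialSubst
    rw [Real.rpow_inv_rpow hl.le (neg_ne_zero.2 hα.ne'), Real.exp_neg,
      Real.exp_log (div_pos hR hs0)]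
    field_simp

theorem setIntegral_Ioo_eq_radialSubst (hR : 0 < R) (hα : 0 < α) (g : ℝ → ℝ) :
    ∫ s in Ioo 0 R, g s =
      ∫ r in Ioi (0 : ℝ), radialSubst R α r * (α * r ^ (-α - 1)) * g (radialSubst R α r) := by
  rw [← image_radialSubst hR hα, integral_image_eq_integral_abs_deriv_smul measurableSet_Ioi
    (fun r hr => (hasDerivAt_radialSubst hr).hasDerivWithinAt) (injOn_radialSubst hR hα)]
  refine setIntegral_congr_fun measurableSet_Ioi fun r hr => ?_
  have h1 := (radialSubst_mem (α := α) hR hr).1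
  have h2 : 0 < r ^ (-α - 1) := Real.rpow_pos_of_pos hr _
  simp only [smul_eq_mul]
  rw [abs_of_pos (by positivity)]

end Substitution

/-- Relation between the subcritical anisotropic Hardy inequality on ℝ^m and the
critical anisotropic Hardy inequality on the Wulff ball of radius R in ℝ^N, via
the radial substitution s = R exp(-r^{-α}), α = (m-N)/(N-1). -/
theorem finsler_subcritical_to_critical_relation
    (m N : ℕ) (hN : 2 ≤ N) (hmN : N < m)
    (H : Euc m → ℝ) (hH : IsFinslerNorm H)
    (K : Euc N → ℝ) (hK : IsFinslerNorm K)
    (R : ℝ) (hR : 0 < R)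
    (W : ℝ → ℝ) (hW : ContDiffOn ℝ 1 W (Ioo 0 R))
    (α : ℝ) (hα : α = ((m : ℝ) - (N : ℝ)) / ((N : ℝ) - 1))
    (w : Euc N → ℝ) (hw : ∀ y : Euc N, y ≠ 0 → w y = W (polarNorm K y))
    (U : ℝ → ℝ) (hU : ∀ r : ℝ, U r = W (R * Real.exp (-(r ^ (-α)))))
    (u : Euc m → ℝ) (hu : ∀ x : Euc m, x ≠ 0 → u x = U (polarNorm H x))
    (hIA : Integrable (fun x : Euc m => |⟪(polarNorm H x)⁻¹ • x, gradient u x⟫| ^ N))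
    (hIB : Integrable (fun x : Euc m => |u x| ^ N / polarNorm H x ^ N))
    (hJA : IntegrableOn (fun y : Euc N => |⟪(polarNorm K y)⁻¹ • y, gradient w y⟫| ^ N)
        {y : Euc N | polarNorm K y < R})
    (hJB : IntegrableOn (fun y : Euc N => |w y| ^ N /
          (polarNorm K y ^ N * Real.log (R / polarNorm K y) ^ N))
        {y : Euc N | polarNorm K y < R}) :
    (∫ x : Euc m, |⟪(polarNorm H x)⁻¹ • x, gradient u x⟫| ^ N)
        - (((m : ℝ) - (N : ℝ)) / (N : ℝ)) ^ N *
            ∫ x : Euc m, |u x| ^ N / polarNorm H x ^ N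
      = (((m : ℝ) * (volume {x : Euc m | polarNorm H x < 1}).toReal) /
            ((N : ℝ) * (volume {y : Euc N | polarNorm K y < 1}).toReal)) *
          (((m : ℝ) - (N : ℝ)) / ((N : ℝ) - 1)) ^ (N - 1) *
          ((∫ y in {y : Euc N | polarNorm K y < R},
              |⟪(polarNorm K y)⁻¹ • y, gradient w y⟫| ^ N)
            - (((N : ℝ) - 1) / (N : ℝ)) ^ N *
                ∫ y in {y : Euc N | polarNorm K y < R},
                  |w y| ^ N /
                    (polarNorm K y ^ N * Real.log (R / polarNorm K y) ^ N)) := by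
  have hN' : (2 : ℝ) ≤ N := by exact_mod_cast hN
  have hmN' : (N : ℝ) < m := by exact_mod_cast hmN
  have hαpos : 0 < α := by rw [hα]; apply div_pos <;> linarith
  have hαmul : α * ((N : ℝ) - 1) = m - N := by
    rw [hα]; field_simp [show (N : ℝ) - 1 ≠ 0 by linarith]
  have : Nonempty (Fin m) := ⟨⟨0, by omega⟩⟩
  have : Nonempty (Fin N) := ⟨⟨0, by omega⟩⟩
  have : Nontrivial (Euc m) := inferInstance
  have : Nontrivial (Euc N) := inferInstance
  have hUeq : ∀ r, U r = W (radialSubst R α r) := hU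
  have hWd : ∀ s ∈ Ioo 0 R, DifferentiableAt ℝ W s := fun s hs =>
    (hW.differentiableOn one_ne_zero).differentiableAt (isOpen_Ioo.mem_nhds hs)
  have hUd : ∀ r, 0 < r → HasDerivAt U
      (deriv W (radialSubst R α r) * (radialSubst R α r * (α * r ^ (-α - 1)))) r := by
    intro r hr
    have h := (hWd _ (radialSubst_mem (α := α) hR hr)).hasDerivAt.comp r (hasDerivAt_radialSubst hr)
    exact h.congr_of_eventuallyEq (Eventually.of_forall hUeq)
  -- Reduction of the four integrals to one-dimensional ones.
  have hA : ∫ x : Euc m, |⟪(polarNorm H x)⁻¹ • x, gradient u x⟫| ^ N =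
      m * (volume {x : Euc m | polarNorm H x < 1}).toReal *
        ∫ r in Ioi (0 : ℝ), r ^ (m - 1) * |deriv U r| ^ N := by
    rw [← hH.integral_comp_polarNorm (fun r => |deriv U r| ^ N)]
    obtain ⟨C, hC⟩ := hH.exists_lipschitzWith_polarNorm
    apply integral_congr_ae
    filter_upwards [hC.ae_differentiableAt (μ := volume), Measure.ae_ne volume (0 : Euc m)]
      with x hx hx0
    rw [hH.inner_gradient_radial hu hx0 hx (hUd _ (hH.polarNorm_pos_s19 hx0)).differentiableAt]
  have hB : ∫ x : Euc m, |u x| ^ N / polarNorm H x ^ N =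
      m * (volume {x : Euc m | polarNorm H x < 1}).toReal *
        ∫ r in Ioi (0 : ℝ), r ^ (m - 1) * (|U r| ^ N / r ^ N) := by
    rw [← hH.integral_comp_polarNorm (fun r => |U r| ^ N / r ^ N)]
    apply integral_congr_ae
    filter_upwards [Measure.ae_ne volume (0 : Euc m)] with x hx0
    rw [hu x hx0]
  obtain ⟨C, hC⟩ := hK.exists_lipschitzWith_polarNorm
  have hm : MeasurableSet {y : Euc N | polarNorm K y < R} :=
    measurableSet_lt hC.continuous.measurable measurable_const
  have hA' : ∫ y in {y : Euc N | polarNorm K y < R},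
        |⟪(polarNorm K y)⁻¹ • y, gradient w y⟫| ^ N =
      N * (volume {y : Euc N | polarNorm K y < 1}).toReal *
        ∫ s in Ioo 0 R, s ^ (N - 1) * |deriv W s| ^ N := by
    rw [← hK.setIntegral_comp_polarNorm R (fun s => |deriv W s| ^ N)]
    apply setIntegral_congr_ae hm
    filter_upwards [hC.ae_differentiableAt (μ := volume), Measure.ae_ne volume (0 : Euc N)]
      with y hy hy0 hyR
    rw [hK.inner_gradient_radial hw hy0 hy (hWd _ ⟨hK.polarNorm_pos_s19 hy0, hyR⟩)]
  have hB' : ∫ y in {y : Euc N | polarNorm K y < R},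
        |w y| ^ N / (polarNorm K y ^ N * Real.log (R / polarNorm K y) ^ N) =
      N * (volume {y : Euc N | polarNorm K y < 1}).toReal *
        ∫ s in Ioo 0 R, s ^ (N - 1) * (|W s| ^ N / (s ^ N * Real.log (R / s) ^ N)) := by
    rw [← hK.setIntegral_comp_polarNorm R (fun s => |W s| ^ N / (s ^ N * Real.log (R / s) ^ N))]
    apply setIntegral_congr_ae hm
    filter_upwards [Measure.ae_ne volume (0 : Euc N)] with y hy0 _
    rw [hw y hy0]
  -- The one-dimensional integrals correspond under the substitution.
  have hA1 : ∫ r in Ioi (0 : ℝ), r ^ (m - 1) * |deriv U r| ^ N =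
      α ^ (N - 1) * ∫ s in Ioo 0 R, s ^ (N - 1) * |deriv W s| ^ N := by
    rw [setIntegral_Ioo_eq_radialSubst hR hαpos, ← integral_const_mul]
    refine setIntegral_congr_fun measurableSet_Ioi fun r hr => ?_
    have hr : 0 < r := hr
    have hs := (radialSubst_mem (α := α) hR hr).1
    have hρ : 0 < r ^ (-α - 1) := Real.rpow_pos_of_pos hr _
    -- `(α + 1) * (N - 1) = m - 1`
    have hpow : r ^ (m - 1) * (r ^ (-α - 1)) ^ (N - 1) = 1 := by
      rw [← Real.rpow_natCast, ← Real.rpow_natCast, ← Real.rpow_mul hr.le, ← Real.rpow_add hr,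
        Nat.cast_sub (by omega), Nat.cast_sub (by omega)]
      convert Real.rpow_zero r using 2
      push_cast
      linarith
    obtain ⟨k, rfl⟩ : ∃ k, N = k + 1 := ⟨N - 1, by omega⟩
    simp only [Nat.add_sub_cancel] at hpow ⊢
    rw [(hUd r hr).deriv, abs_mul, mul_pow, abs_of_pos (show
      0 < radialSubst R α r * (α * r ^ (-α - 1)) by positivity)]
    calc _ = (r ^ (m - 1) * (r ^ (-α - 1)) ^ k) * (α ^ k * (radialSubst R α r *
          (α * r ^ (-α - 1)) * (radialSubst R α r ^ k *
            |deriv W (radialSubst R α r)| ^ (k + 1)))) := by ring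
      _ = _ := by rw [hpow, one_mul]
  have hB1 : α * ∫ r in Ioi (0 : ℝ), r ^ (m - 1) * (|U r| ^ N / r ^ N) =
      ∫ s in Ioo 0 R, s ^ (N - 1) * (|W s| ^ N / (s ^ N * Real.log (R / s) ^ N)) := by
    rw [setIntegral_Ioo_eq_radialSubst hR hαpos, ← integral_const_mul]
    refine setIntegral_congr_fun measurableSet_Ioi fun r hr => ?_
    have hr : 0 < r := hr
    have hs := (radialSubst_mem (α := α) hR hr).1
    -- `m - 1 - N = α * N - α - 1`
    have hpow : r ^ (m - 1) / r ^ N = r ^ (-α - 1) / (r ^ (-α)) ^ N := by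
      rw [← Real.rpow_natCast, ← Real.rpow_natCast, ← Real.rpow_natCast (r ^ (-α)),
        ← Real.rpow_mul hr.le, ← Real.rpow_sub hr, ← Real.rpow_sub hr, Nat.cast_sub (by omega)]
      congr 1
      push_cast
      linarith
    have hsN : radialSubst R α r * radialSubst R α r ^ (N - 1) = radialSubst R α r ^ N := by
      rw [mul_comm, pow_sub_one_mul (by omega)]
    simp only [log_div_radialSubst hR, hUeq]
    calc _ = α * |W (radialSubst R α r)| ^ N * (r ^ (m - 1) / r ^ N) := by ring
      _ = α * |W (radialSubst R α r)| ^ N * (r ^ (-α - 1) / (r ^ (-α)) ^ N) *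
          (radialSubst R α r ^ N / radialSubst R α r ^ N) := by
        rw [hpow, div_self (by positivity), mul_one]
      _ = α * |W (radialSubst R α r)| ^ N * (r ^ (-α - 1) / (r ^ (-α)) ^ N) *
          ((radialSubst R α r * radialSubst R α r ^ (N - 1)) / radialSubst R α r ^ N) := by
        rw [hsN]
      _ = _ := by ring
  have hvol := hK.volume_unit_polarBall_toReal_ne_zero
  have hN0 : (N : ℝ) ≠ 0 := by linarith
  have hpowN : α ^ N = α ^ (N - 1) * α := (pow_sub_one_mul (by omega) α).symm
  rw [hA, hB, hA', hB', hA1, ← hB1, ← hα, ← hαmul, mul_div_assoc, mul_pow, hpowN]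
  field_simp
end
end
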